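/- arXiv:2004.12001 — 2 statements merged into one kernel-verified Lean document; each statement's English description precedes it below -/
import Mathlib

section
/- For every s ∈ [0,1], the infimum of dim_A D(F) over all non-empty sets F ⊆ ℝ² with dim_A F ≥ s is equal to s. That is, inf{dim_A D(F) : F ⊆ ℝ² non-empty and dim_A F ≥ s} = s. -/
open Metric MeasureTheory Filter Set
open scoped ENNReal NNReal Pointwise Topology

noncomputable section

/-- The Assouad dimension of a subset of a (pseudo)metric space: the infimum of all
`α ≥ 0` for which there is `C > 0` such that for every `x ∈ E` and all scales `0 < r < R`,
the set `E ∩ B(x,R)` can be covered by at most `C (R/r)^α` sets of diameter at most `r`. -/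
def assouadDim {X : Type*} [PseudoMetricSpace X] (E : Set X) : ℝ :=
  sInf {α : ℝ | 0 ≤ α ∧ ∃ C : ℝ, 0 < C ∧ ∀ x ∈ E, ∀ r R : ℝ, 0 < r → r < R →
    ∃ 𝒰 : Finset (Set X), (E ∩ closedBall x R ⊆ ⋃ U ∈ 𝒰, U) ∧
      (∀ U ∈ 𝒰, EMetric.diam U ≤ ENNReal.ofReal r) ∧
      ((𝒰.card : ℝ) ≤ C * (R / r) ^ α)}

/-- Euclidean space `ℝⁿ`. -/
abbrev Euc (n : ℕ) := EuclideanSpace ℝ (Fin n)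

/-- The distance set `D(F) = {|x - y| : x, y ∈ F}`. -/
def distSet {n : ℕ} (F : Set (Euc n)) : Set ℝ :=
  {d : ℝ | ∃ x ∈ F, ∃ y ∈ F, d = dist x y}

/-- The covering condition in the definition of the Assouad dimension, for a fixed exponent `α`
and constant `C`. -/
def CoverBound {X : Type*} [PseudoMetricSpace X] (E : Set X) (α C : ℝ) : Prop :=
  ∀ x ∈ E, ∀ r R : ℝ, 0 < r → r < R →
    ∃ 𝒰 : Finset (Set X), (E ∩ closedBall x R ⊆ ⋃ U ∈ 𝒰, U) ∧
      (∀ U ∈ 𝒰, Metric.ediam U ≤ ENNReal.ofReal r) ∧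
      ((𝒰.card : ℝ) ≤ C * (R / r) ^ α)

theorem dist_le_of_ediam_le {X : Type*} [PseudoMetricSpace X] {U : Set X} {r : ℝ} (hr : 0 ≤ r)
    (hU : Metric.ediam U ≤ ENNReal.ofReal r) {x y : X} (hx : x ∈ U) (hy : y ∈ U) :
    dist x y ≤ r := by
  have h := (Metric.edist_le_ediam_of_mem hx hy).trans hU
  rw [edist_dist] at h
  exact (ENNReal.ofReal_le_ofReal_iff hr).1 h

theorem card_le_two_of_abs_sub_le_one (S : Finset ℤ) (h : ∀ a ∈ S, ∀ b ∈ S, |a - b| ≤ 1) :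
    S.card ≤ 2 := by
  rcases S.eq_empty_or_nonempty with rfl | hne
  · simp
  · have hsub : S ⊆ Finset.Icc (S.min' hne) (S.min' hne + 1) := by
      intro a ha
      rw [Finset.mem_Icc]
      have := abs_le.1 (h a ha _ (S.min'_mem hne))
      exact ⟨S.min'_le a ha, by linarith [this.2]⟩
    calc S.card ≤ _ := Finset.card_le_card hsub
      _ = 2 := by rw [Int.card_Icc]; omega

/-- Values of a function in a set satisfying the covering condition occupy few grid cells. -/
theorem CoverBound.card_image_floor_le {D : Set ℝ} {α C : ℝ} (h : CoverBound D α C) (hC : 0 < C)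
    {ι : Type*} (S : Finset ι) (f : ι → ℝ) (hf : ∀ i ∈ S, f i ∈ D) {w q : ℝ} (hw : 0 < w)
    (hq : 1 < q) (hS : ∀ i ∈ S, ∀ j ∈ S, |f i - f j| ≤ q * w) :
    ((S.image fun i => ⌊f i / w⌋).card : ℝ) ≤ 2 * C * q ^ α := by
  classical
  rcases S.eq_empty_or_nonempty with rfl | ⟨i₀, hi₀⟩
  · simp; positivity
  obtain ⟨𝒰, hcov, hdiam, hcard⟩ := h (f i₀) (hf i₀ hi₀) w (q * w) hw (by nlinarith)
  have hsub : (S.image fun i => ⌊f i / w⌋) ⊆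
      𝒰.biUnion fun U => (S.filter fun i => f i ∈ U).image fun i => ⌊f i / w⌋ := by
    intro a ha
    obtain ⟨i, hi, rfl⟩ := Finset.mem_image.1 ha
    have : f i ∈ ⋃ U ∈ 𝒰, U := hcov ⟨hf i hi, by
      rw [mem_closedBall, Real.dist_eq]; exact hS i hi i₀ hi₀⟩
    simp only [mem_iUnion, exists_prop] at this
    obtain ⟨U, hU, hiU⟩ := this
    refine Finset.mem_biUnion.2 ⟨U, hU, Finset.mem_image.2 ⟨i, ?_, rfl⟩⟩
    exact Finset.mem_filter.2 ⟨hi, hiU⟩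
  have hle : (S.image fun i => ⌊f i / w⌋).card ≤ 𝒰.card * 2 := by
    refine (Finset.card_le_card hsub).trans (Finset.card_biUnion_le_card_mul _ _ _ ?_)
    intro U hU
    apply card_le_two_of_abs_sub_le_one
    intro a ha b hb
    obtain ⟨i, hi, rfl⟩ := Finset.mem_image.1 ha
    obtain ⟨j, hj, rfl⟩ := Finset.mem_image.1 hb
    have hd := dist_le_of_ediam_le hw.le (hdiam U hU) (Finset.mem_filter.1 hi).2
      (Finset.mem_filter.1 hj).2
    rw [Real.dist_eq] at hd
    have h1 := abs_le.1 hd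
    have e1 : f i / w ≤ f j / w + 1 := by
      rw [div_add_one hw.ne', div_le_div_iff_of_pos_right hw]; linarith [h1.2]
    have e2 : f j / w ≤ f i / w + 1 := by
      rw [div_add_one hw.ne', div_le_div_iff_of_pos_right hw]; linarith [h1.1]
    have g1 := Int.floor_le_floor e1
    have g2 := Int.floor_le_floor e2
    rw [Int.floor_add_one] at g1 g2
    rw [abs_le]; constructor <;> linarith
  have hqw : q * w / w = q := by field_simp
  rw [hqw] at hcard
  have : ((S.image fun i => ⌊f i / w⌋).card : ℝ) ≤ 𝒰.card * 2 := by exact_mod_cast hle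
  linarith

/-- The direction from `x` to `y`. -/
def pinDir (y x : Euc 2) : Euc 2 := (dist y x)⁻¹ • (y - x)

theorem norm_pinDir {y x : Euc 2} (h : 0 < dist y x) : ‖pinDir y x‖ = 1 := by
  rw [pinDir, norm_smul, ← dist_eq_norm, norm_inv, Real.norm_of_nonneg dist_nonneg,
    inv_mul_cancel₀ h.ne']

theorem norm_sub_norm_eq_inner {u v : Euc 2} (h : 0 < ‖u‖ + ‖v‖) :
    ‖u‖ - ‖v‖ = inner ℝ (u - v) ((‖u‖ + ‖v‖)⁻¹ • (u + v)) := by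
  rw [inner_smul_right, inner_sub_left, inner_add_right, inner_add_right,
    real_inner_self_eq_norm_sq, real_inner_self_eq_norm_sq, real_inner_comm u v]
  field_simp
  ring

theorem norm_normalized_add_sub_le {u v p : Euc 2} {ρ : ℝ} (hp : 0 < ‖p‖) (hρ : ρ ≤ ‖p‖ / 2)
    (hu : ‖u - p‖ ≤ ρ) (hv : ‖v - p‖ ≤ ρ) :
    0 < ‖u‖ + ‖v‖ ∧ ‖(‖u‖ + ‖v‖)⁻¹ • (u + v) - ‖p‖⁻¹ • p‖ ≤ 4 * ρ / ‖p‖ := by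
  have hu' := abs_le.1 ((abs_norm_sub_norm_le u p).trans hu)
  have hv' := abs_le.1 ((abs_norm_sub_norm_le v p).trans hv)
  have hpos : 0 < ‖u‖ + ‖v‖ := by linarith [hu'.1, hv'.1]
  refine ⟨hpos, ?_⟩
  have hge : ‖p‖ ≤ ‖u‖ + ‖v‖ := by linarith [hu'.1, hv'.1]
  have key : (‖u‖ + ‖v‖)⁻¹ • (u + v) - ‖p‖⁻¹ • p =
      (‖u‖ + ‖v‖)⁻¹ • ((u - p) + (v - p)) +
        ((‖u‖ + ‖v‖)⁻¹ * ‖p‖⁻¹ * ((‖p‖ - ‖u‖) + (‖p‖ - ‖v‖))) • p := by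
    have : (‖u‖ + ‖v‖)⁻¹ * ‖p‖⁻¹ * ((‖p‖ - ‖u‖) + (‖p‖ - ‖v‖)) =
        2 * (‖u‖ + ‖v‖)⁻¹ - ‖p‖⁻¹ := by
      field_simp
      ring
    rw [this]
    module
  have hsum : ‖(u - p) + (v - p)‖ ≤ 2 * ρ := (norm_add_le _ _).trans (by linarith)
  have habs : |(‖p‖ - ‖u‖) + (‖p‖ - ‖v‖)| ≤ 2 * ρ := by
    rw [abs_le]; constructor <;> linarith [hu'.1, hv'.1, hu'.2, hv'.2]
  have hinv : (‖u‖ + ‖v‖)⁻¹ ≤ ‖p‖⁻¹ := inv_anti₀ hp hge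
  have hρ0 : 0 ≤ ρ := (norm_nonneg _).trans hu
  rw [key]
  refine (norm_add_le _ _).trans ?_
  rw [norm_smul, norm_smul, norm_inv, Real.norm_of_nonneg hpos.le, norm_mul, norm_mul, norm_inv,
    norm_inv, Real.norm_of_nonneg hpos.le, norm_norm, Real.norm_eq_abs]
  calc (‖u‖ + ‖v‖)⁻¹ * ‖u - p + (v - p)‖ +
        (‖u‖ + ‖v‖)⁻¹ * ‖p‖⁻¹ * |‖p‖ - ‖u‖ + (‖p‖ - ‖v‖)| * ‖p‖
      = (‖u‖ + ‖v‖)⁻¹ * (‖u - p + (v - p)‖ + |‖p‖ - ‖u‖ + (‖p‖ - ‖v‖)|) := by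
        field_simp
    _ ≤ ‖p‖⁻¹ * (2 * ρ + 2 * ρ) := by gcongr
    _ = 4 * ρ / ‖p‖ := by ring

/-- Lagrange's identity in the plane relative to a unit vector. -/
theorem sq_inner_sub_mul_inner_eq (h d e : Euc 2) (he : ‖e‖ = 1) :
    (inner ℝ h d - inner ℝ h e * inner ℝ e d) ^ 2 =
      (‖h‖ ^ 2 - (inner ℝ h e) ^ 2) * (‖d‖ ^ 2 - (inner ℝ e d) ^ 2) := by
  have he2 : e 0 ^ 2 + e 1 ^ 2 = 1 := by
    have := EuclideanSpace.norm_sq_eq e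
    rw [he] at this
    simpa [Fin.sum_univ_two] using this.symm
  simp only [EuclideanSpace.norm_sq_eq, PiLp.inner_apply, Fin.sum_univ_two, Real.norm_eq_abs,
    sq_abs, RCLike.inner_apply, conj_trivial]
  have e1 : e 1 ^ 2 = 1 - e 0 ^ 2 := by linarith
  have p1 : d 0 * h 0 + d 1 * h 1 - (e 0 * h 0 + e 1 * h 1) * (d 0 * e 0 + d 1 * e 1) =
      (h 0 * e 1 - h 1 * e 0) * (d 0 * e 1 - d 1 * e 0) := by
    linear_combination (-(d 0 * h 0 + d 1 * h 1)) * he2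
  have p2 : h 0 ^ 2 + h 1 ^ 2 - (e 0 * h 0 + e 1 * h 1) ^ 2 = (h 0 * e 1 - h 1 * e 0) ^ 2 := by
    linear_combination (-(h 0 ^ 2 + h 1 ^ 2)) * he2
  have p3 : d 0 ^ 2 + d 1 ^ 2 - (d 0 * e 0 + d 1 * e 1) ^ 2 = (d 0 * e 1 - d 1 * e 0) ^ 2 := by
    linear_combination (-(d 0 ^ 2 + d 1 ^ 2)) * he2
  rw [p1, p2, p3]
  ring

theorem abs_inner_ge_of_nearly_orthogonal {h e e' : Euc 2} (he : ‖e‖ = 1) (he' : ‖e'‖ = 1)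
    (hφ : ‖e' - e‖ ≤ 1 / 4) (hh : |inner ℝ h e| ≤ 17 / 64 * ‖h‖) :
    7 / 8 * ‖e' - e‖ * ‖h‖ ≤ |inner ℝ h (e' - e)| := by
  set φ := ‖e' - e‖ with hφd
  have hφ0 : 0 ≤ φ := norm_nonneg _
  have hed : inner ℝ e (e' - e) = - φ ^ 2 / 2 := by
    have := norm_sub_sq_real e' e
    rw [he, he', ← hφd] at this
    rw [inner_sub_right, real_inner_self_eq_norm_sq, he, real_inner_comm]
    linarith
  have hL := sq_inner_sub_mul_inner_eq h (e' - e) e he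
  rw [hed, ← hφd] at hL
  have hh2 : (inner ℝ h e) ^ 2 ≤ (17 / 64 * ‖h‖) ^ 2 := sq_le_sq' (by linarith [(abs_le.1 hh).1])
    (abs_le.1 hh).2
  have hn : 0 ≤ ‖h‖ := norm_nonneg h
  have h1 : (15 / 16 * ‖h‖) ^ 2 ≤ ‖h‖ ^ 2 - (inner ℝ h e) ^ 2 := by nlinarith
  have h2 : (31 / 32 * φ) ^ 2 ≤ φ ^ 2 - (- φ ^ 2 / 2) ^ 2 := by
    have hsq : φ ^ 2 ≤ 1 / 16 := by nlinarith
    nlinarith [mul_nonneg (sq_nonneg φ) (sub_nonneg.2 hsq)]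
  have h3 : (15 / 16 * ‖h‖ * (31 / 32 * φ)) ^ 2 ≤
      ((inner ℝ h (e' - e)) - (inner ℝ h e) * (- φ ^ 2 / 2)) ^ 2 := by
    rw [hL, mul_pow]
    exact mul_le_mul h1 h2 (by positivity) ((sq_nonneg _).trans h1)
  have h4 := sq_le_sq.1 h3
  rw [abs_of_nonneg (by positivity)] at h4
  have h5 : |(inner ℝ h e) * (- φ ^ 2 / 2)| ≤ 17 / 64 * ‖h‖ * (φ / 8) := by
    rw [abs_mul]
    refine mul_le_mul hh ?_ (abs_nonneg _) (by positivity)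
    rw [neg_div, abs_neg, abs_of_nonneg (by positivity)]
    nlinarith
  have h6 := abs_sub (inner ℝ h (e' - e)) ((inner ℝ h e) * (- φ ^ 2 / 2))
  nlinarith

/-- For two pins seen from `y` in directions at distance `φ`, the difference of the two distance
functions is comparable to `φ` times the displacement along near-fibres. -/
theorem abs_dist_sub_dist_bounds {y x x' z z' : Euc 2} {ρ σ : ℝ}
    (hx : 0 < dist y x) (hx' : 0 < dist y x') (hρ : ρ ≤ dist y x / 2) (hρ' : ρ ≤ dist y x' / 2)
    (hσ : 4 * ρ / dist y x ≤ σ) (hσ' : 4 * ρ / dist y x' ≤ σ)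
    (hz : dist z y ≤ ρ) (hz' : dist z' y ≤ ρ)
    (hφ : ‖pinDir y x' - pinDir y x‖ ≤ 1 / 4) (hσφ : 16 * σ ≤ ‖pinDir y x' - pinDir y x‖) :
    |(dist z x' - dist z x) - (dist z' x' - dist z' x)| ≤
        2 * ‖pinDir y x' - pinDir y x‖ * dist z z' ∧
      (|dist z x - dist z' x| ≤ dist z z' / 4 →
        ‖pinDir y x' - pinDir y x‖ / 2 * dist z z' ≤
          |(dist z x' - dist z x) - (dist z' x' - dist z' x)|) := by
  have aux : ∀ p : Euc 2, 0 < dist y p → ρ ≤ dist y p / 2 → 4 * ρ / dist y p ≤ σ →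
      ∃ E : Euc 2, ‖E - pinDir y p‖ ≤ σ ∧ dist z p - dist z' p = inner ℝ (z - z') E := by
    intro p hp h1 h2
    rw [dist_eq_norm] at hp h1 h2
    obtain ⟨hpos, hle⟩ := norm_normalized_add_sub_le (u := z - p) (v := z' - p) hp h1
      (by simpa [dist_eq_norm] using hz) (by simpa [dist_eq_norm] using hz')
    refine ⟨(‖z - p‖ + ‖z' - p‖)⁻¹ • (z - p + (z' - p)), ?_, ?_⟩
    · rw [pinDir, dist_eq_norm]; exact hle.trans h2
    · have := norm_sub_norm_eq_inner hpos
      rw [dist_eq_norm, dist_eq_norm, this]; congr 1; abel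
  obtain ⟨E, hE, hEi⟩ := aux x hx hρ hσ
  obtain ⟨E', hE', hEi'⟩ := aux x' hx' hρ' hσ'
  set e := pinDir y x
  set e' := pinDir y x'
  set φ := ‖e' - e‖
  have he : ‖e‖ = 1 := norm_pinDir hx
  have he' : ‖e'‖ = 1 := norm_pinDir hx'
  have hσ0 : 0 ≤ σ := (norm_nonneg _).trans hE
  have hdiff : (dist z x' - dist z x) - (dist z' x' - dist z' x) =
      inner ℝ (z - z') (e' - e) + inner ℝ (z - z') ((E' - e') - (E - e)) := by
    rw [← inner_add_right]
    have : e' - e + ((E' - e') - (E - e)) = E' - E := by abel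
    rw [this, inner_sub_right]; linarith
  have herr : |inner ℝ (z - z') ((E' - e') - (E - e))| ≤ dist z z' * (2 * σ) := by
    rw [dist_eq_norm]
    refine (abs_real_inner_le_norm _ _).trans ?_
    gcongr
    exact (norm_sub_le _ _).trans (by linarith)
  have hmain : |inner ℝ (z - z') (e' - e)| ≤ dist z z' * φ := by
    rw [dist_eq_norm]; exact abs_real_inner_le_norm _ _
  have hd : 0 ≤ dist z z' := dist_nonneg
  rw [hdiff]
  constructor
  · refine (abs_add_le _ _).trans ?_
    nlinarith
  · intro hf
    rw [hEi] at hf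
    have h1 : |inner ℝ (z - z') e| ≤ 17 / 64 * ‖z - z'‖ := by
      have h2 : inner ℝ (z - z') e = inner ℝ (z - z') E - inner ℝ (z - z') (E - e) := by
        rw [← inner_sub_right]; congr 1; abel
      have h3 : |inner ℝ (z - z') (E - e)| ≤ ‖z - z'‖ * σ :=
        (abs_real_inner_le_norm _ _).trans (by gcongr)
      rw [h2]
      rw [dist_eq_norm] at hf
      refine (abs_sub _ _).trans ?_
      have : σ ≤ 1 / 64 := by linarith
      nlinarith [norm_nonneg (z - z')]
    have h4 := abs_inner_ge_of_nearly_orthogonal he he' hφ h1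
    rw [← dist_eq_norm] at h4
    have h5 := abs_sub_abs_le_abs_add (inner ℝ (z - z') (e' - e))
      (inner ℝ (z - z') ((E' - e') - (E - e)))
    have h6 : dist z z' * (2 * σ) ≤ dist z z' * (φ / 8) := by gcongr; linarith
    have h7 : 7 / 8 * φ * dist z z' ≤ |inner ℝ (z - z') (e' - e)| := h4
    nlinarith [mul_nonneg hd (norm_nonneg (e' - e))]

theorem exists_chain {X : Type*} (p : ℕ → X → Prop) (rel : X → X → Prop) (M : ℕ) (x : X)
    (h0 : p 0 x) (hstep : ∀ i < M, ∀ z, p i z → ∃ z', p (i + 1) z' ∧ rel z z') :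
    ∃ u : ℕ → X, (∀ i ≤ M, p i (u i)) ∧ ∀ i < M, rel (u i) (u (i + 1)) := by
  classical
  let u : ℕ → X := fun n => Nat.rec x
    (fun i z => if h : ∃ z', p (i + 1) z' ∧ rel z z' then h.choose else z) n
  have hu : ∀ i, u (i + 1) =
      if h : ∃ z', p (i + 1) z' ∧ rel (u i) z' then h.choose else u i := fun i => rfl
  have hp : ∀ i ≤ M, p i (u i) := by
    intro i
    induction i with
    | zero => intro _; exact h0
    | succ i ih =>
      intro hi
      have hex := hstep i hi (u i) (ih (by omega))
      rw [hu, dif_pos hex]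
      exact hex.choose_spec.1
  refine ⟨u, hp, fun i hi => ?_⟩
  have hex := hstep i hi (u i) (hp i hi.le)
  rw [hu, dif_pos hex]
  exact hex.choose_spec.2

/-- At scale `ρ`, every value of `f` attained in the larger window around `x` is nearly attained
in the smaller window. -/
def WindowStable {X : Type*} [PseudoMetricSpace X] (P : Finset X) (f : X → ℝ)
    (H H' W η ρ : ℝ) (x : X) : Prop :=
  ∀ z ∈ P, dist z x ≤ H' * ρ → |f z - f x| ≤ W * ρ →
    ∃ z' ∈ P, dist z' x ≤ H * ρ ∧ |f z' - f z| ≤ η * ρ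

/-- An arithmetic-progression-like chain of values contradicts the covering condition. -/
theorem CoverBound.no_chain {X : Type*} {D : Set ℝ} {α C : ℝ} (h : CoverBound D α C)
    (hC : 0 < C) {M : ℕ} (hM : 1 ≤ M) (hMC : 2 * C * (3 * M : ℝ) ^ α < M + 1) {f : X → ℝ}
    {u : ℕ → X} (hu : ∀ i ≤ M, f (u i) ∈ D) {Δ : ℝ} (hΔ : 0 < Δ)
    (hstep : ∀ i < M, Δ / 2 ≤ f (u (i + 1)) - f (u i) ∧
      f (u (i + 1)) - f (u i) ≤ 3 * (Δ / 2)) : False := by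
  classical
  have hM' : (1 : ℝ) ≤ M := by exact_mod_cast hM
  have hmono : ∀ i j, i ≤ j → j ≤ M →
      ((j : ℝ) - i) * (Δ / 2) ≤ f (u j) - f (u i) ∧
        f (u j) - f (u i) ≤ ((j : ℝ) - i) * (3 * (Δ / 2)) := by
    intro i j hij
    induction j, hij using Nat.le_induction with
    | base => intro _; simp
    | succ j hij ih =>
      intro hj
      have h1 := ih (by omega)
      have h2 := hstep j (by omega)
      push_cast
      constructor <;> nlinarith [h1.1, h1.2, h2.1, h2.2]
  have hbd : ∀ i ≤ M, ∀ j ≤ M, i ≤ j → |f (u i) - f (u j)| ≤ 3 * M * (Δ / 2) := by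
    intro i hi j hj hij
    have h1 := hmono i j hij hj
    have hij' : (i : ℝ) ≤ j := by exact_mod_cast hij
    have hj' : (j : ℝ) ≤ M := by exact_mod_cast hj
    have hi' : (0 : ℝ) ≤ i := by positivity
    rw [abs_sub_comm, abs_of_nonneg (by nlinarith [h1.1])]
    nlinarith [h1.2]
  have hcell := h.card_image_floor_le hC (Finset.range (M + 1)) (fun i => f (u i))
    (fun i hi => hu i (by rw [Finset.mem_range] at hi; omega)) (w := Δ / 2) (q := 3 * M)
    (by positivity) (by linarith) (by
      intro i hi j hj
      rw [Finset.mem_range] at hi hj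
      rcases le_total i j with hij | hij
      · exact hbd i (by omega) j (by omega) hij
      · rw [abs_sub_comm]; exact hbd j (by omega) i (by omega) hij)
  have hlt : ∀ i j, i < j → j ≤ M → ⌊f (u i) / (Δ / 2)⌋ < ⌊f (u j) / (Δ / 2)⌋ := by
    intro i j hij hj
    have h1 := (hmono i j hij.le hj).1
    have hij' : (i : ℝ) + 1 ≤ j := by exact_mod_cast hij
    have h2 : f (u i) / (Δ / 2) + 1 ≤ f (u j) / (Δ / 2) := by
      rw [div_add_one (by positivity), div_le_div_iff_of_pos_right (by positivity)]
      nlinarith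
    have h3 := Int.floor_le_floor h2
    rw [Int.floor_add_one] at h3
    omega
  rw [Finset.card_image_of_injOn, Finset.card_range] at hcell
  · push_cast at hcell; linarith
  · intro i hi j hj hij
    simp only [Finset.coe_range, mem_Iio] at hi hj
    rcases lt_trichotomy i j with hl | hl | hl
    · exact absurd hij (hlt i j hl (by omega)).ne
    · exact hl
    · exact absurd hij (hlt j i hl (by omega)).ne'

theorem CoverBound.no_collision_of_pos {X : Type*} [PseudoMetricSpace X] {D : Set ℝ} {α C : ℝ}
    (h : CoverBound D α C) (hC : 0 < C) {M : ℕ} (hM : 1 ≤ M)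
    (hMC : 2 * C * (3 * M : ℝ) ^ α < M + 1) {P : Finset X} {f f' : X → ℝ}
    (hf : ∀ z ∈ P, f z ∈ D) {H H' η ρ φ : ℝ} (hρ : 0 < ρ) (hφ : 0 ≤ φ) (hη : 0 < η)
    (hH : 0 ≤ H) (hφH : 2 * φ * H ≤ η)
    (hg : ∀ z ∈ P, ∀ z' ∈ P, |(f' z - f z) - (f' z' - f z')| ≤ 2 * φ * dist z z')
    {x x' : X} (hx : x ∈ P) (hx' : x' ∈ P) (hxx' : dist x x' ≤ (H' - H) * ρ)
    (hfx : |f x - f x'| ≤ ρ)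
    (hΔ : 8 * η * ρ ≤ (f' x' - f x') - (f' x - f x)) (hΔ' : (f' x' - f x') - (f' x - f x) ≤ 4 * ρ)
    (hs : WindowStable P f H H' (6 * M + 10) η ρ x')
    (hs' : WindowStable P f' H H' (6 * M + 10) η ρ x) : False := by
  set Δ := (f' x' - f x') - (f' x - f x) with hΔd
  have hΔ0 : 0 < Δ := lt_of_lt_of_le (by positivity) hΔ
  obtain ⟨u, hu, hrel⟩ := exists_chain
    (fun i z => z ∈ P ∧ dist z x ≤ H * ρ ∧ |f z - f x| ≤ i * (6 * ρ))
    (fun z z' => Δ / 2 ≤ f z' - f z ∧ f z' - f z ≤ 3 * (Δ / 2)) M x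
    ⟨hx, by simpa using by positivity, by simp⟩ (by
      rintro i hi z ⟨hz, hzx, hfz⟩
      have hi' : (i : ℝ) + 1 ≤ M := by exact_mod_cast hi
      have hfz' := abs_le.1 hfz
      have hfx' := abs_le.1 hfx
      have hηρ : 0 < η * ρ := by positivity
      have hηρ1 : η * ρ ≤ ρ := by nlinarith
      have hiM : (i : ℝ) * (6 * ρ) + 6 * ρ ≤ 6 * M * ρ := by nlinarith
      obtain ⟨z₁, hz₁, hz₁x, hfz₁⟩ := hs z hz
        ((dist_triangle z x x').trans (by linarith)) (by
          rw [abs_le]; constructor <;> linarith)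
      have hnear : ∀ w ∈ P, ∀ v ∈ P, dist w v ≤ H * ρ →
          |(f' w - f w) - (f' v - f v)| ≤ η * ρ := by
        intro w hw v hv hwv
        refine (hg w hw v hv).trans ?_
        calc 2 * φ * dist w v ≤ 2 * φ * (H * ρ) := by gcongr
          _ = 2 * φ * H * ρ := by ring
          _ ≤ η * ρ := by gcongr
      have g₁ := abs_le.1 (hnear z₁ hz₁ x' hx' hz₁x)
      have hfz₁' := abs_le.1 hfz₁
      obtain ⟨z₂, hz₂, hz₂x, hfz₂⟩ := hs' z₁ hz₁
        ((dist_triangle z₁ x' x).trans (by rw [dist_comm x' x]; linarith)) (by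
          rw [abs_le]; constructor <;> linarith)
      have g₂ := abs_le.1 (hnear z₂ hz₂ x hx hz₂x)
      have hfz₂' := abs_le.1 hfz₂
      have hlo : Δ / 2 ≤ f z₂ - f z := by linarith
      have hhi : f z₂ - f z ≤ 3 * (Δ / 2) := by linarith
      refine ⟨z₂, ⟨hz₂, hz₂x, ?_⟩, hlo, hhi⟩
      rw [abs_le]; push_cast; constructor <;> linarith)
  exact h.no_chain hC hM hMC (fun i hi => hf _ (hu i hi).1) hΔ0 hrel

/-- Two points at which both functions are stable cannot have nearly the same value of `f` and
moderately different values of `f' - f`. -/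
theorem CoverBound.no_collision {X : Type*} [PseudoMetricSpace X] {D : Set ℝ} {α C : ℝ}
    (h : CoverBound D α C) (hC : 0 < C) {M : ℕ} (hM : 1 ≤ M)
    (hMC : 2 * C * (3 * M : ℝ) ^ α < M + 1) {P : Finset X} {f f' : X → ℝ}
    (hf : ∀ z ∈ P, f z ∈ D) {H H' η ρ φ : ℝ} (hρ : 0 < ρ) (hφ : 0 ≤ φ) (hη : 0 < η)
    (hH : 0 ≤ H) (hφH : 2 * φ * H ≤ η)
    (hg : ∀ z ∈ P, ∀ z' ∈ P, |(f' z - f z) - (f' z' - f z')| ≤ 2 * φ * dist z z')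
    {x x' : X} (hx : x ∈ P) (hx' : x' ∈ P) (hxx' : dist x x' ≤ (H' - H) * ρ)
    (hfx : |f x - f x'| ≤ ρ)
    (hΔ : 8 * η * ρ ≤ |(f' x - f x) - (f' x' - f x')|)
    (hΔ' : |(f' x - f x) - (f' x' - f x')| ≤ 4 * ρ)
    (hs : WindowStable P f H H' (6 * M + 10) η ρ x)
    (hs' : WindowStable P f' H H' (6 * M + 10) η ρ x)
    (ht : WindowStable P f H H' (6 * M + 10) η ρ x')
    (ht' : WindowStable P f' H H' (6 * M + 10) η ρ x') : False := by
  rcases le_total 0 ((f' x - f x) - (f' x' - f x')) with h0 | h0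
  · rw [abs_of_nonneg h0] at hΔ hΔ'
    exact h.no_collision_of_pos hC hM hMC hf hρ hφ hη hH hφH hg hx' hx
      (by rwa [dist_comm]) (by rwa [abs_sub_comm]) hΔ hΔ' hs ht'
  · rw [abs_of_nonpos h0, neg_sub] at hΔ hΔ'
    exact h.no_collision_of_pos hC hM hMC hf hρ hφ hη hH hφH hg hx hx' hxx' hfx hΔ hΔ' ht hs'

theorem sum_prod_weight_le {X K : Type*} [DecidableEq K] (P : Finset X) (key : ℕ → X → K)
    (good : ℕ → X → Prop) [∀ i x, Decidable (good i x)] {n : ℕ} {a b G B V : ℝ} (ha : 0 ≤ a)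
    (hb : 0 ≤ b) (haG : a * G ≤ 1 / 2) (hbB : b * B ≤ 1 / 2) (hV : 0 ≤ V)
    (hgood : ∀ l < n, ∀ k, (((P.filter fun x => key l x = k ∧ good l x).image
      (key (l + 1))).card : ℝ) ≤ G)
    (hbad : ∀ l < n, ∀ k, (((P.filter fun x => key l x = k ∧ ¬ good l x).image
      (key (l + 1))).card : ℝ) ≤ B)
    (hlast : ∀ k, ((P.filter fun x => key n x = k).card : ℝ) ≤ V) :
    ∀ j l, l + j = n → ∀ k, ∑ x ∈ P.filter (fun x => key l x = k),
      ∏ i ∈ Finset.Ico l n, (if good i x then a else b) ≤ V := by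
  classical
  intro j
  induction j with
  | zero =>
    intro l hl k
    have : l = n := by omega
    subst this
    simpa using hlast k
  | succ j ih =>
    intro l hl k
    have hln : l < n := by omega
    set w : ℕ → X → ℝ := fun i x => if good i x then a else b with hw
    have hw0 : ∀ i x, 0 ≤ w i x := by intro i x; simp only [hw]; split_ifs <;> assumption
    have hsplit : ∀ (p : X → Prop) [DecidablePred p],
        ∑ x ∈ P.filter p, ∏ i ∈ Finset.Ico (l + 1) n, w i x ≤
          ((P.filter p).image (key (l + 1))).card * V := by
      intro p _
      rw [← Finset.sum_fiberwise_of_maps_to (s := P.filter p)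
        (t := (P.filter p).image (key (l + 1)))
        (g := key (l + 1)) (fun x hx => Finset.mem_image_of_mem _ hx), ← nsmul_eq_mul]
      refine Finset.sum_le_card_nsmul _ _ _ fun k' _ => ?_
      refine le_trans (Finset.sum_le_sum_of_subset_of_nonneg ?_ ?_) (ih (l + 1) (by omega) k')
      · intro x hx
        simp only [Finset.mem_filter] at hx ⊢
        exact ⟨hx.1.1, hx.2⟩
      · intro x _ _
        exact Finset.prod_nonneg fun i _ => hw0 i x
    have hprod : ∀ x, ∏ i ∈ Finset.Ico l n, w i x =
        w l x * ∏ i ∈ Finset.Ico (l + 1) n, w i x := fun x =>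
      Finset.prod_eq_prod_Ico_succ_bot hln _
    rw [← Finset.sum_filter_add_sum_filter_not _ (good l), Finset.filter_filter,
      Finset.filter_filter]
    have h1 : ∑ x ∈ P.filter (fun x => key l x = k ∧ good l x), ∏ i ∈ Finset.Ico l n, w i x ≤
        V / 2 := by
      have : ∑ x ∈ P.filter (fun x => key l x = k ∧ good l x), ∏ i ∈ Finset.Ico l n, w i x =
          a * ∑ x ∈ P.filter (fun x => key l x = k ∧ good l x),
            ∏ i ∈ Finset.Ico (l + 1) n, w i x := by
        rw [Finset.mul_sum]
        refine Finset.sum_congr rfl fun x hx => ?_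
        rw [hprod, hw]
        simp [(Finset.mem_filter.1 hx).2.2]
      rw [this]
      calc _ ≤ a * (G * V) := by
            refine mul_le_mul_of_nonneg_left ((hsplit _).trans ?_) ha
            exact mul_le_mul_of_nonneg_right (hgood l hln k) hV
        _ = a * G * V := by ring
        _ ≤ 1 / 2 * V := by gcongr
        _ = V / 2 := by ring
    have h2 : ∑ x ∈ P.filter (fun x => key l x = k ∧ ¬ good l x), ∏ i ∈ Finset.Ico l n, w i x ≤
        V / 2 := by
      have : ∑ x ∈ P.filter (fun x => key l x = k ∧ ¬ good l x), ∏ i ∈ Finset.Ico l n, w i x =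
          b * ∑ x ∈ P.filter (fun x => key l x = k ∧ ¬ good l x),
            ∏ i ∈ Finset.Ico (l + 1) n, w i x := by
        rw [Finset.mul_sum]
        refine Finset.sum_congr rfl fun x hx => ?_
        rw [hprod, hw]
        simp [(Finset.mem_filter.1 hx).2.2]
      rw [this]
      calc _ ≤ b * (B * V) := by
            refine mul_le_mul_of_nonneg_left ((hsplit _).trans ?_) hb
            exact mul_le_mul_of_nonneg_right (hbad l hln k) hV
        _ = b * B * V := by ring
        _ ≤ 1 / 2 * V := by gcongr
        _ = V / 2 := by ring
    linarith

/-- Counting leaves of a tree in which most branchings are small. -/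
theorem card_le_of_branching {X K : Type*} [DecidableEq K] (P : Finset X) (key : ℕ → X → K)
    (good : ℕ → X → Prop) [∀ i x, Decidable (good i x)] {n : ℕ} {A B V V₀ θ : ℝ} (hA : 0 < A)
    (hB : 1 ≤ B) (hV : 0 ≤ V) (hθ : 0 < θ)
    (hgood : ∀ l < n, ∀ k, (((P.filter fun x => key l x = k ∧ good l x).image
      (key (l + 1))).card : ℝ) ≤ A / 2)
    (hbad : ∀ l < n, ∀ k, (((P.filter fun x => key l x = k ∧ ¬ good l x).image
      (key (l + 1))).card : ℝ) ≤ A * B / 2)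
    (hlast : ∀ k, ((P.filter fun x => key n x = k).card : ℝ) ≤ V)
    (hfirst : ((P.image (key 0)).card : ℝ) ≤ V₀)
    (hcount : (∑ x ∈ P, (((Finset.range n).filter fun l => ¬ good l x).card : ℝ)) ≤
      θ / 2 * n * P.card) :
    (P.card : ℝ) ≤ 2 * V₀ * V * (A * B ^ θ) ^ (n : ℝ) := by
  classical
  have hB0 : 0 < B := by linarith
  set w : ℕ → X → ℝ := fun i x => if good i x then A⁻¹ else (A * B)⁻¹ with hw
  have hw0 : ∀ i x, 0 ≤ w i x := by
    intro i x; simp only [hw]; split_ifs <;> positivity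
  have htot : ∑ x ∈ P, ∏ i ∈ Finset.range n, w i x ≤ V₀ * V := by
    rw [← Finset.sum_fiberwise_of_maps_to (s := P) (t := P.image (key 0))
      (g := key 0) (fun x hx => Finset.mem_image_of_mem _ hx)]
    refine (Finset.sum_le_card_nsmul _ _ V fun k _ => ?_).trans ?_
    · have := sum_prod_weight_le P key good (a := A⁻¹) (b := (A * B)⁻¹) (n := n)
        (by positivity) (by positivity) (by field_simp; rfl)
        (by field_simp; rfl) hV hgood hbad hlast n 0 (by omega) k
      simpa [hw] using this
    · rw [nsmul_eq_mul]; gcongr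
  set c : X → ℕ := fun x => ((Finset.range n).filter fun l => ¬ good l x).card with hc
  have hprod : ∀ x, ∏ i ∈ Finset.range n, w i x = (A ^ n)⁻¹ * (B ^ (c x))⁻¹ := by
    intro x
    have : ∀ i, w i x = A⁻¹ * (if good i x then 1 else B⁻¹) := by
      intro i; simp only [hw]; split_ifs <;> simp [mul_comm]
    simp only [this]
    rw [Finset.prod_mul_distrib, Finset.prod_const, Finset.card_range, Finset.prod_ite]
    simp [hc]
  set P' := P.filter fun x => (c x : ℝ) ≤ θ * n with hP'
  have hhalf : (P.card : ℝ) / 2 ≤ P'.card := by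
    have hsplit := Finset.card_filter_add_card_filter_not (s := P) (fun x => (c x : ℝ) ≤ θ * n)
    rw [← hP'] at hsplit
    set Z := P.filter fun x => ¬ (c x : ℝ) ≤ θ * n with hZ
    have hsplit' : (P'.card : ℝ) + Z.card = P.card := by exact_mod_cast hsplit
    rcases Nat.eq_zero_or_pos n with hn | hn
    · have : Z = ∅ := by
        rw [hZ, Finset.filter_eq_empty_iff]
        intro x _
        simp [hc, hn]
      rw [this] at hsplit'
      simp at hsplit'
      rw [← hsplit']
      have : (0 : ℝ) ≤ P'.card := by positivity
      linarith
    · have hn' : (0 : ℝ) < n := by exact_mod_cast hn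
      have h1 : (Z.card : ℝ) * (θ * n) ≤ ∑ x ∈ P, (c x : ℝ) := by
        calc (Z.card : ℝ) * (θ * n) = Z.card • (θ * n) := by rw [nsmul_eq_mul]
          _ ≤ ∑ x ∈ Z, (c x : ℝ) := Finset.card_nsmul_le_sum _ _ _ fun x hx => by
              have := (Finset.mem_filter.1 hx).2; linarith
          _ ≤ ∑ x ∈ P, (c x : ℝ) := Finset.sum_le_sum_of_subset_of_nonneg
              (Finset.filter_subset _ _) fun _ _ _ => by positivity
      have h2 : (Z.card : ℝ) * (θ * n) ≤ P.card / 2 * (θ * n) := by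
        refine (h1.trans hcount).trans (le_of_eq ?_); ring
      have h3 := le_of_mul_le_mul_right h2 (by positivity)
      linarith
  have hlow : (P'.card : ℝ) * ((A ^ n)⁻¹ * (B ^ (θ * n))⁻¹) ≤ V₀ * V := by
    refine le_trans ?_ htot
    calc (P'.card : ℝ) * ((A ^ n)⁻¹ * (B ^ (θ * n))⁻¹)
        = P'.card • ((A ^ n)⁻¹ * (B ^ (θ * n))⁻¹) := by rw [nsmul_eq_mul]
      _ ≤ ∑ x ∈ P', ∏ i ∈ Finset.range n, w i x := by
          refine Finset.card_nsmul_le_sum _ _ _ fun x hx => ?_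
          rw [hprod]
          have h1 := (Finset.mem_filter.1 hx).2
          gcongr
          rw [← Real.rpow_natCast]
          exact Real.rpow_le_rpow_of_exponent_le hB h1
      _ ≤ _ := Finset.sum_le_sum_of_subset_of_nonneg (Finset.filter_subset _ _)
          fun x _ _ => Finset.prod_nonneg fun i _ => hw0 i x
  have hpow : (A * B ^ θ) ^ (n : ℝ) = A ^ n * B ^ (θ * n) := by
    rw [Real.mul_rpow hA.le (by positivity), Real.rpow_natCast, ← Real.rpow_mul hB0.le]
  rw [hpow]
  have hpos : 0 < A ^ n * B ^ (θ * n) := by positivity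
  have h4 : (P'.card : ℝ) ≤ V₀ * V * (A ^ n * B ^ (θ * n)) := by
    rw [← mul_inv, ← div_eq_mul_inv, div_le_iff₀ hpos] at hlow
    exact hlow
  nlinarith

theorem card_image_floor_div_le {ι : Type*} (S : Finset ι) (g : ι → ℝ) {w L : ℝ} (hw : 0 < w)
    (hL : 0 ≤ L) (hS : ∀ i ∈ S, ∀ j ∈ S, |g i - g j| ≤ L) :
    ((S.image fun i => ⌊g i / w⌋).card : ℝ) ≤ L / w + 2 := by
  rcases S.eq_empty_or_nonempty with rfl | hne
  · simp; positivity
  obtain ⟨i₀, hi₀, hmin⟩ := S.exists_min_image g hne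
  have hsub : (S.image fun i => ⌊g i / w⌋) ⊆
      Finset.Icc ⌊g i₀ / w⌋ (⌊g i₀ / w⌋ + (⌊L / w⌋ + 1)) := by
    intro a ha
    obtain ⟨i, hi, rfl⟩ := Finset.mem_image.1 ha
    rw [Finset.mem_Icc]
    refine ⟨Int.floor_le_floor (by gcongr; exact hmin i hi), ?_⟩
    have h1 : g i / w ≤ g i₀ / w + L / w := by
      rw [← add_div, div_le_div_iff_of_pos_right hw]
      linarith [(abs_le.1 (hS i hi i₀ hi₀)).2]
    have h2 := Int.floor_le_floor h1
    have h3 := Int.le_floor_add_floor (g i₀ / w) (L / w)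
    omega
  have hcard := Finset.card_le_card hsub
  rw [Int.card_Icc] at hcard
  have hfl : (0 : ℤ) ≤ ⌊L / w⌋ := Int.floor_nonneg.2 (by positivity)
  have h1 : ((S.image fun i => ⌊g i / w⌋).card : ℤ) ≤ ⌊L / w⌋ + 2 := by omega
  have h2 : ((S.image fun i => ⌊g i / w⌋).card : ℝ) ≤ (⌊L / w⌋ : ℝ) + 2 := by exact_mod_cast h1
  linarith [Int.floor_le (L / w)]

theorem abs_sub_lt_of_floor_div_eq {a b w : ℝ} (hw : 0 < w) (h : ⌊a / w⌋ = ⌊b / w⌋) :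
    |a - b| < w := by
  have := Int.abs_sub_lt_one_of_floor_eq_floor h
  rwa [← sub_div, abs_div, abs_of_pos hw, div_lt_one hw] at this

theorem lt_abs_sub_of_one_lt_abs_floor_sub {a b w : ℝ} (hw : 0 < w)
    (h : 1 < |⌊a / w⌋ - ⌊b / w⌋|) : w < |a - b| := by
  by_contra! hle
  have h1 := abs_le.1 hle
  have e1 : a / w ≤ b / w + 1 := by
    rw [div_add_one hw.ne', div_le_div_iff_of_pos_right hw]; linarith [h1.2]
  have e2 : b / w ≤ a / w + 1 := by
    rw [div_add_one hw.ne', div_le_div_iff_of_pos_right hw]; linarith [h1.1]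
  have g1 := Int.floor_le_floor e1
  have g2 := Int.floor_le_floor e2
  rw [Int.floor_add_one] at g1 g2
  have : |⌊a / w⌋ - ⌊b / w⌋| ≤ 1 := by rw [abs_le]; constructor <;> linarith
  omega

theorem card_image_prod_le {ι A B C : Type*} [DecidableEq A] [DecidableEq B] [DecidableEq C]
    (S : Finset ι) (a : ι → A) (b : ι → B) (c : ι → C) :
    (S.image fun i => (a i, b i, c i)).card ≤
      (S.image a).card * ((S.image b).card * (S.image c).card) := by
  rw [← Finset.card_product, ← Finset.card_product]
  refine Finset.card_le_card fun t ht => ?_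
  obtain ⟨i, hi, rfl⟩ := Finset.mem_image.1 ht
  simp only [Finset.mem_product]
  exact ⟨Finset.mem_image_of_mem _ hi, Finset.mem_image_of_mem _ hi, Finset.mem_image_of_mem _ hi⟩

theorem abs_coord_sub_le_dist (x y : Euc 2) (i : Fin 2) : |x i - y i| ≤ dist x y := by
  rw [dist_eq_norm, ← Real.norm_eq_abs]
  exact PiLp.norm_apply_le (x - y) i

theorem dist_lt_two_mul_of_abs_coord_sub_lt {x y : Euc 2} {w : ℝ} (h : ∀ i, |x i - y i| < w) :
    dist x y < 2 * w := by
  have hw : 0 < w := (abs_nonneg _).trans_lt (h 0)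
  rw [EuclideanSpace.dist_eq, Fin.sum_univ_two, Real.sqrt_lt' (by positivity)]
  have h0 := h 0
  have h1 := h 1
  rw [Real.dist_eq, Real.dist_eq]
  nlinarith [abs_nonneg (x 0 - y 0), abs_nonneg (x 1 - y 1)]

/-- A separated set in a square of side `L` has at most `(4 L / r + 2)²` points. -/
theorem card_le_of_separated {P : Finset (Euc 2)} {r L : ℝ} (hr : 0 < r) (hL : 0 ≤ L)
    (hsep : ∀ x ∈ P, ∀ y ∈ P, x ≠ y → r / 2 < dist x y)
    (hP : ∀ x ∈ P, ∀ y ∈ P, ∀ i, |x i - y i| ≤ L) :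
    (P.card : ℝ) ≤ (4 * L / r + 2) ^ 2 := by
  classical
  have hinj : Set.InjOn (fun x : Euc 2 => (⌊x 0 / (r / 4)⌋, ⌊x 1 / (r / 4)⌋, ())) P := by
    intro x hx y hy hxy
    by_contra hne
    simp only [Prod.mk.injEq] at hxy
    have h := dist_lt_two_mul_of_abs_coord_sub_lt (x := x) (y := y) (w := r / 4) (by
      intro i
      fin_cases i
      · exact abs_sub_lt_of_floor_div_eq (by positivity) hxy.1
      · exact abs_sub_lt_of_floor_div_eq (by positivity) hxy.2.1)
    linarith [hsep x hx y hy hne]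
  have hcard := card_image_prod_le P (fun x : Euc 2 => ⌊x 0 / (r / 4)⌋)
    (fun x => ⌊x 1 / (r / 4)⌋) (fun _ => ())
  rw [Finset.card_image_of_injOn hinj] at hcard
  have hu : (P.image fun _ => ()).card ≤ 1 := Finset.card_le_one_of_subsingleton _
  have h0 := card_image_floor_div_le P (fun x : Euc 2 => x 0) (w := r / 4) (by positivity) hL
    (fun x hx y hy => hP x hx y hy 0)
  have h1 := card_image_floor_div_le P (fun x : Euc 2 => x 1) (w := r / 4) (by positivity) hL
    (fun x hx y hy => hP x hx y hy 1)
  have hLr : L / (r / 4) = 4 * L / r := by field_simp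
  rw [hLr] at h0 h1
  have hcard' : (P.card : ℝ) ≤ (P.image fun x : Euc 2 => ⌊x 0 / (r / 4)⌋).card *
      ((P.image fun x : Euc 2 => ⌊x 1 / (r / 4)⌋).card * (P.image fun _ => ()).card) := by
    exact_mod_cast hcard
  have hu' : (((P.image fun _ => ()).card : ℕ) : ℝ) ≤ 1 := by exact_mod_cast hu
  calc (P.card : ℝ) ≤ _ := hcard'
    _ ≤ (4 * L / r + 2) * ((4 * L / r + 2) * 1) := by gcongr
    _ = _ := by ring

/-- The square and the strip of the value of `f` containing a point. -/
def pinKey (f : Euc 2 → ℝ) (L w : ℝ) (x : Euc 2) : ℤ × ℤ × ℤ :=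
  (⌊x 0 / L⌋, ⌊x 1 / L⌋, ⌊f x / w⌋)

theorem pinKey_eq_iff {f : Euc 2 → ℝ} {L w : ℝ} {x y : Euc 2} :
    pinKey f L w x = pinKey f L w y ↔
      (∀ i, ⌊x i / L⌋ = ⌊y i / L⌋) ∧ ⌊f x / w⌋ = ⌊f y / w⌋ := by
  simp only [pinKey, Prod.mk.injEq, Fin.forall_fin_two, and_assoc]

theorem card_image_pinKey_le {f : Euc 2 → ℝ} {L w a c : ℝ} (S : Finset (Euc 2))
    (ha : ∀ i, ((S.image fun x : Euc 2 => ⌊x i / L⌋).card : ℝ) ≤ a)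
    (hc : ((S.image fun x => ⌊f x / w⌋).card : ℝ) ≤ c) :
    ((S.image (pinKey f L w)).card : ℝ) ≤ a * (a * c) := by
  have hle := card_image_prod_le S (fun x : Euc 2 => ⌊x 0 / L⌋) (fun x => ⌊x 1 / L⌋)
    (fun x => ⌊f x / w⌋)
  have ha0 : 0 ≤ a := (Nat.cast_nonneg _).trans (ha 0)
  refine (Nat.cast_le.2 hle).trans ?_
  push_cast
  gcongr
  · exact ha 0
  · exact ha 1

/-- If the two distance functions of a pair of transversal pins are stable at most points and
scales, then the set is small. -/
theorem CoverBound.card_le_of_stable_pair {D : Set ℝ} {α C : ℝ} (h : CoverBound D α C)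
    (hC : 0 < C) {M Q : ℕ} (hM : 1 ≤ M) (hMC : 2 * C * (3 * M : ℝ) ^ α < M + 1) (hQ : 2 ≤ Q)
    {P : Finset (Euc 2)} {f f' : Euc 2 → ℝ} (hf : ∀ z ∈ P, f z ∈ D)
    (hlip : ∀ z z', |f z - f z'| ≤ dist z z')
    {R φ H H' : ℝ} (hR : 0 < R) {y : Euc 2} (hP : ∀ z ∈ P, dist z y ≤ R) (hφ : 0 < φ)
    (hφ4 : φ ≤ 1 / 4)
    (hg : ∀ z ∈ P, ∀ z' ∈ P, |(f' z - f z) - (f' z' - f z')| ≤ 2 * φ * dist z z')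
    (hg' : ∀ z ∈ P, ∀ z' ∈ P, |f z - f z'| ≤ dist z z' / 4 →
      φ / 2 * dist z z' ≤ |(f' z - f z) - (f' z' - f z')|)
    (hH : 0 ≤ H) (hφH : 2 * φ * H ≤ 1 / (16 * Q)) (hHH' : 2 / φ ≤ H' - H)
    {r : ℝ} (hr : 0 < r) (hsep : ∀ x ∈ P, ∀ y ∈ P, x ≠ y → r / 2 < dist x y) {n : ℕ}
    (hn : R ≤ Q ^ (n + 1) * r) {good : ℕ → Euc 2 → Prop} [∀ l x, Decidable (good l x)]
    (hgood : ∀ l x, good l x →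
      WindowStable P f H H' (6 * M + 10) (1 / (16 * Q)) (R / Q ^ l) x ∧
        WindowStable P f' H H' (6 * M + 10) (1 / (16 * Q)) (R / Q ^ l) x)
    {θ : ℝ} (hθ : 0 < θ)
    (hcount : (∑ x ∈ P, (((Finset.range n).filter fun l => ¬ good l x).card : ℝ)) ≤
      θ / 2 * n * P.card) :
    (P.card : ℝ) ≤ 2 * (8 * C * (8 * Q) ^ α) * (4 * Q / φ + 2) ^ 2 *
      (16 * C * Q ^ α * ((Q : ℝ) ^ 2) ^ θ) ^ (n : ℝ) := by
  classical
  have hQ2 : (2 : ℝ) ≤ Q := by exact_mod_cast hQ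
  have hQ0 : (0 : ℝ) < Q := by linarith
  have hρ : ∀ l : ℕ, 0 < R / Q ^ l := fun l => by positivity
  set key : ℕ → Euc 2 → ℤ × ℤ × ℤ := fun l => pinKey f (R / Q ^ l / φ) (R / Q ^ l / (4 * Q))
    with hkey
  have hsame : ∀ l x x', key l x = key l x' →
      (∀ i, |x i - x' i| < R / Q ^ l / φ) ∧ |f x - f x'| < R / Q ^ l / (4 * Q) := by
    intro l x x' hxx
    obtain ⟨h1, h2⟩ := pinKey_eq_iff.1 hxx
    exact ⟨fun i => abs_sub_lt_of_floor_div_eq (by have := hρ l; positivity) (h1 i),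
      abs_sub_lt_of_floor_div_eq (by have := hρ l; positivity) h2⟩
  have hnext : ∀ l, R / Q ^ (l + 1) / φ = R / Q ^ l / φ / Q := fun l => by
    rw [pow_succ]; field_simp
  have hnext' : ∀ l, R / Q ^ (l + 1) / (4 * Q) = R / Q ^ l / (4 * Q) / Q := fun l => by
    rw [pow_succ]; field_simp
  have hstrip : ∀ (l : ℕ) (S : Finset (Euc 2)), S ⊆ P →
      (∀ x ∈ S, ∀ x' ∈ S, key l x = key l x') →
      ((S.image fun x => ⌊f x / (R / Q ^ (l + 1) / (4 * Q))⌋).card : ℝ) ≤ 2 * C * Q ^ α := by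
    intro l S hS hSk
    refine h.card_image_floor_le hC S f (fun x hx => hf x (hS hx)) (by positivity) (by linarith) ?_
    intro x hx x' hx'
    refine (hsame l x x' (hSk x hx x' hx')).2.le.trans (le_of_eq ?_)
    rw [hnext']; field_simp
  refine card_le_of_branching P key good (by positivity) (by nlinarith) (by positivity) hθ
    ?_ ?_ ?_ ?_ hcount
  · intro l hl k
    set S := P.filter fun x => key l x = k ∧ good l x with hSd
    have hSk : ∀ x ∈ S, ∀ x' ∈ S, key l x = key l x' := by
      intro x hx x' hx'
      rw [(Finset.mem_filter.1 hx).2.1, (Finset.mem_filter.1 hx').2.1]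
    have hcoord : ∀ i : Fin 2, (S.image fun x => ⌊x i / (R / Q ^ (l + 1) / φ)⌋).card ≤ 2 := by
      intro i
      apply card_le_two_of_abs_sub_le_one
      intro a ha b hb
      obtain ⟨x, hx, rfl⟩ := Finset.mem_image.1 ha
      obtain ⟨x', hx', rfl⟩ := Finset.mem_image.1 hb
      by_contra! hlt
      have hxP := (Finset.mem_filter.1 hx).1
      have hxP' := (Finset.mem_filter.1 hx').1
      obtain ⟨hc, hfl⟩ := hsame l x x' (hSk x hx x' hx')
      have hfar : R / Q ^ l / φ / Q < dist x x' := by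
        rw [← hnext]
        exact (lt_abs_sub_of_one_lt_abs_floor_sub (by positivity) hlt).trans_le
          (abs_coord_sub_le_dist x x' i)
      have hnear := dist_lt_two_mul_of_abs_coord_sub_lt hc
      set ρ := R / Q ^ l with hρd
      have hρ0 : 0 < ρ := hρ l
      have e1 : ρ / (4 * Q) ≤ dist x x' / 4 := by
        have : ρ / Q ≤ ρ / φ / Q := by
          gcongr
          rw [le_div_iff₀ hφ]; nlinarith
        have e : ρ / (4 * Q) = ρ / Q / 4 := by field_simp
        rw [e]; linarith
      have e2 := hg' x hxP x' hxP' (hfl.le.trans e1)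
      have e3 := hg x hxP x' hxP'
      have e4 : 8 * (1 / (16 * (Q : ℝ))) * ρ ≤ φ / 2 * dist x x' := by
        calc 8 * (1 / (16 * (Q : ℝ))) * ρ = φ / 2 * (ρ / φ / Q) := by field_simp; norm_num
          _ ≤ φ / 2 * dist x x' := by gcongr
      have e5 : 2 * φ * dist x x' ≤ 4 * ρ := by
        calc 2 * φ * dist x x' ≤ 2 * φ * (2 * (ρ / φ)) := by gcongr
          _ = 4 * ρ := by field_simp; norm_num
      refine h.no_collision hC hM hMC hf hρ0 hφ.le (η := 1 / (16 * Q)) (by positivity) hH hφH hg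
        hxP hxP' ?_ ?_ (e4.trans e2) (e3.trans e5) (hgood l x (Finset.mem_filter.1 hx).2.2).1
        (hgood l x (Finset.mem_filter.1 hx).2.2).2 (hgood l x' (Finset.mem_filter.1 hx').2.2).1
        (hgood l x' (Finset.mem_filter.1 hx').2.2).2
      · calc dist x x' ≤ 2 * (ρ / φ) := hnear.le
          _ = 2 / φ * ρ := by ring
          _ ≤ (H' - H) * ρ := by gcongr
      · refine hfl.le.trans ?_
        rw [div_le_iff₀ (by positivity)]; nlinarith
    have hle' : ((S.image (key (l + 1))).card : ℝ) ≤ 2 * (2 * (2 * C * Q ^ α)) := by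
      refine card_image_pinKey_le S (fun i => by exact_mod_cast hcoord i) ?_
      exact hstrip l S (Finset.filter_subset _ _) hSk
    linarith
  · intro l hl k
    set S := P.filter fun x => key l x = k ∧ ¬ good l x with hSd
    have hSk : ∀ x ∈ S, ∀ x' ∈ S, key l x = key l x' := by
      intro x hx x' hx'
      rw [(Finset.mem_filter.1 hx).2.1, (Finset.mem_filter.1 hx').2.1]
    have hcoord : ∀ i : Fin 2,
        ((S.image fun x => ⌊x i / (R / Q ^ (l + 1) / φ)⌋).card : ℝ) ≤ Q + 2 := by
      intro i
      refine (card_image_floor_div_le S (fun x : Euc 2 => x i) (L := R / Q ^ l / φ) (by positivity)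
        (by positivity) fun x hx x' hx' => ((hsame l x x' (hSk x hx x' hx')).1 i).le).trans
        (le_of_eq ?_)
      rw [hnext]; field_simp
    have hle' : ((S.image (key (l + 1))).card : ℝ) ≤ (Q + 2) * ((Q + 2) * (2 * C * Q ^ α)) := by
      exact card_image_pinKey_le S hcoord (hstrip l S (Finset.filter_subset _ _) hSk)
    have hX : 0 < C * (Q : ℝ) ^ α := by positivity
    have hQQ : ((Q : ℝ) + 2) ^ 2 ≤ 4 * Q ^ 2 := by nlinarith
    calc ((S.image (key (l + 1))).card : ℝ) ≤ _ := hle'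
      _ = ((Q : ℝ) + 2) ^ 2 * (2 * (C * Q ^ α)) := by ring
      _ ≤ 4 * Q ^ 2 * (2 * (C * Q ^ α)) := by gcongr
      _ = _ := by ring
  · intro k
    have hk : ∀ x ∈ P.filter (fun x => key n x = k), ∀ x' ∈ P.filter (fun x => key n x = k), ∀ i,
        |x i - x' i| ≤ Q * r / φ := by
      intro x hx x' hx' i
      refine ((hsame n x x' ?_).1 i).le.trans ?_
      · rw [(Finset.mem_filter.1 hx).2, (Finset.mem_filter.1 hx').2]
      · gcongr
        rw [div_le_iff₀ (by positivity)]
        rw [pow_succ] at hn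
        linarith
    refine (card_le_of_separated hr (by positivity) (fun x hx x' hx' => hsep x
      (Finset.mem_filter.1 hx).1 x' (Finset.mem_filter.1 hx').1) hk).trans (le_of_eq ?_)
    field_simp
  · have hd : ∀ x ∈ P, ∀ x' ∈ P, dist x x' ≤ 2 * R := fun x hx x' hx' =>
      (dist_triangle_right x x' y).trans (by linarith [hP x hx, hP x' hx'])
    have hcoord : ∀ i : Fin 2, (P.image fun x => ⌊x i / (R / Q ^ 0 / φ)⌋).card ≤ 2 := by
      intro i
      apply card_le_two_of_abs_sub_le_one
      intro a ha b hb
      obtain ⟨x, hx, rfl⟩ := Finset.mem_image.1 ha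
      obtain ⟨x', hx', rfl⟩ := Finset.mem_image.1 hb
      by_contra! hlt
      have h1 := lt_abs_sub_of_one_lt_abs_floor_sub (by positivity) hlt
      have h2 := (abs_coord_sub_le_dist x x' i).trans (hd x hx x' hx')
      have h3 : 2 * R ≤ R / Q ^ 0 / φ := by
        rw [pow_zero, div_one, le_div_iff₀ hφ]; nlinarith
      linarith
    have hf0 : ((P.image fun x => ⌊f x / (R / Q ^ 0 / (4 * Q))⌋).card : ℝ) ≤
        2 * C * (8 * Q) ^ α := by
      refine h.card_image_floor_le hC P f hf (by positivity) (by linarith) ?_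
      intro x hx x' hx'
      refine ((hlip x x').trans (hd x hx x' hx')).trans (le_of_eq ?_)
      rw [pow_zero]; field_simp; norm_num
    have hle' : ((P.image (key 0)).card : ℝ) ≤ 2 * (2 * (2 * C * (8 * Q) ^ α)) := by
      exact card_image_pinKey_le P (fun i => by exact_mod_cast hcoord i) hf0
    linarith

open Classical in
/-- A point and a scale are unstable for boundedly many consecutive windows. -/
theorem card_filter_not_windowStable_le {X : Type*} [PseudoMetricSpace X] (P : Finset X)
    (f : X → ℝ) {H : ℕ → ℝ} (hH : Monotone H) {W η ρ : ℝ} (hW : 0 ≤ W) (hη : 0 < η) (hρ : 0 < ρ)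
    (x : X) (K : ℕ) :
    (((Finset.range K).filter fun k => ¬ WindowStable P f (H k) (H (k + 1)) W η ρ x).card : ℝ) ≤
      2 * W / η + 2 := by
  set S := (Finset.range K).filter fun k => ¬ WindowStable P f (H k) (H (k + 1)) W η ρ x
  have hwit : ∀ k, ∃ z : X, k ∈ S → z ∈ P ∧ dist z x ≤ H (k + 1) * ρ ∧ |f z - f x| ≤ W * ρ ∧
      ∀ z' ∈ P, dist z' x ≤ H k * ρ → η * ρ < |f z' - f z| := by
    intro k
    by_cases hk : k ∈ S
    · have hk' := (Finset.mem_filter.1 hk).2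
      unfold WindowStable at hk'
      push Not at hk'
      obtain ⟨z, h1, h2, h3, h4⟩ := hk'
      exact ⟨z, fun _ => ⟨h1, h2, h3, h4⟩⟩
    · exact ⟨x, fun h => absurd h hk⟩
  choose z hz using hwit
  have hsep : ∀ k ∈ S, ∀ k' ∈ S, k < k' → η * ρ < |f (z k) - f (z k')| := by
    intro k hk k' hk' hlt
    refine (hz k' hk').2.2.2 (z k) (hz k hk).1 ((hz k hk).2.1.trans ?_)
    gcongr
    exact hH hlt
  have hle := card_image_floor_div_le S (fun k => f (z k)) (w := η * ρ) (L := 2 * W * ρ)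
    (by positivity) (by positivity) (by
      intro k hk k' hk'
      have h1 := abs_le.1 (hz k hk).2.2.1
      have h2 := abs_le.1 (hz k' hk').2.2.1
      rw [abs_le]; constructor <;> linarith)
  rw [Finset.card_image_of_injOn] at hle
  · refine hle.trans (le_of_eq ?_)
    rw [mul_div_mul_right _ _ hρ.ne']
  · intro k hk k' hk' heq
    have hlt := abs_sub_lt_of_floor_div_eq (by positivity) heq
    rcases lt_trichotomy k k' with h | h | h
    · linarith [hsep k hk k' hk' h]
    · exact h
    · rw [abs_sub_comm] at hlt
      linarith [hsep k' hk' k hk h]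

open Classical in
/-- The number of pairs (point, level) that are unstable for the `k`-th window. -/
def unstableCount {X : Type*} [PseudoMetricSpace X] (P : Finset X) (f : X → ℝ) (H : ℕ → ℝ)
    (W η : ℝ) (ρ : ℕ → ℝ) (n k : ℕ) : ℕ :=
  ∑ x ∈ P, ((Finset.range n).filter
    fun l => ¬ WindowStable P f (H k) (H (k + 1)) W η (ρ l) x).card

theorem exists_unstableCount_le {X : Type*} [PseudoMetricSpace X] (P : Finset X)
    (f : X → ℝ) {H : ℕ → ℝ} (hH : Monotone H) {W η δ : ℝ} {ρ : ℕ → ℝ} (hW : 0 ≤ W) (hη : 0 < η)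
    (hρ : ∀ l, 0 < ρ l) {n K : ℕ} (hK : 0 < K) (hδ : 2 * W / η + 2 ≤ K * δ) :
    ∃ k < K, (unstableCount P f H W η ρ n k : ℝ) ≤ δ * n * P.card := by
  classical
  by_contra! hcon
  have hlow : (K : ℝ) * (δ * n * P.card) <
      ∑ k ∈ Finset.range K, (unstableCount P f H W η ρ n k : ℝ) := by
    have : ∑ _k ∈ Finset.range K, (δ * n * P.card) <
        ∑ k ∈ Finset.range K, (unstableCount P f H W η ρ n k : ℝ) :=
      Finset.sum_lt_sum_of_nonempty (by simpa using hK.ne')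
        fun k hk => hcon k (Finset.mem_range.1 hk)
    simpa using this
  have hup : ∑ k ∈ Finset.range K, (unstableCount P f H W η ρ n k : ℝ) ≤
      P.card * (n * (2 * W / η + 2)) := by
    have hswap : ∑ k ∈ Finset.range K, unstableCount P f H W η ρ n k =
        ∑ x ∈ P, ∑ l ∈ Finset.range n, ((Finset.range K).filter
          fun k => ¬ WindowStable P f (H k) (H (k + 1)) W η (ρ l) x).card := by
      simp only [unstableCount, Finset.card_filter]
      rw [Finset.sum_comm]
      exact Finset.sum_congr rfl fun x _ => Finset.sum_comm
    rw [← Nat.cast_sum, hswap]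
    push_cast
    refine (Finset.sum_le_card_nsmul _ _ _ fun x _ => ?_).trans_eq (nsmul_eq_mul _ _)
    refine (Finset.sum_le_card_nsmul _ _ _ fun l _ =>
      card_filter_not_windowStable_le P f hH hW hη (hρ l) x K).trans_eq ?_
    rw [nsmul_eq_mul, Finset.card_range]
  have h1 : (P.card : ℝ) * (n * (2 * W / η + 2)) ≤ P.card * (n * (K * δ)) := by gcongr
  linarith

theorem exists_card_le_mul_card_fiber {ι κ : Type*} [DecidableEq κ] {S : Finset ι}
    (hS : S.Nonempty) (g : ι → κ) {c : ℝ} (hc : ((S.image g).card : ℝ) ≤ c) :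
    ∃ x ∈ S, (S.card : ℝ) ≤ c * (S.filter fun y => g y = g x).card := by
  by_contra! hcon
  have hc0 : 0 < c := lt_of_lt_of_le (by exact_mod_cast (hS.image g).card_pos) hc
  have hlt : ∀ k ∈ S.image g, ((S.filter fun y => g y = k).card : ℝ) < S.card / c := by
    intro k hk
    obtain ⟨x, hx, rfl⟩ := Finset.mem_image.1 hk
    rw [lt_div_iff₀ hc0, mul_comm]
    exact hcon x hx
  have hsum := Finset.card_eq_sum_card_image g S
  have : (S.card : ℝ) < (S.image g).card * (S.card / c) := by
    calc (S.card : ℝ) = ∑ k ∈ S.image g, ((S.filter fun y => g y = k).card : ℝ) := by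
          exact_mod_cast hsum
      _ < ∑ _k ∈ S.image g, (S.card / c : ℝ) :=
          Finset.sum_lt_sum_of_nonempty (hS.image g) hlt
      _ = _ := by rw [Finset.sum_const, nsmul_eq_mul]
  have h2 : ((S.image g).card : ℝ) * (S.card / c) ≤ c * (S.card / c) := by gcongr
  rw [mul_div_cancel₀ _ hc0.ne'] at h2
  linarith

/-- A set in a square of side `L` has a large part of diameter at most `a`. -/
theorem exists_large_part_of_small_diam {ι : Type*} {S : Finset ι} (hS : S.Nonempty)
    (e : ι → Euc 2) {a L : ℝ} (ha : 0 < a) (hL : 0 ≤ L)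
    (he : ∀ x ∈ S, ∀ y ∈ S, ∀ i, |e x i - e y i| ≤ L) :
    ∃ x₀ ∈ S, ∃ T ⊆ S, x₀ ∈ T ∧ (∀ x ∈ T, ∀ y ∈ T, dist (e x) (e y) ≤ a) ∧
      (S.card : ℝ) ≤ (2 * L / a + 2) ^ 2 * T.card := by
  classical
  have hw : (0 : ℝ) < a / 2 := by positivity
  set g : ι → ℤ × ℤ × Unit := fun x => (⌊e x 0 / (a / 2)⌋, ⌊e x 1 / (a / 2)⌋, ()) with hg
  have hcard : ((S.image g).card : ℝ) ≤
      (2 * L / a + 2) ^ 2 := by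
    have h := card_image_prod_le S (fun x => ⌊e x 0 / (a / 2)⌋) (fun x => ⌊e x 1 / (a / 2)⌋)
      (fun _ => ())
    have hu : (S.image fun _ => ()).card ≤ 1 := Finset.card_le_one_of_subsingleton _
    have h0 := card_image_floor_div_le S (fun x => e x 0) hw hL (fun x hx y hy => he x hx y hy 0)
    have h1 := card_image_floor_div_le S (fun x => e x 1) hw hL (fun x hx y hy => he x hx y hy 1)
    have hLa : L / (a / 2) = 2 * L / a := by field_simp
    rw [hLa] at h0 h1
    have hu' : (((S.image fun _ => ()).card : ℕ) : ℝ) ≤ 1 := by exact_mod_cast hu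
    refine (Nat.cast_le.2 h).trans ?_
    push_cast
    calc _ ≤ (2 * L / a + 2) * ((2 * L / a + 2) * 1) := by gcongr
      _ = _ := by ring
  obtain ⟨x₀, hx₀, hx₀c⟩ := exists_card_le_mul_card_fiber hS g hcard
  refine ⟨x₀, hx₀, S.filter fun y => g y = g x₀, Finset.filter_subset _ _,
    Finset.mem_filter.2 ⟨hx₀, rfl⟩, ?_, hx₀c⟩
  intro x hx y hy
  have hxy := (Finset.mem_filter.1 hx).2.trans (Finset.mem_filter.1 hy).2.symm
  simp only [hg, Prod.mk.injEq] at hxy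
  have := dist_lt_two_mul_of_abs_coord_sub_lt (x := e x) (y := e y) (w := a / 2) (by
    intro i
    fin_cases i
    · exact abs_sub_lt_of_floor_div_eq hw hxy.1
    · exact abs_sub_lt_of_floor_div_eq hw hxy.2.1)
  linarith

theorem norm_smul_sub_smul_le {a b : ℝ} (hb : 0 ≤ b) {e e' : Euc 2} (he : ‖e‖ = 1) :
    ‖a • e - b • e'‖ ≤ |a - b| + b * ‖e - e'‖ := by
  have : a • e - b • e' = (a - b) • e + b • (e - e') := by module
  rw [this]
  refine (norm_add_le _ _).trans ?_
  rw [norm_smul, norm_smul, he, Real.norm_eq_abs, Real.norm_of_nonneg hb, mul_one]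

/-- Pins seen from `y` within a small arc are few. -/
theorem CoverBound.card_pins_in_arc_le {D : Set ℝ} {α C : ℝ} (h : CoverBound D α C)
    (hC : 0 < C) {t : ℝ} (hαt : α < t) (ht : t ≤ 1) {X S : Finset (Euc 2)}
    (hSX : S ⊆ X) {R : ℝ} (hR : 0 < R)
    (hF : ∀ z ∈ X, ∀ ρ > 0, ((X.filter fun x => dist x z ≤ ρ).card : ℝ) ≤
      max 1 ((ρ / R) ^ t * X.card))
    {y : Euc 2} (hpos : ∀ x ∈ S, 0 < dist y x) (hle : ∀ x ∈ S, dist y x ≤ 2 * R)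
    (hD : ∀ x ∈ S, dist y x ∈ D) {a : ℝ} (ha : 0 < a) (ha2 : a < 2) (haX : 1 ≤ a ^ t * X.card)
    (hS : ∀ x ∈ S, ∀ x' ∈ S, ‖pinDir y x - pinDir y x'‖ ≤ a) :
    (S.card : ℝ) ≤ 12 * C * a ^ (t - α) * X.card := by
  classical
  rcases S.eq_empty_or_nonempty with rfl | hne
  · simp; positivity
  have hcell := h.card_image_floor_le hC S (fun x => dist y x) hD (w := a * R) (q := 2 / a)
    (by positivity) (by rwa [lt_div_iff₀ ha, one_mul]) (by
      intro x hx x' hx'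
      have e : 2 / a * (a * R) = 2 * R := by field_simp
      rw [e, abs_le]
      constructor <;> linarith [hpos x hx, hpos x' hx', hle x hx, hle x' hx'])
  obtain ⟨x₀, hx₀, hfib⟩ := exists_card_le_mul_card_fiber hne _ hcell
  have hsub : (S.filter fun x => ⌊dist y x / (a * R)⌋ = ⌊dist y x₀ / (a * R)⌋) ⊆
      X.filter fun x => dist x x₀ ≤ 3 * a * R := by
    intro x hx
    rw [Finset.mem_filter] at hx ⊢
    refine ⟨hSX hx.1, ?_⟩
    have hd := abs_sub_lt_of_floor_div_eq (by positivity) hx.2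
    have hrep : ∀ p ∈ S, y - p = dist y p • pinDir y p := by
      intro p hp
      rw [pinDir, smul_smul, mul_inv_cancel₀ (hpos p hp).ne', one_smul]
    have e : x - x₀ = dist y x₀ • pinDir y x₀ - dist y x • pinDir y x := by
      rw [← hrep x₀ hx₀, ← hrep x hx.1]; abel
    rw [dist_eq_norm, e]
    refine (norm_smul_sub_smul_le dist_nonneg (norm_pinDir (hpos x₀ hx₀))).trans ?_
    have h1 := hS x₀ hx₀ x hx.1
    rw [abs_sub_comm] at hd
    have h2 : dist y x * ‖pinDir y x₀ - pinDir y x‖ ≤ 2 * R * a :=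
      mul_le_mul (hle x hx.1) h1 (norm_nonneg _) (by positivity)
    linarith
  have hball : ((S.filter fun x => ⌊dist y x / (a * R)⌋ = ⌊dist y x₀ / (a * R)⌋).card : ℝ) ≤
      3 * (a ^ t * X.card) := by
    refine (Nat.cast_le.2 (Finset.card_le_card hsub)).trans
      ((hF x₀ (hSX hx₀) _ (by positivity)).trans (max_le (by linarith) ?_))
    rw [mul_div_cancel_right₀ _ hR.ne', Real.mul_rpow (by norm_num) ha.le, mul_assoc]
    gcongr
    calc (3 : ℝ) ^ t ≤ 3 ^ (1 : ℝ) := Real.rpow_le_rpow_of_exponent_le (by norm_num) ht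
      _ = 3 := Real.rpow_one 3
  have h2 : (2 / a) ^ α ≤ 2 * (a ^ α)⁻¹ := by
    rw [Real.div_rpow (by norm_num) ha.le, div_eq_mul_inv]
    gcongr
    calc (2 : ℝ) ^ α ≤ 2 ^ (1 : ℝ) := Real.rpow_le_rpow_of_exponent_le (by norm_num) (by linarith)
      _ = 2 := Real.rpow_one 2
  calc (S.card : ℝ) ≤ _ := hfib
    _ ≤ 2 * C * (2 * (a ^ α)⁻¹) * (3 * (a ^ t * X.card)) := by gcongr
    _ = 12 * C * a ^ (t - α) * X.card := by rw [Real.rpow_sub ha]; ring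

/-- A pair of points maximizing the `t`-density yields a ball on which a Frostman-type condition
holds. -/
theorem exists_frostman_ball {Y : Type*} [MetricSpace Y] (Λ : Finset Y) (hΛ : 2 ≤ Λ.card) {t : ℝ}
    (ht : 0 ≤ t) :
    ∃ z₀ ∈ Λ, ∃ z₁ ∈ Λ, z₁ ≠ z₀ ∧ ∀ z ∈ Λ, ∀ ρ > 0,
      ((Λ.filter fun x => dist x z ≤ ρ).card : ℝ) ≤
        max 1 ((ρ / dist z₁ z₀) ^ t * (Λ.filter fun x => dist x z₀ ≤ dist z₁ z₀).card) := by
  classical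
  have hne : Λ.offDiag.Nonempty := by
    obtain ⟨a, ha, b, hb, hab⟩ := Finset.one_lt_card.1 hΛ
    exact ⟨(a, b), Finset.mem_offDiag.2 ⟨ha, hb, hab⟩⟩
  obtain ⟨⟨z₀, z₁⟩, hz, hmax⟩ := Λ.offDiag.exists_max_image
    (fun p => ((Λ.filter fun x => dist x p.1 ≤ dist p.2 p.1).card : ℝ) / dist p.2 p.1 ^ t) hne
  rw [Finset.mem_offDiag] at hz
  refine ⟨z₀, hz.1, z₁, hz.2.1, fun h => hz.2.2 h.symm, fun z hzΛ ρ hρ => ?_⟩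
  set B := Λ.filter fun x => dist x z ≤ ρ with hB
  have hzB : z ∈ B := Finset.mem_filter.2 ⟨hzΛ, by simpa using hρ.le⟩
  obtain ⟨w, hw, hwmax⟩ := B.exists_max_image (fun x => dist x z) ⟨z, hzB⟩
  have hwB := Finset.mem_filter.1 hw
  by_cases hwz : w = z
  · have hsub : B ⊆ {z} := by
      intro x hx
      have := hwmax x hx
      rw [hwz, dist_self] at this
      exact Finset.mem_singleton.2 (dist_le_zero.1 this)
    refine le_max_of_le_left ?_
    exact_mod_cast (Finset.card_le_card hsub).trans_eq (Finset.card_singleton z)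
  · refine le_max_of_le_right ?_
    have hm := hmax (z, w) (Finset.mem_offDiag.2 ⟨hzΛ, hwB.1, fun h => hwz h.symm⟩)
    have hpw : 0 < dist w z := dist_pos.2 hwz
    have hpz : 0 < dist z₁ z₀ := dist_pos.2 fun h => hz.2.2 h.symm
    have hsub : B ⊆ Λ.filter fun x => dist x z ≤ dist w z := fun x hx =>
      Finset.mem_filter.2 ⟨(Finset.mem_filter.1 hx).1, hwmax x hx⟩
    simp only at hm
    rw [div_le_iff₀ (by positivity)] at hm
    refine (Nat.cast_le.2 (Finset.card_le_card hsub)).trans (hm.trans ?_)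
    rw [Real.div_rpow hρ.le hpz.le, div_mul_eq_mul_div, div_mul_eq_mul_div,
      mul_comm (ρ ^ t)]
    gcongr
    exact hwB.2

/-- A set that is not efficiently covered contains a large separated subset. -/
theorem exists_separated_of_not_coverBound {Y : Type*} [PseudoMetricSpace Y] {E : Set Y} {t C : ℝ}
    (h : ¬ CoverBound E t C) :
    ∃ x ∈ E, ∃ r R : ℝ, 0 < r ∧ r < R ∧ ∃ Λ : Finset Y, (Λ : Set Y) ⊆ E ∩ closedBall x R ∧
      (∀ y ∈ Λ, ∀ z ∈ Λ, y ≠ z → r / 2 < dist y z) ∧ C * (R / r) ^ t < Λ.card := by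
  classical
  unfold CoverBound at h
  push Not at h
  obtain ⟨x, hx, r, R, hr, hrR, hcov⟩ := h
  refine ⟨x, hx, r, R, hr, hrR, ?_⟩
  by_contra! hcon
  set T : Set ℕ := {m | ∃ Λ : Finset Y, (Λ : Set Y) ⊆ E ∩ closedBall x R ∧
      (∀ y ∈ Λ, ∀ z ∈ Λ, y ≠ z → r / 2 < dist y z) ∧ Λ.card = m} with hT
  have hbdd : BddAbove T := by
    refine ⟨⌊C * (R / r) ^ t⌋₊, ?_⟩
    rintro m ⟨Λ, h1, h2, rfl⟩
    exact Nat.le_floor (hcon Λ h1 h2)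
  have hTne : T.Nonempty := ⟨0, ∅, by simp, by simp, rfl⟩
  obtain ⟨Λ, h1, h2, hcard⟩ := Nat.sSup_mem hTne hbdd
  have hcover : E ∩ closedBall x R ⊆ ⋃ U ∈ Λ.image fun y => closedBall y (r / 2), U := by
    intro z hz
    by_contra hzn
    simp only [Finset.mem_image, iUnion_exists, biUnion_and', iUnion_iUnion_eq_right, mem_iUnion,
      mem_closedBall, exists_prop, not_exists, not_and, not_le] at hzn
    have hzΛ : z ∉ Λ := fun hzm => by
      have := hzn z hzm
      rw [dist_self] at this
      linarith
    have hmem : Λ.card + 1 ∈ T := by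
      refine ⟨insert z Λ, ?_, ?_, Finset.card_insert_of_notMem hzΛ⟩
      · rw [Finset.coe_insert]; exact insert_subset hz h1
      · intro a ha b hb hab
        rcases Finset.mem_insert.1 ha with rfl | ha'
        · rcases Finset.mem_insert.1 hb with rfl | hb'
          · exact absurd rfl hab
          · exact hzn b hb'
        · rcases Finset.mem_insert.1 hb with rfl | hb'
          · rw [dist_comm]; exact hzn a ha'
          · exact h2 a ha' b hb' hab
    have := le_csSup hbdd hmem
    omega
  have hlt := hcov _ hcover (by
    intro U hU
    obtain ⟨y, _, rfl⟩ := Finset.mem_image.1 hU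
    refine Metric.ediam_le_of_forall_dist_le fun a ha b hb => ?_
    have := dist_triangle_right a b y
    rw [mem_closedBall] at ha hb
    linarith)
  have hle := hcon Λ h1 h2
  have : ((Λ.image fun y => closedBall y (r / 2)).card : ℝ) ≤ Λ.card := by
    exact_mod_cast Finset.card_image_le
  linarith

/-- If every pin is good at one of finitely many stages, then at some stage there are two good pins
whose directions are neither too close nor too far apart. -/
theorem CoverBound.exists_good_pair {D : Set ℝ} {α C : ℝ} (h : CoverBound D α C)
    (hC : 0 < C) {t : ℝ} (hαt : α < t) (ht : t ≤ 1) {X S₀ : Finset (Euc 2)}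
    (hX : X.Nonempty) (hSX : S₀ ⊆ X) (hcard : (X.card : ℝ) / 2 ≤ S₀.card) {R : ℝ} (hR : 0 < R)
    (hF : ∀ z ∈ X, ∀ ρ > 0, ((X.filter fun x => dist x z ≤ ρ).card : ℝ) ≤
      max 1 ((ρ / R) ^ t * X.card))
    {y : Euc 2} (hpos : ∀ x ∈ S₀, 0 < dist y x) (hle : ∀ x ∈ S₀, dist y x ≤ 2 * R)
    (hD : ∀ x ∈ S₀, dist y x ∈ D) {K : ℕ} {a b m : ℕ → ℝ} (ha : ∀ k, 0 < a k)
    (hb : ∀ k, 0 < b k) (hb1 : ∀ k, b k ≤ 1) (hm0 : m 0 = 1 / 2) (hm : ∀ k, 0 < m k)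
    (hmsucc : ∀ k, m (k + 1) = m k / (2 * (4 / a k + 2) ^ 2))
    (hbm : ∀ k, 12 * C * b k ^ (t - α) ≤ m (k + 1))
    (hbX : ∀ k < K, 1 ≤ b k ^ t * X.card) {good : ℕ → Euc 2 → Prop}
    (hgood : ∀ x ∈ S₀, ∃ k < K, good k x) :
    ∃ k < K, ∃ x ∈ S₀, ∃ x' ∈ S₀, good k x ∧ good k x' ∧ b k ≤ ‖pinDir y x' - pinDir y x‖ ∧
      ‖pinDir y x' - pinDir y x‖ ≤ a k := by
  classical
  by_contra! hcon
  have hX0 : (0 : ℝ) < X.card := by exact_mod_cast hX.card_pos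
  have key : ∀ k ≤ K, ∃ S ⊆ S₀, m k * X.card ≤ S.card ∧ ∀ x ∈ S, ∀ j < k, ¬ good j x := by
    intro k
    induction k with
    | zero => exact fun _ => ⟨S₀, subset_rfl, by rw [hm0]; linarith, by simp⟩
    | succ k ih =>
      intro hk
      obtain ⟨S, hSS, hSc, hSg⟩ := ih (by omega)
      have hmk := hm k
      have hSne : S.Nonempty := by
        rw [← Finset.card_pos]
        have : (0 : ℝ) < S.card := lt_of_lt_of_le (by positivity) hSc
        exact_mod_cast this
      obtain ⟨-, -, T, hTS, -, hTa, hTc⟩ := exists_large_part_of_small_diam hSne (pinDir y)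
        (ha k) (L := 2) (by norm_num) (by
          intro x hx x' hx' i
          refine (abs_coord_sub_le_dist _ _ i).trans ?_
          rw [dist_eq_norm]
          refine (norm_sub_le _ _).trans ?_
          rw [norm_pinDir (hpos x (hSS hx)), norm_pinDir (hpos x' (hSS hx'))]
          norm_num)
      have hTc' : 2 * (m (k + 1) * X.card) ≤ T.card := by
        have hak := ha k
        have hN : 0 < (4 / a k + 2) ^ 2 := by positivity
        rw [hmsucc]
        norm_num at hTc
        have h1 : m k * X.card ≤ (4 / a k + 2) ^ 2 * T.card := hSc.trans hTc
        have e : 2 * (m k / (2 * (4 / a k + 2) ^ 2) * X.card) =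
            m k * X.card / (4 / a k + 2) ^ 2 := by field_simp
        rw [e, div_le_iff₀ hN]
        linarith
      set G := T.filter fun x => good k x with hG
      have hGT : G ⊆ T := Finset.filter_subset _ _
      have hGS : G ⊆ S₀ := hGT.trans (hTS.trans hSS)
      have hGc := h.card_pins_in_arc_le hC hαt ht (hGS.trans hSX) hR hF
        (fun x hx => hpos x (hGS hx)) (fun x hx => hle x (hGS hx)) (fun x hx => hD x (hGS hx))
        (hb k) (by linarith [hb1 k]) (hbX k hk) (by
          intro x hx x' hx'
          by_contra! hlt
          have h1 := hcon k hk x' (hGS hx') x (hGS hx) (Finset.mem_filter.1 hx').2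
            (Finset.mem_filter.1 hx).2 hlt.le
          have h2 := hTa x (hGT hx) x' (hGT hx')
          rw [dist_eq_norm] at h2
          linarith)
      have hGc' : (G.card : ℝ) ≤ m (k + 1) * X.card := hGc.trans (by gcongr; exact hbm k)
      refine ⟨T \ G, Finset.sdiff_subset.trans (hTS.trans hSS), ?_, ?_⟩
      · rw [Finset.card_sdiff_of_subset hGT, Nat.cast_sub (Finset.card_le_card hGT)]
        linarith
      · intro x hx j hj
        rw [Finset.mem_sdiff] at hx
        rcases Nat.lt_succ_iff_lt_or_eq.1 hj with hj' | rfl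
        · exact hSg x (hTS hx.1) j hj'
        · exact fun hg => hx.2 (Finset.mem_filter.2 ⟨hx.1, hg⟩)
  obtain ⟨S, hSS, hSc, hSg⟩ := key K le_rfl
  have hmK := hm K
  have hSne : S.Nonempty := by
    rw [← Finset.card_pos]
    have : (0 : ℝ) < S.card := lt_of_lt_of_le (by positivity) hSc
    exact_mod_cast this
  obtain ⟨x, hx⟩ := hSne
  obtain ⟨k, hk, hg⟩ := hgood x (hSS hx)
  exact hSg x hx k hk hg

/-- Window sizes `H`, direction thresholds `b` and densities `m` used in the selection of pins. -/
theorem exists_selection_constants {C κ η : ℝ} (hC : 0 < C) (hκ : 0 < κ) (hη : 0 < η) :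
    ∃ H b m : ℕ → ℝ, (∀ k, 0 ≤ H k) ∧ (∀ k, 0 < b k) ∧ (∀ k, b k ≤ 1) ∧ m 0 = 1 / 2 ∧
      (∀ k, 0 < m k) ∧ (∀ k, m (k + 1) = m k / (2 * (4 / (η / (2 * H k + 1)) + 2) ^ 2)) ∧
      (∀ k, 12 * C * b k ^ κ ≤ m (k + 1)) ∧ ∀ k, H (k + 1) = H k + 2 / b k := by
  set Nn : ℝ → ℝ := fun H => 2 * (4 / (η / (2 * H + 1)) + 2) ^ 2 with hNn
  set bf : ℝ × ℝ → ℝ := fun p => min 1 ((p.2 / Nn p.1 / (12 * C)) ^ κ⁻¹) with hbf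
  set u : ℕ → ℝ × ℝ := fun n => Nat.rec (0, 1 / 2)
    (fun _ p => (p.1 + 2 / bf p, p.2 / Nn p.1)) n with hu
  have husucc : ∀ k, u (k + 1) = ((u k).1 + 2 / bf (u k), (u k).2 / Nn (u k).1) := fun k => rfl
  have hbpos : ∀ p : ℝ × ℝ, 0 ≤ p.1 → 0 < p.2 → 0 < bf p := by
    intro p h1 h2
    simp only [hbf, hNn]
    positivity
  have hinv : ∀ k, 0 ≤ (u k).1 ∧ 0 < (u k).2 := by
    intro k
    induction k with
    | zero => simp [hu]
    | succ k ih =>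
      have h1 := hbpos _ ih.1 ih.2
      obtain ⟨h2, h3⟩ := ih
      rw [husucc]
      simp only [hNn]
      constructor <;> positivity
  refine ⟨fun k => (u k).1, fun k => bf (u k), fun k => (u k).2, fun k => (hinv k).1,
    fun k => hbpos _ (hinv k).1 (hinv k).2, fun k => min_le_left _ _, rfl, fun k => (hinv k).2,
    fun k => rfl, fun k => ?_, fun k => rfl⟩
  have h0 := hbpos _ (hinv k).1 (hinv k).2
  have h1 := (hinv (k + 1)).2
  have h2 : bf (u k) ≤ ((u (k + 1)).2 / (12 * C)) ^ κ⁻¹ := min_le_right _ _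
  have h3 : bf (u k) ^ κ ≤ (u (k + 1)).2 / (12 * C) := by
    calc bf (u k) ^ κ ≤ (((u (k + 1)).2 / (12 * C)) ^ κ⁻¹) ^ κ :=
          Real.rpow_le_rpow h0.le h2 hκ.le
      _ = _ := Real.rpow_inv_rpow (by positivity) hκ.ne'
  rw [le_div_iff₀ (by positivity)] at h3
  simp only
  linarith

/-- The presence of two transversal pins, both stable on average, bounds the size of the set. -/
theorem CoverBound.card_le_of_good_pins {D : Set ℝ} {α C : ℝ} (h : CoverBound D α C)
    (hC : 0 < C) {t : ℝ} (hαt : α < t) {M Q : ℕ} (hM : 1 ≤ M)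
    (hMC : 2 * C * (3 * M : ℝ) ^ α < M + 1) (hQ : 2 ≤ Q)
    (hQC : 16 * C ≤ (Q : ℝ) ^ ((t - α) / 2)) {P : Finset (Euc 2)} {R : ℝ} (hR : 0 < R)
    {y : Euc 2} (hP : ∀ z ∈ P, dist z y ≤ R) {r : ℝ} (hr : 0 < r)
    (hsep : ∀ x ∈ P, ∀ y ∈ P, x ≠ y → r / 2 < dist x y) {n : ℕ} (hn : R ≤ Q ^ (n + 1) * r)
    {x x' : Euc 2} (hD : ∀ z ∈ P, dist z x ∈ D) {σ : ℝ}
    (hx : 0 < dist y x) (hx' : 0 < dist y x') (hρ : R ≤ dist y x / 2) (hρ' : R ≤ dist y x' / 2)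
    (hσ : 4 * R / dist y x ≤ σ) (hσ' : 4 * R / dist y x' ≤ σ)
    {φ : ℝ} (hφd : ‖pinDir y x' - pinDir y x‖ = φ) (hφ0 : 0 < φ) (hφ : φ ≤ 1 / 4)
    (hσφ : 16 * σ ≤ φ) {H : ℕ → ℝ} {k : ℕ} (hH : 0 ≤ H k) (hφH : 2 * φ * H k ≤ 1 / (16 * Q))
    (hHH' : 2 / φ ≤ H (k + 1) - H k)
    (hs : (unstableCount P (fun z => dist z x) H (6 * M + 10) (1 / (16 * Q))
      (fun l => R / Q ^ l) n k : ℝ) ≤ (t - α) / 16 * n * P.card)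
    (hs' : (unstableCount P (fun z => dist z x') H (6 * M + 10) (1 / (16 * Q))
      (fun l => R / Q ^ l) n k : ℝ) ≤ (t - α) / 16 * n * P.card) :
    (P.card : ℝ) ≤ 2 * (8 * C * (8 * Q) ^ α) * (4 * Q / φ + 2) ^ 2 * ((Q : ℝ) ^ t) ^ n := by
  classical
  have hQ2 : (2 : ℝ) ≤ Q := by exact_mod_cast hQ
  have hQ0 : (0 : ℝ) < Q := by linarith
  have hgeo : ∀ z ∈ P, ∀ z' ∈ P, _ := fun z hz z' hz' =>
    abs_dist_sub_dist_bounds hx hx' hρ hρ' hσ hσ' (hP z hz) (hP z' hz') (by rwa [hφd])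
      (by rwa [hφd])
  rw [hφd] at hgeo
  have hmain := h.card_le_of_stable_pair hC hM hMC hQ (P := P) (f := fun z => dist z x)
    (f' := fun z => dist z x') hD
    (fun z z' => abs_dist_sub_le z z' x) hR hP hφ0 hφ
    (fun z hz z' hz' => (hgeo z hz z' hz').1) (fun z hz z' hz' => (hgeo z hz z' hz').2)
    hH hφH hHH' hr hsep hn
    (good := fun l z => WindowStable P (fun z => dist z x) (H k) (H (k + 1)) (6 * M + 10)
        (1 / (16 * Q)) (R / Q ^ l) z ∧
      WindowStable P (fun z => dist z x') (H k) (H (k + 1)) (6 * M + 10)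
        (1 / (16 * Q)) (R / Q ^ l) z)
    (fun l z hz => hz) (θ := (t - α) / 4) (by linarith) (by
      have hle : ∑ z ∈ P, ((Finset.range n).filter fun l =>
          ¬ (WindowStable P (fun z => dist z x) (H k) (H (k + 1)) (6 * M + 10)
            (1 / (16 * Q)) (R / Q ^ l) z ∧
          WindowStable P (fun z => dist z x') (H k) (H (k + 1)) (6 * M + 10)
            (1 / (16 * Q)) (R / Q ^ l) z)).card ≤
          unstableCount P (fun z => dist z x) H (6 * M + 10) (1 / (16 * Q))
            (fun l => R / Q ^ l) n k +
          unstableCount P (fun z => dist z x') H (6 * M + 10) (1 / (16 * Q))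
            (fun l => R / Q ^ l) n k := by
        unfold unstableCount
        rw [← Finset.sum_add_distrib]
        refine Finset.sum_le_sum fun z _ => ?_
        refine (Finset.card_le_card ?_).trans (Finset.card_union_le _ _)
        intro l hl
        rw [Finset.mem_filter] at hl
        rw [Finset.mem_union, Finset.mem_filter, Finset.mem_filter]
        tauto
      have hle' := (Nat.cast_le (α := ℝ)).2 hle
      push_cast at hle'
      linarith)
  refine hmain.trans ?_
  rw [Real.rpow_natCast]
  gcongr
  calc 16 * C * (Q : ℝ) ^ α * ((Q : ℝ) ^ 2) ^ ((t - α) / 4)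
      ≤ (Q : ℝ) ^ ((t - α) / 2) * (Q : ℝ) ^ α * ((Q : ℝ) ^ 2) ^ ((t - α) / 4) := by gcongr
    _ = (Q : ℝ) ^ t := by
        rw [← Real.rpow_natCast, ← Real.rpow_mul hQ0.le, ← Real.rpow_add hQ0, ← Real.rpow_add hQ0]
        congr 1
        push_cast
        ring

theorem exists_nat_le_rpow {κ : ℝ} (hκ : 0 < κ) (c : ℝ) (N : ℕ) :
    ∃ Q : ℕ, N ≤ Q ∧ c < (Q : ℝ) ^ κ := by
  have h := ((tendsto_rpow_atTop hκ).comp tendsto_natCast_atTop_atTop).eventually_gt_atTop c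
  obtain ⟨Q, hQ, hQN⟩ := (h.and (eventually_ge_atTop N)).exists
  exact ⟨Q, hQN, hQ⟩

theorem exists_nat_mul_rpow_lt {α : ℝ} (hα : α < 1) {C : ℝ} :
    ∃ M : ℕ, 1 ≤ M ∧ 2 * C * (3 * M : ℝ) ^ α < M + 1 := by
  obtain ⟨M, hM, hlt⟩ := exists_nat_le_rpow (κ := 1 - α) (by linarith) (2 * C * 3 ^ α) 1
  have hM0 : (0 : ℝ) < M := by exact_mod_cast hM
  refine ⟨M, hM, ?_⟩
  rw [Real.rpow_sub hM0, Real.rpow_one, lt_div_iff₀ (by positivity)] at hlt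
  rw [Real.mul_rpow (by norm_num) hM0.le]
  linarith

theorem exists_pos_rpow_le {t c : ℝ} (ht : 0 < t) (hc : 0 < c) :
    ∃ β : ℝ, 0 < β ∧ β ≤ 1 ∧ β ^ t ≤ c := by
  refine ⟨min 1 (c ^ t⁻¹), by positivity, min_le_left _ _, ?_⟩
  calc (min 1 (c ^ t⁻¹)) ^ t ≤ (c ^ t⁻¹) ^ t :=
        Real.rpow_le_rpow (by positivity) (min_le_right _ _) ht.le
    _ = c := Real.rpow_inv_rpow hc.le ht.ne'

theorem exists_pos_forall_lt_le (b : ℕ → ℝ) (hb : ∀ k, 0 < b k) (K : ℕ) :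
    ∃ c : ℝ, 0 < c ∧ c ≤ 1 ∧ ∀ k < K, c ≤ b k := by
  induction K with
  | zero => exact ⟨1, one_pos, le_rfl, by simp⟩
  | succ K ih =>
    obtain ⟨c, hc, hc1, hcb⟩ := ih
    refine ⟨min c (b K), lt_min hc (hb K), (min_le_left _ _).trans hc1, fun k hk => ?_⟩
    rcases Nat.lt_succ_iff_lt_or_eq.1 hk with hk' | rfl
    · exact (min_le_left _ _).trans (hcb k hk')
    · exact min_le_right _ _

theorem one_quarter_le_rpow {u t : ℝ} (hu : 1 / 4 ≤ u) (ht0 : 0 ≤ t) (ht : t ≤ 1) :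
    1 / 4 ≤ u ^ t := by
  calc (1 / 4 : ℝ) = (1 / 4) ^ (1 : ℝ) := (Real.rpow_one _).symm
    _ ≤ (1 / 4) ^ t := Real.rpow_le_rpow_of_exponent_ge (by norm_num) (by norm_num) ht
    _ ≤ u ^ t := Real.rpow_le_rpow (by norm_num) hu ht0

theorem exists_scale_count {Q : ℕ} (hQ : 2 ≤ Q) {u v t : ℝ} (hv0 : 0 < v) (hvu : v ≤ u)
    (hu : 1 / 4 ≤ u) (ht0 : 0 ≤ t) (ht : t ≤ 1) :
    ∃ n : ℕ, v ≤ (Q : ℝ) ^ (n + 1) ∧ ((Q : ℝ) ^ t) ^ n ≤ 4 * u ^ t := by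
  have hQ2 : (2 : ℝ) ≤ Q := by exact_mod_cast hQ
  rcases le_or_gt 1 v with h1 | h1
  · obtain ⟨n, hn, hn'⟩ := exists_nat_pow_near h1 (by linarith : (1 : ℝ) < Q)
    refine ⟨n, hn'.le, ?_⟩
    have : ((Q : ℝ) ^ t) ^ n = ((Q : ℝ) ^ n) ^ t := by
      rw [← Real.rpow_natCast, ← Real.rpow_natCast, ← Real.rpow_mul (by positivity),
        ← Real.rpow_mul (by positivity), mul_comm]
    rw [this]
    calc ((Q : ℝ) ^ n) ^ t ≤ u ^ t := Real.rpow_le_rpow (by positivity) (hn.trans hvu) ht0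
      _ ≤ 4 * u ^ t := by linarith [Real.rpow_nonneg (by linarith : (0 : ℝ) ≤ u) t]
  · refine ⟨0, by simpa using by linarith, ?_⟩
    have := one_quarter_le_rpow hu ht0 ht
    simpa using by linarith

set_option maxHeartbeats 1000000 in
/-- If the distance set of a planar set `F` satisfies the covering condition with exponent `α`,
then `F` satisfies it with every exponent `t ∈ (α, 1]`. -/
theorem CoverBound.exists_coverBound_of_distSet {F : Set (Euc 2)} {α C t : ℝ}
    (h : CoverBound (distSet F) α C) (hC : 0 < C) (hα0 : 0 ≤ α) (hαt : α < t) (ht : t ≤ 1) :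
    ∃ C' : ℝ, 0 < C' ∧ CoverBound F t C' := by
  classical
  have hκ : 0 < t - α := by linarith
  have ht0 : 0 < t := by linarith
  obtain ⟨M, hM, hMC⟩ := exists_nat_mul_rpow_lt (α := α) (by linarith) (C := C)
  obtain ⟨Q, hQ, hQC⟩ := exists_nat_le_rpow (κ := (t - α) / 2) (by linarith) (16 * C) 2
  have hQ2 : (2 : ℝ) ≤ Q := by exact_mod_cast hQ
  have hQ0 : (0 : ℝ) < Q := by linarith
  set η : ℝ := 1 / (16 * Q) with hη
  have hη0 : 0 < η := by positivity
  have hη4 : η ≤ 1 / 4 := by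
    rw [hη]; gcongr; linarith
  obtain ⟨H, b, m, hH0, hb0, hb1, hm0, hm, hmsucc, hbm, hHsucc⟩ :=
    exists_selection_constants hC hκ hη0
  set W : ℝ := 6 * M + 10 with hW
  obtain ⟨K, hK⟩ := exists_nat_ge ((2 * W / η + 2) / ((t - α) / 16))
  have hK0 : 0 < K := by
    have : (0 : ℝ) < K := lt_of_lt_of_le (by positivity) hK
    exact_mod_cast this
  rw [div_le_iff₀ (by linarith)] at hK
  obtain ⟨c, hc0, hc1, hcb⟩ := exists_pos_forall_lt_le b hb0 K
  obtain ⟨β, hβ0, hβ1, hβ⟩ := exists_pos_rpow_le ht0 (by norm_num : (0 : ℝ) < 1 / 2)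
  set τ : ℝ := β * c / 64 with hτ
  have hτ0 : 0 < τ := by positivity
  have hτβ : τ ≤ β / 64 := by rw [hτ]; gcongr; nlinarith
  set V : ℝ := 2 * (8 * C * (8 * Q) ^ α) * (4 * Q / c + 2) ^ 2 with hV
  have hV0 : 0 < V := by positivity
  set N : ℝ := (4 / τ + 2) ^ 2 with hN
  have hN0 : 0 < N := by positivity
  set C' : ℝ := 4 * V * N + 8 + 4 * (c ^ t)⁻¹ + 1 with hC'
  have hct : 0 < c ^ t := by positivity
  have hC'0 : 0 < C' := by positivity
  have hC'8 : 8 ≤ C' := by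
    have : 0 < 4 * V * N + 4 * (c ^ t)⁻¹ := by positivity
    linarith
  have hC'c : 4 * (c ^ t)⁻¹ ≤ C' := by
    have : 0 < 4 * V * N := by positivity
    linarith
  have hC'V : 4 * V * N < C' := by
    have : 0 < 4 * (c ^ t)⁻¹ := by positivity
    linarith
  refine ⟨C', hC'0, ?_⟩
  by_contra hcov
  obtain ⟨x₁, hx₁, r, R, hr, hrR, Λ, hΛF, hsep, hΛc⟩ := exists_separated_of_not_coverBound hcov
  have hR0 : 0 < R := by linarith
  have hΛ8 : (8 : ℝ) < Λ.card := by
    have h1 : (1 : ℝ) ≤ (R / r) ^ t :=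
      Real.one_le_rpow (by rw [le_div_iff₀ hr]; linarith) ht0.le
    have := mul_le_mul hC'8 h1 zero_le_one hC'0.le
    linarith
  have hΛ2 : 2 ≤ Λ.card := by
    have : (2 : ℝ) ≤ Λ.card := by linarith
    exact_mod_cast this
  obtain ⟨z₀, hz₀, z₁, hz₁, hz₁₀, hfro⟩ := exists_frostman_ball Λ hΛ2 ht0.le
  set ϱ := dist z₁ z₀ with hϱ
  have hϱr : r / 2 < ϱ := hsep z₁ hz₁ z₀ hz₀ hz₁₀
  have hϱ0 : 0 < ϱ := by linarith
  set X := Λ.filter fun x => dist x z₀ ≤ ϱ with hX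
  have hXΛ : X ⊆ Λ := Finset.filter_subset _ _
  have hz₀X : z₀ ∈ X := Finset.mem_filter.2 ⟨hz₀, by simpa using hϱ0.le⟩
  have hXne : X.Nonempty := ⟨z₀, hz₀X⟩
  set u : ℝ := ϱ / (2 * r) with hu
  have hu0 : 0 < u := by positivity
  have hu4 : 1 / 4 ≤ u := by
    rw [hu, le_div_iff₀ (by positivity)]; linarith
  have hXc : C' * u ^ t ≤ X.card := by
    have hall : (Λ.filter fun x => dist x z₀ ≤ 2 * R) = Λ := by
      refine Finset.filter_true_of_mem fun x hx => ?_
      have h1 := (hΛF hx).2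
      have h2 := (hΛF hz₀).2
      rw [mem_closedBall] at h1 h2
      exact (dist_triangle_right x z₀ x₁).trans (by linarith)
    have h1 := hfro z₀ hz₀ (2 * R) (by positivity)
    rw [hall] at h1
    have h2 : (Λ.card : ℝ) ≤ (2 * R / ϱ) ^ t * X.card := by
      rcases le_max_iff.1 h1 with h | h
      · linarith
      · exact h
    have h3 : C' * (R / r) ^ t ≤ (2 * R / ϱ) ^ t * X.card := hΛc.le.trans h2
    have h4 : (R / r) ^ t = (2 * R / ϱ) ^ t * u ^ t := by
      rw [← Real.mul_rpow (by positivity) (by positivity)]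
      congr 1
      rw [hu]; field_simp
    rw [h4] at h3
    have hp : 0 < (2 * R / ϱ) ^ t := by positivity
    refine le_of_mul_le_mul_left ?_ hp
    linarith
  have hut := one_quarter_le_rpow hu4 ht0.le ht
  have hX4 : C' / 4 ≤ X.card := by
    have := mul_le_mul_of_nonneg_left hut hC'0.le
    linarith
  have hX2 : (2 : ℝ) ≤ X.card := by linarith
  have hXct : 1 ≤ c ^ t * X.card := by
    have : (c ^ t)⁻¹ ≤ X.card := by linarith
    calc (1 : ℝ) = c ^ t * (c ^ t)⁻¹ := (mul_inv_cancel₀ hct.ne').symm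
      _ ≤ _ := by gcongr
  have hXd : ∀ x ∈ X, ∀ y ∈ X, dist x y ≤ 2 * ϱ := by
    intro x hx y hy
    have h1 := (Finset.mem_filter.1 hx).2
    have h2 := (Finset.mem_filter.1 hy).2
    exact (dist_triangle_right x y z₀).trans (by linarith)
  have hXF : ∀ z ∈ X, ∀ ρ > 0, ((X.filter fun x => dist x z ≤ ρ).card : ℝ) ≤
      max 1 ((ρ / ϱ) ^ t * X.card) := by
    intro z hz ρ hρ
    refine le_trans ?_ (hfro z (hXΛ hz) ρ hρ)
    exact_mod_cast Finset.card_le_card (Finset.filter_subset_filter _ hXΛ)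
  obtain ⟨y, hyX, P, hPX, hyP, hPd, hPc⟩ := exists_large_part_of_small_diam hXne
    (fun x : Euc 2 => x) (a := τ * ϱ) (L := 2 * ϱ) (by positivity) (by positivity)
    (fun x hx x' hx' i => (abs_coord_sub_le_dist x x' i).trans (hXd x hx x' hx'))
  have hPN : (X.card : ℝ) ≤ N * P.card := by
    refine hPc.trans_eq ?_
    have e : 2 * (2 * ϱ) / (τ * ϱ) = 4 / τ := by field_simp; norm_num
    rw [e]
  set S₀ := X.filter fun x => ¬ dist x y ≤ β * ϱ with hS₀
  have hS₀X : S₀ ⊆ X := Finset.filter_subset _ _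
  have hS₀far : ∀ x ∈ S₀, β * ϱ < dist y x := by
    intro x hx
    rw [dist_comm]
    exact not_le.1 (Finset.mem_filter.1 hx).2
  have hS₀c : (X.card : ℝ) / 2 ≤ S₀.card := by
    have h1 := Finset.card_filter_add_card_filter_not (s := X) (fun x => dist x y ≤ β * ϱ)
    have h1' : ((X.filter fun x => dist x y ≤ β * ϱ).card : ℝ) + S₀.card = X.card := by
      exact_mod_cast h1
    have h2 := hXF y hyX (β * ϱ) (by positivity)
    rw [mul_div_cancel_right₀ _ hϱ0.ne'] at h2
    have h3 : ((X.filter fun x => dist x y ≤ β * ϱ).card : ℝ) ≤ X.card / 2 :=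
      h2.trans (max_le (by linarith) (by
        have := mul_le_mul_of_nonneg_right hβ (Nat.cast_nonneg (α := ℝ) X.card)
        linarith))
    linarith
  have hXsub : ∀ x ∈ X, x ∈ F := fun x hx => (hΛF (hXΛ hx)).1
  have hPsep : ∀ x ∈ P, ∀ y ∈ P, x ≠ y → r / 2 < dist x y := fun x hx y hy =>
    hsep x (hXΛ (hPX hx)) y (hXΛ (hPX hy))
  obtain ⟨n, hn, hnu⟩ := exists_scale_count hQ (u := u) (v := τ * ϱ / r) (by positivity) (by
    rw [hu, div_le_div_iff₀ hr (by positivity)]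
    have : τ ≤ 1 / 2 := by linarith
    have hrϱ : 0 < ϱ * r := by positivity
    have := mul_le_mul_of_nonneg_right this hrϱ.le
    linarith) hu4 ht0.le ht
  rw [div_le_iff₀ hr] at hn
  have hHmono : Monotone H := monotone_nat_of_le_succ fun k => by
    rw [hHsucc]
    have := hb0 k
    have : 0 < 2 / b k := by positivity
    linarith
  obtain ⟨k, hk, x, hx, x', hx', hgx, hgx', hbφ, hφa⟩ := h.exists_good_pair hC hαt ht hXne hS₀X
    hS₀c hϱ0 hXF (y := y) (fun x hx => (by positivity : 0 < β * ϱ).trans (hS₀far x hx))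
    (fun x hx => hXd y hyX x (hS₀X hx))
    (fun x hx => ⟨y, hXsub y hyX, x, hXsub x (hS₀X hx), rfl⟩) (K := K)
    (a := fun k => η / (2 * H k + 1)) (fun k => by have := hH0 k; positivity) hb0 hb1 hm0 hm
    hmsucc hbm
    (fun k hk => hXct.trans (by
      gcongr
      exact hcb k hk))
    (good := fun k x => (unstableCount P (fun z => dist z x) H W η
      (fun l => τ * ϱ / Q ^ l) n k : ℝ) ≤ (t - α) / 16 * n * P.card)
    (fun x _ => exists_unstableCount_le P (fun z => dist z x) hHmono (by positivity) hη0
      (fun l => by positivity) hK0 hK)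
  set φ := ‖pinDir y x' - pinDir y x‖ with hφ
  have hbk := hb0 k
  have hHk := hH0 k
  have hφ0 : 0 < φ := hbk.trans_le hbφ
  have hcφ : c ≤ φ := (hcb k hk).trans hbφ
  have hφa' : φ * (2 * H k + 1) ≤ η := by
    rwa [le_div_iff₀ (by positivity)] at hφa
  have hφH : 0 ≤ φ * H k := mul_nonneg hφ0.le hHk
  have hφ4 : φ ≤ 1 / 4 := by linarith
  have hfar : ∀ p ∈ S₀, τ * ϱ ≤ dist y p / 2 ∧ 4 * (τ * ϱ) / dist y p ≤ c / 16 := by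
    intro p hp
    have h1 := hS₀far p hp
    have hβϱ : 0 < β * ϱ := by positivity
    constructor
    · have := mul_le_mul_of_nonneg_right hτβ hϱ0.le
      linarith
    · rw [div_le_iff₀ (by linarith)]
      calc 4 * (τ * ϱ) = c / 16 * (β * ϱ) := by rw [hτ]; ring
        _ ≤ c / 16 * dist y p := by gcongr
  have hfin := h.card_le_of_good_pins hC hαt hM hMC hQ hQC.le (P := P) (R := τ * ϱ) (by positivity)
    (y := y) (fun z hz => hPd z hz y hyP) hr hPsep hn (x := x) (x' := x')
    (fun z hz => ⟨z, hXsub z (hPX hz), x, hXsub x (hS₀X hx), rfl⟩) (σ := c / 16)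
    ((by positivity : 0 < β * ϱ).trans (hS₀far x hx))
    ((by positivity : 0 < β * ϱ).trans (hS₀far x' hx'))
    (hfar x hx).1 (hfar x' hx').1 (hfar x hx).2 (hfar x' hx').2 hφ.symm hφ0 hφ4
    (by linarith) hHk (by linarith)
    (by
      rw [hHsucc, add_sub_cancel_left]
      gcongr) hgx hgx'
  have hle : (P.card : ℝ) ≤ V * (4 * u ^ t) := by
    refine hfin.trans ?_
    rw [hV]
    gcongr
  have hut0 : 0 < u ^ t := by linarith
  have h1 : C' * u ^ t ≤ N * (V * (4 * u ^ t)) := hXc.trans (hPN.trans (by gcongr))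
  have h2 := mul_lt_mul_of_pos_right hC'V hut0
  linarith

theorem CoverBound.mono {X : Type*} [PseudoMetricSpace X] {E E' : Set X} {α C : ℝ}
    (h : CoverBound E' α C) (hE : E ⊆ E') : CoverBound E α C := by
  intro x hx r R hr hrR
  obtain ⟨𝒰, h1, h2, h3⟩ := h x (hE hx) r R hr hrR
  exact ⟨𝒰, (inter_subset_inter_left _ hE).trans h1, h2, h3⟩

theorem CoverBound.image_isometry {X Y : Type*} [PseudoMetricSpace X] [PseudoMetricSpace Y]
    {E : Set X} {α C : ℝ} (h : CoverBound E α C) {g : X → Y} (hg : Isometry g) :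
    CoverBound (g '' E) α C := by
  classical
  rintro _ ⟨x, hx, rfl⟩ r R hr hrR
  obtain ⟨𝒰, h1, h2, h3⟩ := h x hx r R hr hrR
  refine ⟨𝒰.image (g '' ·), ?_, ?_, ?_⟩
  · rintro _ ⟨⟨y, hy, rfl⟩, hyR⟩
    rw [mem_closedBall, hg.dist_eq] at hyR
    obtain ⟨U, hU, hyU⟩ := mem_iUnion₂.1 (h1 ⟨hy, hyR⟩)
    exact mem_iUnion₂.2 ⟨g '' U, Finset.mem_image_of_mem _ hU, mem_image_of_mem g hyU⟩
  · intro U hU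
    obtain ⟨U', hU', rfl⟩ := Finset.mem_image.1 hU
    exact (hg.ediam_image U').trans_le (h2 U' hU')
  · refine le_trans ?_ h3
    exact_mod_cast Finset.card_image_le

theorem CoverBound.assouadDim_le {X : Type*} [PseudoMetricSpace X] {E : Set X} {α C : ℝ}
    (h : CoverBound E α C) (hC : 0 < C) (hα : 0 ≤ α) : assouadDim E ≤ α :=
  csInf_le ⟨0, fun _ hβ => hβ.1⟩ ⟨hα, C, hC, h⟩

theorem CoverBound.le_assouadDim {X : Type*} [PseudoMetricSpace X] {E : Set X} {α C : ℝ}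
    (h : CoverBound E α C) (hC : 0 < C) (hα : 0 ≤ α) {s : ℝ}
    (hs : ∀ β C' : ℝ, 0 ≤ β → 0 < C' → CoverBound E β C' → s ≤ β) : s ≤ assouadDim E :=
  le_csInf ⟨α, hα, C, hC, h⟩ fun β ⟨hβ, C', hC', h'⟩ => hs β C' hβ hC' h'

theorem ediam_le_ofReal_of_dist_le {X : Type*} [PseudoMetricSpace X] {U : Set X} {r : ℝ}
    (h : ∀ x ∈ U, ∀ y ∈ U, dist x y ≤ r) : Metric.ediam U ≤ ENNReal.ofReal r := by
  refine Metric.ediam_le fun x hx y hy => ?_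
  rw [edist_dist]
  exact ENNReal.ofReal_le_ofReal (h x hx y hy)

/-- Every subset of the line satisfies the covering condition with exponent `1`. -/
theorem coverBound_one_real (E : Set ℝ) : CoverBound E 1 3 := by
  classical
  intro x _ r R hr hrR
  have hq : 1 < R / r := by rwa [one_lt_div hr]
  refine ⟨(Finset.range ⌈2 * (R / r)⌉₊).image fun i : ℕ =>
    Icc (x - R + i * r) (x - R + (i + 1) * r), ?_, ?_, ?_⟩
  · rintro y ⟨-, hy⟩
    rw [mem_closedBall, Real.dist_eq, abs_le] at hy
    have hy0 : 0 ≤ (y - (x - R)) / r := div_nonneg (by linarith) hr.le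
    have hyr : (y - (x - R)) / r * r = y - (x - R) := div_mul_cancel₀ _ hr.ne'
    have hy2 : (y - (x - R)) / r ≤ 2 * (R / r) := by
      rw [← mul_div_assoc]; gcongr; linarith
    obtain ⟨i, hi, h1, h2⟩ : ∃ i : ℕ, i < ⌈2 * (R / r)⌉₊ ∧ (i : ℝ) ≤ (y - (x - R)) / r ∧
        (y - (x - R)) / r ≤ i + 1 := by
      refine ⟨⌈(y - (x - R)) / r⌉₊ - 1, ?_, ?_, ?_⟩
      · have h1 : ⌈(y - (x - R)) / r⌉₊ ≤ ⌈2 * (R / r)⌉₊ := Nat.ceil_mono hy2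
        have h2 : 0 < ⌈2 * (R / r)⌉₊ := Nat.ceil_pos.2 (by linarith)
        omega
      · rcases Nat.eq_zero_or_pos ⌈(y - (x - R)) / r⌉₊ with h | h
        · simpa [h] using hy0
        · have := Nat.ceil_lt_add_one hy0
          rw [Nat.cast_sub h]; push_cast; linarith
      · rcases Nat.eq_zero_or_pos ⌈(y - (x - R)) / r⌉₊ with h | h
        · have := Nat.ceil_eq_zero.1 h
          simp only [h]; norm_num; linarith
        · have := Nat.le_ceil ((y - (x - R)) / r)
          rw [Nat.cast_sub h]; push_cast; linarith
    refine mem_iUnion₂.2 ⟨_, Finset.mem_image_of_mem _ (Finset.mem_range.2 hi), ?_, ?_⟩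
    · have := mul_le_mul_of_nonneg_right h1 hr.le
      linarith
    · have := mul_le_mul_of_nonneg_right h2 hr.le
      linarith
  · intro U hU
    obtain ⟨i, -, rfl⟩ := Finset.mem_image.1 hU
    refine ediam_le_ofReal_of_dist_le fun y hy z hz => ?_
    rw [Real.dist_eq, abs_le]
    constructor <;> linarith [hy.1, hy.2, hz.1, hz.2]
  · rw [Real.rpow_one]
    calc _ ≤ (⌈2 * (R / r)⌉₊ : ℝ) := by
          exact_mod_cast Finset.card_image_le.trans (Finset.card_range _).le
      _ ≤ 2 * (R / r) + 1 := (Nat.ceil_lt_add_one (by linarith)).le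
      _ ≤ 3 * (R / r) := by linarith

/-- For planar sets of Assouad dimension at least `s`, where `s ≤ 1`, the distance set has Assouad
dimension at least `s`. -/
theorem le_assouadDim_distSet {F : Set (Euc 2)} {s : ℝ} (hs : s ≤ 1) (hF : s ≤ assouadDim F) :
    s ≤ assouadDim (distSet F) := by
  refine (coverBound_one_real _).le_assouadDim (by norm_num) zero_le_one fun α C hα hC h => ?_
  by_contra! hαs
  obtain ⟨C', hC', h'⟩ := h.exists_coverBound_of_distSet hC hα (t := (α + s) / 2) (by linarith)
    (by linarith)
  have := h'.assouadDim_le hC' (by linarith)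
  linarith

/-- The natural numbers all of whose base `b` digits are less than `N`. -/
def digitSet (b N : ℕ) : Set ℕ := {m | ∀ i, m / b ^ i % b < N}

/-- The integer differences of elements of `digitSet b N`. -/
def digitDiff (b N : ℕ) : Set ℤ := {m | ∃ a ∈ digitSet b N, ∃ a' ∈ digitSet b N, m = a - a'}

theorem zero_mem_digitSet {b N : ℕ} (hN : 0 < N) : 0 ∈ digitSet b N := fun i => by simpa using hN

theorem div_pow_mem_digitSet {b N m : ℕ} (hm : m ∈ digitSet b N) (j : ℕ) :
    m / b ^ j ∈ digitSet b N := fun i => by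
  rw [Nat.div_div_eq_div_mul, ← pow_add]; exact hm _

theorem mul_add_mem_digitSet {b N m c : ℕ} (hm : m ∈ digitSet b N) (hc : c < N) (hN : N ≤ b) :
    b * m + c ∈ digitSet b N := by
  have hcb : c < b := hc.trans_le hN
  intro i
  cases i with
  | zero => simpa [Nat.mod_eq_of_lt hcb] using hc
  | succ i =>
    rw [pow_succ', ← Nat.div_div_eq_div_mul, Nat.mul_add_div (by omega), Nat.div_eq_of_lt hcb,
      add_zero]
    exact hm i

theorem exists_finset_digitSet {b N : ℕ} (hN0 : 0 < N) (hN : N ≤ b) (k : ℕ) :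
    ∃ S : Finset ℕ, (∀ m ∈ S, m ∈ digitSet b N ∧ m < b ^ k) ∧ S.card = N ^ k := by
  induction k with
  | zero => exact ⟨{0}, by simpa using zero_mem_digitSet hN0, by simp⟩
  | succ k ih =>
    obtain ⟨S, hS, hSc⟩ := ih
    refine ⟨(S ×ˢ Finset.range N).image fun p => b * p.1 + p.2, ?_, ?_⟩
    · intro m hm
      obtain ⟨⟨m, c⟩, hp, rfl⟩ := Finset.mem_image.1 hm
      rw [Finset.mem_product, Finset.mem_range] at hp
      obtain ⟨h1, h2⟩ := hS m hp.1
      refine ⟨mul_add_mem_digitSet h1 hp.2 hN, ?_⟩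
      have hc : c < b := hp.2.trans_le hN
      calc b * m + c < b * (m + 1) := by rw [mul_add]; omega
        _ ≤ b * b ^ k := Nat.mul_le_mul_left _ h2
        _ = b ^ (k + 1) := (pow_succ' b k).symm
    · rw [Finset.card_image_of_injOn, Finset.card_product, hSc, Finset.card_range, pow_succ]
      rintro ⟨m, c⟩ hp ⟨m', c'⟩ hp' heq
      simp only [Finset.coe_product, Finset.coe_range, mem_prod, mem_Iio] at hp hp'
      have hc : c < b := hp.2.trans_le hN
      have hc' : c' < b := hp'.2.trans_le hN
      have hb : 0 < b := by omega
      dsimp only at heq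
      have h1 : m = m' := by
        have := congrArg (· / b) heq
        simpa [Nat.mul_add_div hb, Nat.div_eq_of_lt hc, Nat.div_eq_of_lt hc'] using this
      subst h1
      simpa using heq

/-- The size of `digitDiff b N` in an interval of length comparable to `b ^ k`. -/
theorem card_digitDiff_le {b N : ℕ} (hb : 2 ≤ b) (k : ℕ) (x : ℝ) (S : Finset ℤ)
    (hS : ∀ m ∈ S, m ∈ digitDiff b N ∧ |(m : ℝ) - x| ≤ b ^ k + 2) :
    S.card ≤ 7 * (2 * N) ^ k := by
  classical
  have hb2 : (2 : ℝ) ≤ b := by exact_mod_cast hb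
  induction k generalizing x S with
  | zero =>
    have hsub : S ⊆ Finset.Icc ⌈x - 3⌉ (⌈x - 3⌉ + 6) := by
      intro m hm
      have h := abs_le.1 (hS m hm).2
      rw [pow_zero] at h
      have h3 := Int.le_ceil (x - 3)
      rw [Finset.mem_Icc]
      refine ⟨Int.ceil_le.2 (by linarith), ?_⟩
      have : (m : ℝ) ≤ ((⌈x - 3⌉ + 6 : ℤ) : ℝ) := by push_cast; linarith
      exact_mod_cast this
    calc S.card ≤ _ := Finset.card_le_card hsub
      _ ≤ 7 * (2 * N) ^ 0 := by rw [Int.card_Icc, pow_zero]; omega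
  | succ k ih =>
    have key : ∀ m ∈ S, ∃ p : ℤ × ℤ, m = b * p.1 + p.2 ∧ p.1 ∈ digitDiff b N ∧
        |((p.1 : ℤ) : ℝ) - x / b| ≤ b ^ k + 2 ∧ p.2 ∈ Finset.Ioo (-N : ℤ) N := by
      intro m hm
      obtain ⟨⟨a, ha, a', ha', rfl⟩, hx⟩ := hS m hm
      have h0 := ha 0
      have h0' := ha' 0
      simp only [pow_zero, Nat.div_one] at h0 h0'
      have e : (b : ℤ) * (a / b : ℕ) + (a % b : ℕ) = a := by exact_mod_cast Nat.div_add_mod a b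
      have e' : (b : ℤ) * (a' / b : ℕ) + (a' % b : ℕ) = a' := by
        exact_mod_cast Nat.div_add_mod a' b
      have hl : a % b < b := Nat.mod_lt _ (by omega)
      have hl' : a' % b < b := Nat.mod_lt _ (by omega)
      refine ⟨((a / b : ℕ) - (a' / b : ℕ), (a % b : ℕ) - (a' % b : ℕ)), ?_, ?_, ?_, ?_⟩
      · linear_combination -e + e'
      · exact ⟨_, by simpa using div_pow_mem_digitSet ha 1, _,
          by simpa using div_pow_mem_digitSet ha' 1, rfl⟩
      · generalize a / b = u at *
        generalize a' / b = u' at *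
        generalize a % b = v at *
        generalize a' % b = v' at *
        rw [← e, ← e'] at hx
        push_cast at hx ⊢
        have hv : (v : ℝ) ≤ b := by exact_mod_cast hl.le
        have hv' : (v' : ℝ) ≤ b := by exact_mod_cast hl'.le
        have hv0 : (0 : ℝ) ≤ v := Nat.cast_nonneg _
        have hv0' : (0 : ℝ) ≤ v' := Nat.cast_nonneg _
        have e2 : (u : ℝ) - u' - x / b = (b * u - b * u' - x) / b := by field_simp
        rw [abs_le] at hx
        rw [e2, abs_le, le_div_iff₀ (by linarith), div_le_iff₀ (by linarith)]
        rw [pow_succ] at hx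
        constructor <;> linarith [hx.1, hx.2]
      · rw [Finset.mem_Ioo]; dsimp only; omega
    choose! p hp hp1 hp2 hp3 using key
    have hinj : InjOn p S := fun m hm m' hm' h => by rw [hp m hm, hp m' hm', h]
    have hsub : S.image p ⊆ (S.image fun m => (p m).1) ×ˢ Finset.Ioo (-N : ℤ) N := by
      intro q hq
      obtain ⟨m, hm, rfl⟩ := Finset.mem_image.1 hq
      exact Finset.mem_product.2 ⟨Finset.mem_image_of_mem _ hm, hp3 m hm⟩
    have hw : (S.image fun m => (p m).1).card ≤ 7 * (2 * N) ^ k := by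
      refine ih (x / b) _ fun w hw => ?_
      obtain ⟨m, hm, rfl⟩ := Finset.mem_image.1 hw
      exact ⟨hp1 m hm, hp2 m hm⟩
    calc S.card = (S.image p).card := (Finset.card_image_of_injOn hinj).symm
      _ ≤ _ := Finset.card_le_card hsub
      _ = (S.image fun m => (p m).1).card * (Finset.Ioo (-N : ℤ) N).card := Finset.card_product _ _
      _ ≤ 7 * (2 * N) ^ k * (2 * N) := by
        gcongr
        rw [Int.card_Ioo]; omega
      _ = 7 * (2 * N) ^ (k + 1) := by ring

theorem exists_pow_near_or_zero {b : ℝ} (hb : 1 < b) (z : ℝ) :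
    ∃ j : ℕ, (j = 0 ∨ b ^ j ≤ z) ∧ z < b ^ (j + 1) := by
  rcases le_or_gt 1 z with h | h
  · obtain ⟨j, h1, h2⟩ := exists_nat_pow_near h hb
    exact ⟨j, Or.inr h1, h2⟩
  · exact ⟨0, Or.inl rfl, by simpa using h.trans hb⟩

theorem coverBound_digitDiff {b N : ℕ} (hb : 2 ≤ b) {α : ℝ} (hα : 0 ≤ α)
    (hN : (2 * N : ℝ) ≤ (b : ℝ) ^ α) :
    CoverBound ((fun m : ℤ => (m : ℝ)) '' digitDiff b N) α (7 * (2 * b ^ 2 : ℝ) ^ α) := by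
  classical
  rintro x - r R hr hrR
  have hb2 : (2 : ℝ) ≤ b := by exact_mod_cast hb
  have hb0 : (0 : ℝ) < b := by linarith
  have hR : 0 < R := hr.trans hrR
  obtain ⟨j, hj, hrj⟩ := exists_pow_near_or_zero (b := (b : ℝ)) (by linarith) (r / 2)
  have hbj : (0 : ℝ) < b ^ j := by positivity
  have hjr : 2 * ((b : ℝ) ^ j - 1) ≤ r := by
    rcases hj with rfl | hj
    · simpa using hr.le
    · linarith
  obtain ⟨k, hRk, hkR⟩ : ∃ k : ℕ, R / b ^ j ≤ (b : ℝ) ^ k ∧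
      (b : ℝ) ^ k ≤ 2 * b ^ 2 * (R / r) := by
    have hq : 1 < R / r := by rwa [one_lt_div hr]
    rcases le_or_gt (R / b ^ j) 1 with h | h
    · refine ⟨0, by simpa using h, ?_⟩
      rw [pow_zero]
      nlinarith
    · obtain ⟨k, h1, h2⟩ := exists_nat_pow_near h.le (by linarith : (1 : ℝ) < b)
      refine ⟨k + 1, h2.le, ?_⟩
      calc (b : ℝ) ^ (k + 1) = b * b ^ k := pow_succ' _ _
        _ ≤ b * (R / b ^ j) := by gcongr
        _ ≤ 2 * b ^ 2 * (R / r) := by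
          rw [← mul_div_assoc, ← mul_div_assoc, div_le_div_iff₀ hbj hr]
          rw [pow_succ] at hrj
          have : r ≤ 2 * b ^ j * b := by linarith
          calc b * R * r ≤ b * R * (2 * b ^ j * b) := by gcongr
            _ = 2 * b ^ 2 * R * b ^ j := by ring
  set W : Finset ℤ := (Finset.Icc ⌈x / b ^ j - (b ^ k + 2)⌉ ⌊x / b ^ j + (b ^ k + 2)⌋).filter
    (· ∈ digitDiff b N) with hW
  have hWmem : ∀ w : ℤ, w ∈ W ↔ w ∈ digitDiff b N ∧ |(w : ℝ) - x / b ^ j| ≤ b ^ k + 2 := by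
    intro w
    rw [hW, Finset.mem_filter, Finset.mem_Icc, Int.ceil_le, Int.le_floor, abs_le, and_comm]
    refine and_congr_right fun _ => and_congr ?_ ?_ <;> constructor <;> intro h <;> linarith
  refine ⟨W.image fun w : ℤ => closedBall (b ^ j * w : ℝ) (b ^ j - 1), ?_, ?_, ?_⟩
  · rintro _ ⟨⟨_, ⟨a, ha, a', ha', rfl⟩, rfl⟩, hx⟩
    have hpos : 0 < b ^ j := by positivity
    have e : (b : ℝ) ^ j * (a / b ^ j : ℕ) + (a % b ^ j : ℕ) = a := by
      exact_mod_cast Nat.div_add_mod a (b ^ j)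
    have e' : (b : ℝ) ^ j * (a' / b ^ j : ℕ) + (a' % b ^ j : ℕ) = a' := by
      exact_mod_cast Nat.div_add_mod a' (b ^ j)
    have hv : ((a % b ^ j : ℕ) : ℝ) + 1 ≤ b ^ j := by exact_mod_cast Nat.mod_lt a hpos
    have hv' : ((a' % b ^ j : ℕ) : ℝ) + 1 ≤ b ^ j := by exact_mod_cast Nat.mod_lt a' hpos
    have hv0 : (0 : ℝ) ≤ (a % b ^ j : ℕ) := Nat.cast_nonneg _
    have hv0' : (0 : ℝ) ≤ (a' % b ^ j : ℕ) := Nat.cast_nonneg _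
    rw [mem_closedBall, Real.dist_eq, abs_le] at hx
    push_cast at hx
    have hRk' : R ≤ b ^ k * b ^ j := by rwa [div_le_iff₀ hbj] at hRk
    have hwW : ((a / b ^ j : ℕ) - (a' / b ^ j : ℕ) : ℤ) ∈ W := by
      refine (hWmem _).2 ⟨⟨_, div_pow_mem_digitSet ha j, _, div_pow_mem_digitSet ha' j, rfl⟩, ?_⟩
      rw [Int.cast_sub, Int.cast_natCast, Int.cast_natCast]
      have e2 : ((a / b ^ j : ℕ) : ℝ) - (a' / b ^ j : ℕ) - x / b ^ j =
          (b ^ j * (a / b ^ j : ℕ) - b ^ j * (a' / b ^ j : ℕ) - x) / b ^ j := by field_simp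
      rw [e2, abs_le, le_div_iff₀ hbj, div_le_iff₀ hbj]
      constructor <;> linarith [hx.1, hx.2]
    refine mem_iUnion₂.2 ⟨_, Finset.mem_image_of_mem _ hwW, ?_⟩
    dsimp only
    rw [mem_closedBall, Real.dist_eq, abs_le, Int.cast_sub, Int.cast_sub, Int.cast_natCast,
      Int.cast_natCast, Int.cast_natCast, Int.cast_natCast]
    constructor <;> linarith
  · intro U hU
    obtain ⟨w, -, rfl⟩ := Finset.mem_image.1 hU
    refine ediam_le_ofReal_of_dist_le fun y hy z hz => ?_
    rw [mem_closedBall] at hy hz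
    exact (dist_triangle_right y z _).trans (by linarith)
  · have hc : W.card ≤ 7 * (2 * N) ^ k :=
      card_digitDiff_le hb k (x / b ^ j) W fun w hw => (hWmem w).1 hw
    calc _ ≤ (W.card : ℝ) := by exact_mod_cast Finset.card_image_le
      _ ≤ 7 * (2 * N : ℝ) ^ k := by exact_mod_cast hc
      _ ≤ 7 * ((b : ℝ) ^ α) ^ k := by gcongr
      _ = 7 * ((b : ℝ) ^ k) ^ α := by
        rw [← Real.rpow_natCast, ← Real.rpow_natCast, ← Real.rpow_mul hb0.le,
          ← Real.rpow_mul hb0.le, mul_comm α]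
      _ ≤ 7 * (2 * b ^ 2 * (R / r)) ^ α := by gcongr
      _ = 7 * (2 * b ^ 2 : ℝ) ^ α * (R / r) ^ α := by
        rw [Real.mul_rpow (by positivity) (by positivity), mul_assoc]

/-- The copy of `digitSet b N` on the first coordinate axis of the plane. -/
def planarDigitSet (b N : ℕ) : Set (Euc 2) :=
  (fun u : ℝ => EuclideanSpace.single 0 u) '' ((fun m : ℕ => (m : ℝ)) '' digitSet b N)

theorem isometry_single : Isometry fun u : ℝ => (EuclideanSpace.single 0 u : Euc 2) :=
  Isometry.of_dist_eq fun u v => PiLp.dist_single_same 2 (fun _ => ℝ) 0 u v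

theorem distSet_planarDigitSet_subset (b N : ℕ) :
    distSet (planarDigitSet b N) ⊆ (fun m : ℤ => (m : ℝ)) '' digitDiff b N := by
  rintro _ ⟨_, ⟨_, ⟨a, ha, rfl⟩, rfl⟩, _, ⟨_, ⟨a', ha', rfl⟩, rfl⟩, rfl⟩
  rw [isometry_single.dist_eq, Real.dist_eq]
  rcases abs_choice ((a : ℝ) - a') with h | h
  · exact ⟨a - a', ⟨a, ha, a', ha', rfl⟩, by rw [h]; push_cast; ring⟩
  · exact ⟨a' - a, ⟨a', ha', a, ha, rfl⟩, by rw [h]; push_cast; ring⟩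

theorem le_rpow_of_coverBound_planarDigitSet {b N : ℕ} (hN0 : 0 < N) (hN : N ≤ b) {α C : ℝ}
    (h : CoverBound (planarDigitSet b N) α C) : (N : ℝ) ≤ (b : ℝ) ^ α := by
  classical
  have hb0 : (0 : ℝ) < b := by exact_mod_cast hN0.trans_le hN
  have hb1 : (1 : ℝ) ≤ b := by exact_mod_cast hN0.trans_le hN
  have hbα : 0 < (b : ℝ) ^ α := by positivity
  have key : ∀ k : ℕ, (N : ℝ) ^ k ≤ C * 2 ^ α * ((b : ℝ) ^ α) ^ k := by
    intro k
    obtain ⟨S, hS, hSc⟩ := exists_finset_digitSet hN0 hN k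
    obtain ⟨𝒰, h1, h2, h3⟩ := h (EuclideanSpace.single 0 (0 : ℝ))
      ⟨0, ⟨0, zero_mem_digitSet hN0, by simp⟩, rfl⟩ (1 / 2) (b ^ k) (by norm_num)
      (by have := one_le_pow₀ hb1 (n := k); linarith)
    have hex : ∀ m ∈ S, ∃ U ∈ 𝒰, (EuclideanSpace.single 0 (m : ℝ) : Euc 2) ∈ U := by
      intro m hm
      have hmem : (EuclideanSpace.single 0 (m : ℝ) : Euc 2) ∈ ⋃ U ∈ 𝒰, U := by
        refine h1 ⟨⟨m, ⟨m, (hS m hm).1, rfl⟩, rfl⟩, ?_⟩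
        rw [mem_closedBall, isometry_single.dist_eq, Real.dist_eq, sub_zero,
          abs_of_nonneg (Nat.cast_nonneg _)]
        exact_mod_cast (hS m hm).2.le
      obtain ⟨U, hU, hmU⟩ := mem_iUnion₂.1 hmem
      exact ⟨U, hU, hmU⟩
    choose! U hU hmU using hex
    have hcard : S.card ≤ 𝒰.card := by
      refine Finset.card_le_card_of_injOn U hU fun m hm m' hm' heq => ?_
      have hd := dist_le_of_ediam_le (by norm_num) (h2 _ (hU m hm)) (hmU m hm)
        (heq ▸ hmU m' hm')
      rw [isometry_single.dist_eq, Real.dist_eq] at hd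
      have hd' : |(m : ℤ) - m'| < 1 := by
        have : |(m : ℝ) - m'| < 1 := by linarith
        exact_mod_cast this
      have := Int.abs_lt_one_iff.1 hd'
      omega
    calc (N : ℝ) ^ k = S.card := by rw [hSc]; push_cast; rfl
      _ ≤ 𝒰.card := by exact_mod_cast hcard
      _ ≤ C * (b ^ k / (1 / 2)) ^ α := h3
      _ = C * 2 ^ α * ((b : ℝ) ^ α) ^ k := by
        rw [div_div_eq_mul_div, div_one, mul_comm ((b : ℝ) ^ k),
          Real.mul_rpow (by norm_num) (by positivity), ← Real.rpow_natCast, ← Real.rpow_natCast,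
          ← Real.rpow_mul hb0.le, ← Real.rpow_mul hb0.le, mul_comm α, mul_assoc]
  by_contra! hlt
  obtain ⟨k, hk⟩ := pow_unbounded_of_one_lt (C * 2 ^ α) ((one_lt_div hbα).2 hlt)
  rw [div_pow, lt_div_iff₀ (by positivity)] at hk
  exact absurd (key k) (not_le.2 hk)

theorem exists_assouadDim_distSet_le {s ε : ℝ} (hs0 : 0 ≤ s) (hs1 : s ≤ 1) (hε : 0 < ε) :
    ∃ F : Set (Euc 2), F.Nonempty ∧ s ≤ assouadDim F ∧ assouadDim (distSet F) ≤ s + ε := by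
  obtain ⟨b, hb, hbε⟩ := exists_nat_le_rpow hε 4 2
  have hb2 : (2 : ℝ) ≤ b := by exact_mod_cast hb
  have hb1 : (1 : ℝ) ≤ b := by linarith
  have hbs : 1 ≤ (b : ℝ) ^ s := Real.one_le_rpow hb1 hs0
  have hN0 : 0 < ⌈(b : ℝ) ^ s⌉₊ := Nat.ceil_pos.2 (by linarith)
  have hN : ⌈(b : ℝ) ^ s⌉₊ ≤ b := Nat.ceil_le.2 (Real.rpow_le_self_of_one_le hb1 hs1)
  have hNε : (2 * ⌈(b : ℝ) ^ s⌉₊ : ℝ) ≤ (b : ℝ) ^ (s + ε) := by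
    have h1 := Nat.ceil_lt_add_one (by linarith : 0 ≤ (b : ℝ) ^ s)
    rw [Real.rpow_add (by linarith)]
    have h2 := mul_le_mul_of_nonneg_left hbε.le (by linarith : 0 ≤ (b : ℝ) ^ s)
    linarith
  refine ⟨planarDigitSet b ⌈(b : ℝ) ^ s⌉₊, ⟨_, 0, ⟨0, zero_mem_digitSet hN0, by simp⟩, rfl⟩,
    ?_, ?_⟩
  · refine ((coverBound_one_real _).image_isometry isometry_single).le_assouadDim (by norm_num)
      zero_le_one fun α C _ _ h => ?_
    have := (Nat.le_ceil _).trans (le_rpow_of_coverBound_planarDigitSet hN0 hN h)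
    exact (Real.rpow_le_rpow_left_iff (by linarith)).1 this
  · exact ((coverBound_digitDiff hb (by linarith) hNε).mono
      (distSet_planarDigitSet_subset _ _)).assouadDim_le (by positivity) (by linarith)

/-- **Corollary 3.2**: for all `s ∈ [0,1]`,
`inf {dim_A D(F) : F ⊆ ℝ² nonempty and dim_A F ≥ s} = s`. -/
theorem assouad_distance_set_inf (s : ℝ) (hs0 : 0 ≤ s) (hs1 : s ≤ 1) :
    sInf {d : ℝ | ∃ F : Set (Euc 2), F.Nonempty ∧ s ≤ assouadDim F ∧
      d = assouadDim (distSet F)} = s := by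
  have hlow : ∀ d ∈ {d : ℝ | ∃ F : Set (Euc 2), F.Nonempty ∧ s ≤ assouadDim F ∧
      d = assouadDim (distSet F)}, s ≤ d := by
    rintro _ ⟨F, -, hF, rfl⟩
    exact le_assouadDim_distSet hs1 hF
  refine le_antisymm (le_of_forall_pos_le_add fun ε hε => ?_) (le_csInf ?_ hlow)
  · obtain ⟨F, hne, hF, hD⟩ := exists_assouadDim_distSet_le hs0 hs1 hε
    exact (csInf_le ⟨s, hlow⟩ ⟨F, hne, hF, rfl⟩).trans hD
  · obtain ⟨F, hne, hF, -⟩ := exists_assouadDim_distSet_le hs0 hs1 one_pos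
    exact ⟨_, F, hne, hF, rfl⟩

end
end

section
/- Let n ≥ 2. If F ⊆ ℝⁿ is non-empty with dim_A F ≥ (n+1)/2, then dim_A D(F) = 1. -/
open Metric MeasureTheory Filter Set
open scoped ENNReal NNReal Pointwise Topology

noncomputable section

section GaussianSums

open scoped RealInnerProductSpace ComplexConjugate
open Complex (I)

variable {V : Type*} [NormedAddCommGroup V] [InnerProductSpace ℝ V]

theorem gaussian_mul_gaussian_mul_exp_le {lam : ℝ} (hl : 1 ≤ lam) {p q : V} (hp : ‖p‖ ≤ 1)
    (hq : ‖q‖ ≤ 1) (v : V) :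
    Real.exp (-lam ^ 2 * ‖v - p‖ ^ 2) * Real.exp (-lam ^ 2 * ‖v - q‖ ^ 2) *
      Real.exp (‖v‖ ^ 2 / 2) ≤
    Real.exp 1 * Real.exp (-(lam ^ 2 * ‖p - q‖ ^ 2 / 2)) *
      Real.exp (-lam ^ 2 * ‖v - (1 / 2 : ℝ) • (p + q)‖ ^ 2) := by
  rw [← Real.exp_add, ← Real.exp_add, ← Real.exp_add, ← Real.exp_add]
  refine Real.exp_le_exp.mpr ?_
  set m : V := (1 / 2 : ℝ) • (p + q) with hm
  have hpar : ‖v - p‖ ^ 2 + ‖v - q‖ ^ 2 = 2 * ‖v - m‖ ^ 2 + ‖p - q‖ ^ 2 / 2 := by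
    have h := parallelogram_law_with_norm ℝ (v - p) (v - q)
    have h1 : v - p + (v - q) = (2 : ℝ) • (v - m) := by
      rw [hm]; module
    have h2 : v - p - (v - q) = -(p - q) := by abel
    rw [h1, h2, norm_smul, norm_neg, Real.norm_of_nonneg (by norm_num)] at h
    nlinarith [h]
  have hm1 : ‖m‖ ≤ 1 := by
    rw [hm, norm_smul, Real.norm_of_nonneg (by norm_num)]
    linarith [norm_add_le p q]
  have hv : ‖v‖ ≤ ‖v - m‖ + ‖m‖ := by
    simpa using norm_add_le (v - m) m
  have hv2 : ‖v‖ ^ 2 ≤ 2 * ‖v - m‖ ^ 2 + 2 := by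
    nlinarith [sq_nonneg (‖v - m‖ - ‖m‖), norm_nonneg v, norm_nonneg (v - m), norm_nonneg m]
  have hl2 : 1 ≤ lam ^ 2 := by nlinarith
  nlinarith [mul_nonneg (sub_nonneg.mpr hl2) (sq_nonneg ‖v - m‖)]

variable [FiniteDimensional ℝ V] [MeasurableSpace V] [BorelSpace V]

theorem integrable_exp_neg_mul_sq_norm_mul_cexp {b : ℝ} (hb : 0 < b) (w : V) :
    Integrable (fun v : V => (Real.exp (-b * ‖v‖ ^ 2) : ℂ) * Complex.exp (I * (⟪w, v⟫ : ℝ))) := by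
  have h := GaussianFourier.integrable_cexp_neg_mul_sq_norm_add (V := V) (b := (b : ℂ))
    (by simpa using hb) I w
  refine h.congr (Eventually.of_forall fun v => ?_)
  simp [Complex.exp_add]

theorem integral_exp_neg_mul_sq_norm_mul_cexp {b : ℝ} (hb : 0 < b) (w : V) :
    ∫ v : V, (Real.exp (-b * ‖v‖ ^ 2) : ℂ) * Complex.exp (I * (⟪w, v⟫ : ℝ)) =
      (((Real.pi / b) ^ (Module.finrank ℝ V / 2 : ℝ) *
        Real.exp (-(‖w‖ ^ 2 / (4 * b))) : ℝ) : ℂ) := by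
  have h := GaussianFourier.integral_cexp_neg_mul_sq_norm_add (V := V) (b := (b : ℂ))
    (by simpa using hb) I w
  rw [Complex.ofReal_mul, Complex.ofReal_cpow (by positivity)]
  convert h using 2
  · ext v
    simp [Complex.exp_add]
  · push_cast; rfl
  · push_cast
    simp only [Complex.I_sq]
    congr 1
    ring

/-- The Gaussian average of the squared modulus of a finite exponential sum. -/
theorem integral_exp_mul_normSq_expSum {ι : Type*} [Fintype ι] {b : ℝ} (hb : 0 < b)
    (c : ι → ℂ) (w : ι → V) :
    Integrable (fun v : V => Real.exp (-b * ‖v‖ ^ 2) *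
      ‖∑ i, c i * Complex.exp (I * (⟪w i, v⟫ : ℝ))‖ ^ 2) ∧
    ((∫ v : V, Real.exp (-b * ‖v‖ ^ 2) *
      ‖∑ i, c i * Complex.exp (I * (⟪w i, v⟫ : ℝ))‖ ^ 2 : ℝ) : ℂ) =
      ∑ i, ∑ j, c i * conj (c j) * (((Real.pi / b) ^ (Module.finrank ℝ V / 2 : ℝ) *
        Real.exp (-(‖w i - w j‖ ^ 2 / (4 * b))) : ℝ) : ℂ) := by
  have key : (fun v : V => ((Real.exp (-b * ‖v‖ ^ 2) *
      ‖∑ i, c i * Complex.exp (I * (⟪w i, v⟫ : ℝ))‖ ^ 2 : ℝ) : ℂ)) =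
      fun v => ∑ i, ∑ j, c i * conj (c j) *
        ((Real.exp (-b * ‖v‖ ^ 2) : ℂ) * Complex.exp (I * (⟪w i - w j, v⟫ : ℝ))) := by
    ext v
    push_cast
    rw [← Complex.mul_conj', map_sum, Finset.sum_mul_sum, Finset.mul_sum]
    refine Finset.sum_congr rfl fun i _ => ?_
    rw [Finset.mul_sum]
    refine Finset.sum_congr rfl fun j _ => ?_
    rw [inner_sub_left, map_mul, ← Complex.exp_conj, map_mul, Complex.conj_I, Complex.conj_ofReal,
      Complex.ofReal_sub, mul_sub, Complex.exp_sub, neg_mul I, Complex.exp_neg (I * _)]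
    ring
  have hint : ∀ i j, Integrable (fun v : V => c i * conj (c j) *
        ((Real.exp (-b * ‖v‖ ^ 2) : ℂ) * Complex.exp (I * (⟪w i - w j, v⟫ : ℝ)))) := fun i j =>
    (integrable_exp_neg_mul_sq_norm_mul_cexp hb _).const_mul _
  constructor
  · have : Integrable (fun v : V => ((Real.exp (-b * ‖v‖ ^ 2) *
      ‖∑ i, c i * Complex.exp (I * (⟪w i, v⟫ : ℝ))‖ ^ 2 : ℝ) : ℂ)) := by
      rw [key]
      exact integrable_finsetSum _ fun i _ => integrable_finsetSum _ fun j _ => hint i j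
    simpa only [RCLike.re_to_complex, Complex.ofReal_re] using this.re
  · rw [← integral_complex_ofReal, key, integral_finsetSum _ fun i _ =>
      integrable_finsetSum _ fun j _ => hint i j]
    refine Finset.sum_congr rfl fun i _ => ?_
    rw [integral_finsetSum _ fun j _ => hint i j]
    refine Finset.sum_congr rfl fun j _ => ?_
    rw [integral_const_mul, integral_exp_neg_mul_sq_norm_mul_cexp hb]

theorem integral_exp_mul_normSq_expSum_le {ι : Type*} [Fintype ι] {b B : ℝ} (hb : 0 < b)
    (c : ι → ℂ) (w : ι → V) (hc : ∀ i, ‖c i‖ ≤ B) :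
    ∫ v : V, Real.exp (-b * ‖v‖ ^ 2) *
      ‖∑ i, c i * Complex.exp (I * (⟪w i, v⟫ : ℝ))‖ ^ 2 ≤
      B ^ 2 * (Real.pi / b) ^ (Module.finrank ℝ V / 2 : ℝ) *
        ∑ i, ∑ j, Real.exp (-(‖w i - w j‖ ^ 2 / (4 * b))) := by
  have h := (integral_exp_mul_normSq_expSum hb c w).2
  refine (le_abs_self _).trans ?_
  rw [← Real.norm_eq_abs, ← Complex.norm_real, h, Finset.mul_sum]
  refine (norm_sum_le _ _).trans (Finset.sum_le_sum fun i _ => ?_)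
  rw [Finset.mul_sum]
  refine (norm_sum_le _ _).trans (Finset.sum_le_sum fun j _ => ?_)
  have h1 : 0 ≤ (Real.pi / b) ^ (Module.finrank ℝ V / 2 : ℝ) *
        Real.exp (-(‖w i - w j‖ ^ 2 / (4 * b))) := by positivity
  rw [norm_mul, norm_mul, RCLike.norm_conj, Complex.norm_real, Real.norm_of_nonneg h1,
    mul_assoc (B ^ 2)]
  have : ‖c i‖ * ‖c j‖ ≤ B ^ 2 := by
    rw [sq]
    exact mul_le_mul (hc i) (hc j) (norm_nonneg _) ((norm_nonneg _).trans (hc i))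
  exact mul_le_mul_of_nonneg_right this h1

theorem integral_gaussian_translate_mul_cexp {lam : ℝ} (hl : 0 < lam) (p q : V) :
    Integrable (fun v : V => (Real.exp (-lam ^ 2 * ‖v - p‖ ^ 2) : ℂ) *
      Complex.exp (I * (⟪(-2 * lam) • q, v⟫ : ℝ))) ∧
    ∫ v : V, (Real.exp (-lam ^ 2 * ‖v - p‖ ^ 2) : ℂ) *
      Complex.exp (I * (⟪(-2 * lam) • q, v⟫ : ℝ)) =
      Complex.exp (I * (-2 * lam * ⟪p, q⟫ : ℝ)) *
      (((Real.pi / lam ^ 2) ^ (Module.finrank ℝ V / 2 : ℝ) * Real.exp (-‖q‖ ^ 2) : ℝ) : ℂ) := by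
  have hl2 : 0 < lam ^ 2 := by positivity
  set f : V → ℂ := fun u => Complex.exp (I * (-2 * lam * ⟪p, q⟫ : ℝ)) *
    ((Real.exp (-lam ^ 2 * ‖u‖ ^ 2) : ℂ) * Complex.exp (I * (⟪(-2 * lam) • q, u⟫ : ℝ))) with hf
  have key : (fun v : V => (Real.exp (-lam ^ 2 * ‖v - p‖ ^ 2) : ℂ) *
      Complex.exp (I * (⟪(-2 * lam) • q, v⟫ : ℝ))) = fun v => f (v - p) := by
    ext v
    simp only [hf]
    rw [inner_sub_right, mul_left_comm, ← Complex.exp_add]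
    congr 2
    rw [real_inner_smul_left q p, real_inner_comm p q]
    push_cast
    ring
  rw [key]
  refine ⟨((integrable_exp_neg_mul_sq_norm_mul_cexp hl2 _).const_mul _).comp_sub_right p, ?_⟩
  rw [integral_sub_right_eq_self f p, hf, integral_const_mul,
    integral_exp_neg_mul_sq_norm_mul_cexp hl2]
  congr 4
  rw [norm_smul, mul_pow, Real.norm_eq_abs, sq_abs]
  field_simp
  ring

/-- A double large sieve inequality for points in the unit ball. -/
theorem norm_bilinear_expSum_le {ι : Type*} [Fintype ι] {lam : ℝ} (hl : 1 ≤ lam)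
    (a : ι → ℂ) (ha : ∀ i, ‖a i‖ ≤ 1) (p : ι → V) (hp : ∀ i, ‖p i‖ ≤ 1) :
    ‖∑ i, ∑ j, a i * a j * Complex.exp (I * (-2 * lam * ⟪p i, p j⟫ : ℝ))‖ ≤
      (Real.exp 1 + Real.exp 1 ^ 2 * 2 ^ (Module.finrank ℝ V / 2 : ℝ)) *
        lam ^ (Module.finrank ℝ V / 2 : ℝ) *
        ∑ i, ∑ j, Real.exp (-(lam ^ 2 * ‖p i - p j‖ ^ 2 / 2)) := by
  have hl0 : 0 < lam := by linarith
  set d : ℝ := (Module.finrank ℝ V / 2 : ℝ) with hd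
  set T : ℂ := ∑ i, ∑ j, a i * a j * Complex.exp (I * (-2 * lam * ⟪p i, p j⟫ : ℝ)) with hT
  set S : ℝ := ∑ i, ∑ j, Real.exp (-(lam ^ 2 * ‖p i - p j‖ ^ 2 / 2)) with hS
  set e : ι → ℂ := fun j => a j * (Real.exp (‖p j‖ ^ 2) : ℂ) with he
  have heB : ∀ j, ‖e j‖ ≤ Real.exp 1 := by
    intro j
    rw [he, norm_mul, Complex.norm_real, Real.norm_of_nonneg (Real.exp_pos _).le]
    have : Real.exp (‖p j‖ ^ 2) ≤ Real.exp 1 :=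
      Real.exp_le_exp.mpr (pow_le_one₀ (norm_nonneg _) (hp j))
    nlinarith [ha j, norm_nonneg (a j), Real.exp_pos (‖p j‖ ^ 2)]
  set F : V → ℂ := fun v => ∑ i, a i * (Real.exp (-lam ^ 2 * ‖v - p i‖ ^ 2) : ℂ) with hF
  set G : V → ℂ := fun v => ∑ j, e j * Complex.exp (I * (⟪(-2 * lam) • p j, v⟫ : ℝ)) with hG
  have hFG : ∫ v, F v * G v = ((Real.pi / lam ^ 2) ^ d : ℝ) * T := by
    have key : (fun v => F v * G v) = fun v => ∑ i, ∑ j, (a i * e j) *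
        ((Real.exp (-lam ^ 2 * ‖v - p i‖ ^ 2) : ℂ) *
          Complex.exp (I * (⟪(-2 * lam) • p j, v⟫ : ℝ))) := by
      ext v
      rw [hF, hG, Finset.sum_mul_sum]
      refine Finset.sum_congr rfl fun i _ => Finset.sum_congr rfl fun j _ => ?_
      ring
    have hint := fun i j =>
      (integral_gaussian_translate_mul_cexp hl0 (p i) (p j)).1.const_mul (a i * e j)
    rw [key, integral_finsetSum _ fun i _ => integrable_finsetSum _ fun j _ => hint i j, hT,
      Finset.mul_sum]
    refine Finset.sum_congr rfl fun i _ => ?_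
    rw [integral_finsetSum _ fun j _ => hint i j, Finset.mul_sum]
    refine Finset.sum_congr rfl fun j _ => ?_
    rw [integral_const_mul, (integral_gaussian_translate_mul_cexp hl0 (p i) (p j)).2, he,
      Real.exp_neg]
    have h0 : ((Real.exp (‖p j‖ ^ 2) : ℝ) : ℂ) ≠ 0 :=
      Complex.ofReal_ne_zero.mpr (Real.exp_ne_zero _)
    rw [Complex.ofReal_mul ((Real.pi / lam ^ 2) ^ _), Complex.ofReal_inv]
    field_simp
    rfl
  set H : V → ℝ := fun v => ∑ i, ∑ j, Real.exp 1 * Real.exp (-(lam ^ 2 * ‖p i - p j‖ ^ 2 / 2)) *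
      Real.exp (-lam ^ 2 * ‖v - (1 / 2 : ℝ) • (p i + p j)‖ ^ 2) with hH
  have hgint : ∀ m : V, Integrable (fun v : V => Real.exp (-lam ^ 2 * ‖v - m‖ ^ 2)) := by
    intro m
    have h := (integrable_exp_neg_mul_sq_norm_mul_cexp (V := V) (b := lam ^ 2)
      (by positivity) 0).re
    simp only [inner_zero_left, Complex.ofReal_zero, mul_zero, Complex.exp_zero, mul_one,
      RCLike.re_to_complex, Complex.ofReal_re] at h
    exact h.comp_sub_right m
  have hHint : Integrable H := integrable_finsetSum _ fun i _ => integrable_finsetSum _ fun j _ =>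
    (hgint _).const_mul _
  have hHval : ∫ v, H v = Real.exp 1 * (Real.pi / lam ^ 2) ^ d * S := by
    rw [hH, integral_finsetSum _ fun i _ => integrable_finsetSum _ fun j _ =>
      (hgint _).const_mul _, hS, Finset.mul_sum]
    refine Finset.sum_congr rfl fun i _ => ?_
    rw [integral_finsetSum _ fun j _ => (hgint _).const_mul _, Finset.mul_sum]
    refine Finset.sum_congr rfl fun j _ => ?_
    rw [integral_const_mul,
      integral_sub_right_eq_self (fun v : V => Real.exp (-lam ^ 2 * ‖v‖ ^ 2)),
      GaussianFourier.integral_rexp_neg_mul_sq_norm (by positivity)]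
    ring
  have hFH : ∀ v, ‖F v‖ ^ 2 * Real.exp (‖v‖ ^ 2 / 2) ≤ H v := by
    intro v
    have h1 : ‖F v‖ ≤ ∑ i, Real.exp (-lam ^ 2 * ‖v - p i‖ ^ 2) := by
      refine (norm_sum_le _ _).trans (Finset.sum_le_sum fun i _ => ?_)
      rw [norm_mul, Complex.norm_real, Real.norm_of_nonneg (Real.exp_pos _).le]
      exact mul_le_of_le_one_left (Real.exp_pos _).le (ha i)
    calc ‖F v‖ ^ 2 * Real.exp (‖v‖ ^ 2 / 2)
        ≤ (∑ i, Real.exp (-lam ^ 2 * ‖v - p i‖ ^ 2)) ^ 2 * Real.exp (‖v‖ ^ 2 / 2) := by gcongr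
      _ ≤ H v := by
        rw [sq, Finset.sum_mul_sum, Finset.sum_mul]
        refine Finset.sum_le_sum fun i _ => ?_
        rw [Finset.sum_mul]
        exact Finset.sum_le_sum fun j _ => gaussian_mul_gaussian_mul_exp_le hl (hp i) (hp j) v
  have hGint := (integral_exp_mul_normSq_expSum (b := 1 / 2) (by norm_num) e
    fun j => (-2 * lam) • p j).1
  have hGval : ∫ v, Real.exp (-(1 / 2) * ‖v‖ ^ 2) * ‖G v‖ ^ 2 ≤
      Real.exp 1 ^ 2 * (Real.pi * 2) ^ d * S := by
    refine (integral_exp_mul_normSq_expSum_le (b := 1 / 2) (by norm_num) e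
      (fun j => (-2 * lam) • p j) heB).trans ?_
    rw [show Real.pi / (1 / 2) = Real.pi * 2 by ring]
    refine mul_le_mul_of_nonneg_left ?_ (by positivity)
    refine Finset.sum_le_sum fun i _ => Finset.sum_le_sum fun j _ => Real.exp_le_exp.mpr ?_
    rw [← smul_sub, norm_smul, mul_pow, Real.norm_eq_abs, sq_abs]
    nlinarith [mul_nonneg (sq_nonneg lam) (sq_nonneg ‖p i - p j‖)]
  set c : ℝ := lam ^ d with hc
  have hc0 : 0 < c := Real.rpow_pos_of_pos hl0 _
  have hpt : ∀ v, ‖F v * G v‖ ≤ c * H v + c⁻¹ * (Real.exp (-(1 / 2) * ‖v‖ ^ 2) * ‖G v‖ ^ 2) := by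
    intro v
    set E := Real.exp (‖v‖ ^ 2 / 2) with hE
    have hE0 : 0 < E := Real.exp_pos _
    have hE1 : Real.exp (-(1 / 2) * ‖v‖ ^ 2) = E⁻¹ := by
      rw [hE, ← Real.exp_neg]; congr 1; ring
    rw [hE1, norm_mul]
    have h2 : ‖F v‖ * ‖G v‖ ≤ c * (‖F v‖ ^ 2 * E) + c⁻¹ * (E⁻¹ * ‖G v‖ ^ 2) := by
      have h3 : c⁻¹ * (E⁻¹ * ‖G v‖ ^ 2) = ‖G v‖ ^ 2 / (c * E) := by field_simp
      rw [h3, ← sub_nonneg]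
      have h4 : c * (‖F v‖ ^ 2 * E) + ‖G v‖ ^ 2 / (c * E) - ‖F v‖ * ‖G v‖ =
          ((c * E * ‖F v‖ - ‖G v‖) ^ 2 + c * E * (‖F v‖ * ‖G v‖)) / (c * E) := by
        field_simp; ring
      rw [h4]; positivity
    linarith [mul_le_mul_of_nonneg_left (hFH v) hc0.le]
  have hnorm := norm_integral_le_of_norm_le ((hHint.const_mul c).add (hGint.const_mul c⁻¹))
    (Eventually.of_forall hpt)
  simp only [Pi.add_apply] at hnorm
  rw [hFG, integral_add (hHint.const_mul c) (hGint.const_mul c⁻¹), integral_const_mul,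
    integral_const_mul, hHval, norm_mul, Complex.norm_real, Real.norm_of_nonneg (by positivity)]
    at hnorm
  have hfin : (Real.pi / lam ^ 2) ^ d * ‖T‖ ≤ c * (Real.exp 1 * (Real.pi / lam ^ 2) ^ d * S) +
      c⁻¹ * (Real.exp 1 ^ 2 * (Real.pi * 2) ^ d * S) :=
    hnorm.trans (add_le_add_right (mul_le_mul_of_nonneg_left hGval (by positivity)) _)
  have hr : (Real.pi / lam ^ 2) ^ d = Real.pi ^ d / c ^ 2 := by
    rw [Real.div_rpow Real.pi_pos.le (by positivity), hc, ← Real.rpow_natCast,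
      ← Real.rpow_natCast, ← Real.rpow_mul hl0.le, ← Real.rpow_mul hl0.le, mul_comm d]
  rw [hr, Real.mul_rpow Real.pi_pos.le (by norm_num)] at hfin
  have hpi : 0 < Real.pi ^ d := Real.rpow_pos_of_pos Real.pi_pos _
  have hscaled : Real.pi ^ d / c ^ 2 * ‖T‖ ≤
      Real.pi ^ d / c ^ 2 * ((Real.exp 1 + Real.exp 1 ^ 2 * 2 ^ d) * c * S) := by
    refine hfin.trans (le_of_eq ?_)
    field_simp
  exact le_of_mul_le_mul_left hscaled (by positivity)

end GaussianSums

section Frostman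

theorem summable_exp_neg_sq_mul_rpow (s : ℝ) :
    Summable (fun k : ℕ => Real.exp (-((k : ℝ) ^ 2 / 2)) * ((k : ℝ) + 1) ^ s) := by
  have h := ((summable_nat_add_iff 1).mpr
    (Real.summable_pow_mul_exp_neg_nat_mul ⌈s⌉₊ one_pos)).mul_left (Real.exp (3 / 2))
  refine Summable.of_nonneg_of_le (fun k => by positivity) (fun k => ?_) h
  have h1 : ((k : ℝ) + 1) ^ s ≤ ((k : ℝ) + 1) ^ ⌈s⌉₊ := by
    rw [← Real.rpow_natCast]
    exact Real.rpow_le_rpow_of_exponent_le (by linarith [k.cast_nonneg (α := ℝ)]) (Nat.le_ceil s)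
  have h2 : Real.exp (-((k : ℝ) ^ 2 / 2)) ≤ Real.exp (3 / 2) * Real.exp (-((k : ℝ) + 1)) := by
    rw [← Real.exp_add]
    exact Real.exp_le_exp.mpr (by nlinarith [sq_nonneg ((k : ℝ) - 1)])
  push_cast
  calc _ ≤ (Real.exp (3 / 2) * Real.exp (-((k : ℝ) + 1))) * ((k : ℝ) + 1) ^ ⌈s⌉₊ := by gcongr
    _ = _ := by rw [neg_one_mul]; ring

theorem exp_neg_sq_le_sum_ite {u : ℝ} (hu : 0 ≤ u) {K : ℕ} (hK : ⌊u⌋₊ < K) :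
    Real.exp (-(u ^ 2 / 2)) ≤
      ∑ k ∈ Finset.range K, Real.exp (-((k : ℝ) ^ 2 / 2)) * (if u ≤ k + 1 then 1 else 0) := by
  have h0 : u ≤ (⌊u⌋₊ : ℝ) + 1 := (Nat.lt_floor_add_one u).le
  calc Real.exp (-(u ^ 2 / 2)) ≤ Real.exp (-((⌊u⌋₊ : ℝ) ^ 2 / 2)) *
        (if u ≤ (⌊u⌋₊ : ℝ) + 1 then 1 else 0) := by
        rw [if_pos h0, mul_one]
        refine Real.exp_le_exp.mpr ?_
        have := Nat.floor_le hu
        have h2 : (⌊u⌋₊ : ℝ) ^ 2 ≤ u ^ 2 := by gcongr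
        linarith
    _ ≤ _ := Finset.single_le_sum
        (f := fun k : ℕ => Real.exp (-((k : ℝ) ^ 2 / 2)) * (if u ≤ (k : ℝ) + 1 then 1 else 0))
        (fun k _ => mul_nonneg (Real.exp_pos _).le (by split_ifs <;> norm_num))
        (Finset.mem_range.mpr hK)

/-- Gaussian sums over a finite family whose ball counts satisfy a power law down to scale `δ`. -/
theorem sum_exp_neg_sq_le_of_card_le {ι V : Type*} [Fintype ι] [SeminormedAddCommGroup V]
    {s δ lam B : ℝ} (hδ : 0 < δ) (hl : 0 < lam) (p : ι → V)
    (hF : ∀ i, ∀ ρ, δ ≤ ρ →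
      ((Finset.univ.filter fun j => ‖p i - p j‖ ≤ ρ).card : ℝ) ≤ B * ρ ^ s) (i : ι) :
    ∑ j, Real.exp (-(lam ^ 2 * ‖p i - p j‖ ^ 2 / 2)) ≤
      B * (∑' k : ℕ, Real.exp (-((k : ℝ) ^ 2 / 2)) * ((k : ℝ) + 1) ^ s) *
        (max lam⁻¹ δ) ^ s := by
  set ρ := max lam⁻¹ δ with hρ
  have hρ0 : 0 < ρ := lt_max_of_lt_right hδ
  have hlρ : ρ⁻¹ ≤ lam := inv_le_of_inv_le₀ hl (le_max_left _ _)
  have hB : 0 ≤ B := by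
    have h := (Nat.cast_nonneg _).trans (hF i ρ (le_max_right _ _))
    exact nonneg_of_mul_nonneg_left h (Real.rpow_pos_of_pos hρ0 _)
  obtain ⟨K, hK⟩ : ∃ K : ℕ, ∀ j, ⌊‖p i - p j‖ / ρ⌋₊ < K := by
    refine ⟨Finset.univ.sup (fun j => ⌊‖p i - p j‖ / ρ⌋₊) + 1, fun j => Nat.lt_succ_of_le ?_⟩
    exact Finset.le_sup (f := fun j => ⌊‖p i - p j‖ / ρ⌋₊) (Finset.mem_univ j)
  calc ∑ j, Real.exp (-(lam ^ 2 * ‖p i - p j‖ ^ 2 / 2))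
      ≤ ∑ j, ∑ k ∈ Finset.range K, Real.exp (-((k : ℝ) ^ 2 / 2)) *
          (if ‖p i - p j‖ / ρ ≤ k + 1 then 1 else 0) := by
        refine Finset.sum_le_sum fun j _ =>
          le_trans ?_ (exp_neg_sq_le_sum_ite (by positivity) (hK j))
        refine Real.exp_le_exp.mpr ?_
        have : (‖p i - p j‖ / ρ) ^ 2 ≤ lam ^ 2 * ‖p i - p j‖ ^ 2 := by
          rw [div_eq_mul_inv, mul_pow, mul_comm]
          gcongr
        linarith
    _ = ∑ k ∈ Finset.range K, Real.exp (-((k : ℝ) ^ 2 / 2)) *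
          ((Finset.univ.filter fun j => ‖p i - p j‖ ≤ (k + 1) * ρ).card : ℝ) := by
        rw [Finset.sum_comm]
        refine Finset.sum_congr rfl fun k _ => ?_
        rw [← Finset.mul_sum, Finset.sum_boole]
        simp_rw [div_le_iff₀ hρ0]
    _ ≤ ∑ k ∈ Finset.range K, (B * ρ ^ s) *
          (Real.exp (-((k : ℝ) ^ 2 / 2)) * ((k : ℝ) + 1) ^ s) := by
        refine Finset.sum_le_sum fun k _ => ?_
        have h1 : δ ≤ ((k : ℝ) + 1) * ρ := by
          have : δ ≤ ρ := le_max_right _ _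
          nlinarith [k.cast_nonneg (α := ℝ)]
        calc _ ≤ Real.exp (-((k : ℝ) ^ 2 / 2)) * (B * (((k : ℝ) + 1) * ρ) ^ s) :=
              mul_le_mul_of_nonneg_left (hF i _ h1) (Real.exp_pos _).le
          _ = _ := by rw [Real.mul_rpow (by positivity) hρ0.le]; ring
    _ ≤ (B * ρ ^ s) * ∑' k : ℕ, Real.exp (-((k : ℝ) ^ 2 / 2)) * ((k : ℝ) + 1) ^ s := by
        rw [← Finset.mul_sum]
        refine mul_le_mul_of_nonneg_left ?_ (by positivity)
        exact (summable_exp_neg_sq_mul_rpow s).sum_le_tsum _ fun k _ => by positivity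
    _ = _ := by ring

end Frostman

section DistanceEnergy

open scoped RealInnerProductSpace ComplexConjugate
open Complex (I)

variable {V : Type*} [NormedAddCommGroup V] [InnerProductSpace ℝ V] [FiniteDimensional ℝ V]

theorem norm_expSum_normSq_sub_le {ι : Type*} [Fintype ι] {lam : ℝ} (hl : 1 ≤ lam)
    (p : ι → V) (hp : ∀ i, ‖p i‖ ≤ 1) :
    ‖∑ i, ∑ j, Complex.exp (I * (lam * ‖p i - p j‖ ^ 2 : ℝ))‖ ≤
      (Real.exp 1 + Real.exp 1 ^ 2 * 2 ^ (Module.finrank ℝ V / 2 : ℝ)) *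
        lam ^ (Module.finrank ℝ V / 2 : ℝ) *
        ∑ i, ∑ j, Real.exp (-(lam ^ 2 * ‖p i - p j‖ ^ 2 / 2)) := by
  borelize V
  have h := norm_bilinear_expSum_le hl (fun i => Complex.exp (I * (lam * ‖p i‖ ^ 2 : ℝ)))
    (fun i => by rw [mul_comm, Complex.norm_exp_ofReal_mul_I]) p hp
  convert h using 6 with i _ j _
  rw [← Complex.exp_add, ← Complex.exp_add, norm_sub_sq_real]
  congr 1
  push_cast
  ring

/-- Fourier decay of the distribution of squared distances of a Frostman-type family. -/
theorem normSq_expSum_normSq_sub_le {ε : ℝ} (B : ℝ) (hε : 0 < ε) (hε' : ε < 1 / 2) :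
    ∃ K : ℝ, 0 < K ∧ ∀ {ι : Type} [Fintype ι] (p : ι → V) (δ : ℝ), 0 < δ → (∀ i, ‖p i‖ ≤ 1) →
      (∀ i, ∀ ρ, δ ≤ ρ → ((Finset.univ.filter fun j => ‖p i - p j‖ ≤ ρ).card : ℝ) ≤
        B * Fintype.card ι * ρ ^ (((Module.finrank ℝ V : ℝ) + 1) / 2 - ε)) →
      ∀ lam : ℝ, 0 < lam →
        ‖∑ i, ∑ j, Complex.exp (I * (lam * ‖p i - p j‖ ^ 2 : ℝ))‖ ^ 2 ≤
          K * (Fintype.card ι : ℝ) ^ 4 * (lam ^ (-1 + 2 * ε) +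
            δ ^ ((Module.finrank ℝ V : ℝ) + 1 - 2 * ε) * lam ^ (Module.finrank ℝ V : ℝ)) := by
  set n : ℝ := (Module.finrank ℝ V : ℝ) with hn
  set s : ℝ := (n + 1) / 2 - ε with hs
  set C : ℝ := ∑' k : ℕ, Real.exp (-((k : ℝ) ^ 2 / 2)) * ((k : ℝ) + 1) ^ s with hC
  set A : ℝ := Real.exp 1 + Real.exp 1 ^ 2 * 2 ^ (n / 2) with hA
  refine ⟨(A * B * C) ^ 2 + 1, by positivity, ?_⟩
  intro ι _ p δ hδ hp hF lam hl
  set N : ℝ := (Fintype.card ι : ℝ) with hN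
  have hN0 : 0 ≤ N := Nat.cast_nonneg _
  have hA0 : 0 < A := by positivity
  have hC0 : 0 ≤ C := tsum_nonneg fun k => by positivity
  rcases le_total lam 1 with h1 | h1
  · have htriv : ‖∑ i, ∑ j, Complex.exp (I * (lam * ‖p i - p j‖ ^ 2 : ℝ))‖ ≤ N ^ 2 := by
      have : ∀ i, ‖∑ j, Complex.exp (I * (lam * ‖p i - p j‖ ^ 2 : ℝ))‖ ≤ N := fun i => by
        refine (norm_sum_le _ _).trans ?_
        simp_rw [mul_comm I, Complex.norm_exp_ofReal_mul_I]
        simp [hN]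
      refine (norm_sum_le _ _).trans ((Finset.sum_le_sum fun i _ => this i).trans ?_)
      simp [hN, sq]
    have hlam : 1 ≤ lam ^ (-1 + 2 * ε) :=
      Real.one_le_rpow_of_pos_of_le_one_of_nonpos hl h1 (by linarith)
    have hpos : 0 ≤ δ ^ (n + 1 - 2 * ε) * lam ^ n := by positivity
    calc _ ≤ (N ^ 2) ^ 2 := by gcongr
      _ = 1 * N ^ 4 * 1 := by ring
      _ ≤ _ := by
        gcongr
        · linarith [sq_nonneg (A * B * C)]
        · linarith
  · have hS : ∑ i, ∑ j, Real.exp (-(lam ^ 2 * ‖p i - p j‖ ^ 2 / 2)) ≤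
        B * C * N ^ 2 * (max lam⁻¹ δ) ^ s := by
      refine (Finset.sum_le_sum fun i _ => sum_exp_neg_sq_le_of_card_le hδ hl p hF i).trans
        (le_of_eq ?_)
      rw [Finset.sum_const, Finset.card_univ, nsmul_eq_mul]
      ring
    have hmax : ((max lam⁻¹ δ) ^ s) ^ 2 ≤ lam ^ (-(2 * s)) + δ ^ (2 * s) := by
      have h2 : ∀ x : ℝ, 0 < x → (x ^ s) ^ 2 = x ^ (2 * s) := fun x hx => by
        rw [← Real.rpow_natCast, ← Real.rpow_mul hx.le]; congr 1; push_cast; ring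
      have h3 : (lam⁻¹) ^ (2 * s) = lam ^ (-(2 * s)) := by
        rw [Real.inv_rpow hl.le, Real.rpow_neg hl.le]
      have h4 : 0 < lam ^ (-(2 * s)) := Real.rpow_pos_of_pos hl _
      have h5 : 0 < δ ^ (2 * s) := Real.rpow_pos_of_pos hδ _
      rcases max_cases lam⁻¹ δ with ⟨h, _⟩ | ⟨h, _⟩
      · rw [h, h2 _ (inv_pos.mpr hl), h3]; linarith
      · rw [h, h2 _ hδ]; linarith
    have hln : (lam ^ (n / 2)) ^ 2 = lam ^ n := by
      rw [← Real.rpow_natCast, ← Real.rpow_mul hl.le]; congr 1; push_cast; ring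
    calc _ ≤ (A * lam ^ (n / 2) * (B * C * N ^ 2 * (max lam⁻¹ δ) ^ s)) ^ 2 := by
          gcongr
          exact (norm_expSum_normSq_sub_le h1 p hp).trans
            (mul_le_mul_of_nonneg_left hS (by positivity))
      _ = (A * B * C) ^ 2 * N ^ 4 * ((((max lam⁻¹ δ) ^ s) ^ 2) * lam ^ n) := by
          rw [← hln]; ring
      _ ≤ ((A * B * C) ^ 2 + 1) * N ^ 4 * ((lam ^ (-(2 * s)) + δ ^ (2 * s)) * lam ^ n) := by
          gcongr
          linarith
      _ = _ := by
          rw [add_mul (lam ^ _), ← Real.rpow_add hl,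
            show -(2 * s) + n = -1 + 2 * ε by rw [hs]; ring,
            show 2 * s = n + 1 - 2 * ε by rw [hs]; ring]

/-- Upper bound for the number of quadruples (weighted by a Gaussian) with nearly equal squared
distances. -/
theorem sum_exp_normSq_sub_le {ε : ℝ} (B : ℝ) (hε : 0 < ε) (hε' : ε < 1 / 2) :
    ∃ K : ℝ, 0 < K ∧ ∀ {ι : Type} [Fintype ι] (p : ι → V) (δ : ℝ), 0 < δ → (∀ i, ‖p i‖ ≤ 1) →
      (∀ i, ∀ ρ, δ ≤ ρ → ((Finset.univ.filter fun j => ‖p i - p j‖ ≤ ρ).card : ℝ) ≤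
        B * Fintype.card ι * ρ ^ (((Module.finrank ℝ V : ℝ) + 1) / 2 - ε)) →
      ∑ x : ι × ι, ∑ y : ι × ι, Real.exp (-((‖p x.1 - p x.2‖ ^ 2 - ‖p y.1 - p y.2‖ ^ 2) ^ 2 /
        (4 * δ ^ 2))) ≤ K * (Fintype.card ι : ℝ) ^ 4 * δ ^ (1 - 2 * ε) := by
  obtain ⟨K, hK, hb⟩ := normSq_expSum_normSq_sub_le (V := V) B hε hε'
  set n : ℝ := (Module.finrank ℝ V : ℝ) with hn
  have hn0 : 0 ≤ n := Nat.cast_nonneg _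
  set G : ℝ := (1 / 2) * Real.Gamma ε + (1 / 2) * Real.Gamma ((n + 1) / 2) with hG
  have hG0 : 0 < G := by
    have := Real.Gamma_pos_of_pos hε
    have := Real.Gamma_pos_of_pos (s := (n + 1) / 2) (by linarith)
    positivity
  refine ⟨2 * K * G, by positivity, ?_⟩
  intro ι _ p δ hδ hp hF
  set N : ℝ := (Fintype.card ι : ℝ) with hN
  set Q : ℝ := ∑ x : ι × ι, ∑ y : ι × ι,
    Real.exp (-((‖p x.1 - p x.2‖ ^ 2 - ‖p y.1 - p y.2‖ ^ 2) ^ 2 / (4 * δ ^ 2))) with hQ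
  have hQ0 : 0 ≤ Q := Finset.sum_nonneg fun x _ => Finset.sum_nonneg fun y _ => (Real.exp_pos _).le
  set ν : ℝ → ℂ := fun t => ∑ i, ∑ j, Complex.exp (I * (t * ‖p i - p j‖ ^ 2 : ℝ)) with hν
  have hδ2 : 0 < δ ^ 2 := by positivity
  have hνsum : ∀ t : ℝ, ∑ x : ι × ι, (1 : ℂ) * Complex.exp (I * (⟪‖p x.1 - p x.2‖ ^ 2, t⟫ : ℝ)) =
      ν t := by
    intro t
    rw [Fintype.sum_prod_type]
    simp [hν]
  obtain ⟨hint, hval⟩ := integral_exp_mul_normSq_expSum (V := ℝ) hδ2 (fun _ : ι × ι => (1 : ℂ))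
    (fun x => ‖p x.1 - p x.2‖ ^ 2)
  simp_rw [hνsum] at hint hval
  have hQval : ∫ t : ℝ, Real.exp (-δ ^ 2 * ‖t‖ ^ 2) * ‖ν t‖ ^ 2 =
      (Real.pi / δ ^ 2) ^ (1 / 2 : ℝ) * Q := by
    rw [← Complex.ofReal_inj, hval, hQ, Finset.mul_sum, Complex.ofReal_sum]
    refine Finset.sum_congr rfl fun x _ => ?_
    rw [Finset.mul_sum, Complex.ofReal_sum]
    refine Finset.sum_congr rfl fun y _ => ?_
    rw [map_one, one_mul, one_mul, Module.finrank_self, Nat.cast_one, Real.norm_eq_abs, sq_abs]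
  have habs : ∀ t : ℝ, ‖ν t‖ = ‖ν |t|‖ := by
    intro t
    rcases abs_choice t with h | h
    · rw [h]
    · rw [h]
      have : ν (-t) = conj (ν t) := by
        simp only [hν, map_sum, ← Complex.exp_conj, map_mul, Complex.conj_I, Complex.conj_ofReal]
        simp
      rw [this, RCLike.norm_conj]
  set g : ℝ → ℝ := fun t => K * N ^ 4 * (t ^ (-1 + 2 * ε) * Real.exp (-δ ^ 2 * t ^ (2 : ℝ)) +
    δ ^ (n + 1 - 2 * ε) * (t ^ n * Real.exp (-δ ^ 2 * t ^ (2 : ℝ)))) with hg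
  have hi1 : IntegrableOn
      (fun t : ℝ => t ^ (-1 + 2 * ε) * Real.exp (-δ ^ 2 * t ^ (2 : ℝ))) (Ioi 0) :=
    integrableOn_rpow_mul_exp_neg_mul_rpow (by linarith) two_pos hδ2
  have hi2 : IntegrableOn (fun t : ℝ => t ^ n * Real.exp (-δ ^ 2 * t ^ (2 : ℝ))) (Ioi 0) :=
    integrableOn_rpow_mul_exp_neg_mul_rpow (by linarith) two_pos hδ2
  have hle : (Real.pi / δ ^ 2) ^ (1 / 2 : ℝ) * Q ≤ 2 * ∫ t in Ioi (0 : ℝ), g t := by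
    rw [← hQval]
    have h1 : ∫ t : ℝ, Real.exp (-δ ^ 2 * ‖t‖ ^ 2) * ‖ν t‖ ^ 2 =
        2 * ∫ t in Ioi (0 : ℝ), Real.exp (-δ ^ 2 * t ^ 2) * ‖ν t‖ ^ 2 := by
      rw [← integral_comp_abs (f := fun t => Real.exp (-δ ^ 2 * t ^ 2) * ‖ν t‖ ^ 2)]
      refine integral_congr_ae (Eventually.of_forall fun t => ?_)
      simp only [Real.norm_eq_abs]
      rw [habs t]
    rw [h1]
    refine mul_le_mul_of_nonneg_left ?_ two_pos.le
    refine setIntegral_mono_on ?_ ((hi1.add (hi2.const_mul _)).const_mul _) measurableSet_Ioi ?_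
    · simpa only [Real.norm_eq_abs, sq_abs] using hint.integrableOn (s := Ioi 0)
    · intro t ht
      have h2 := hb p δ hδ hp hF t ht
      rw [hg]
      simp only [Real.rpow_two]
      calc Real.exp (-δ ^ 2 * t ^ 2) * ‖ν t‖ ^ 2 ≤ Real.exp (-δ ^ 2 * t ^ 2) * _ :=
            mul_le_mul_of_nonneg_left h2 (Real.exp_pos _).le
        _ = _ := by ring
  have hgval : ∫ t in Ioi (0 : ℝ), g t = K * N ^ 4 * G * δ ^ (-(2 * ε)) := by
    have h2 : ∀ x : ℝ, (δ ^ 2) ^ x = δ ^ (2 * x) := fun x => by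
      rw [← Real.rpow_natCast, ← Real.rpow_mul hδ.le]; norm_num
    rw [hg, integral_const_mul, integral_add hi1 (hi2.const_mul _), integral_const_mul,
      integral_rpow_mul_exp_neg_mul_rpow two_pos (by linarith) hδ2,
      integral_rpow_mul_exp_neg_mul_rpow two_pos (by linarith) hδ2, h2, h2]
    have e1 : 2 * (-(-1 + 2 * ε + 1) / 2) = -(2 * ε) := by ring
    have e2 : (-1 + 2 * ε + 1) / 2 = ε := by ring
    have e3 : δ ^ (-(2 * ε)) = δ ^ (n + 1 - 2 * ε) * δ ^ (2 * (-(n + 1) / 2)) := by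
      rw [← Real.rpow_add hδ]; congr 1; ring
    rw [e1, e2, hG]
    linear_combination (K * N ^ 4 * (1 / 2) * Real.Gamma ((n + 1) / 2)) * (-e3)
  rw [hgval] at hle
  have hpi : δ⁻¹ ≤ (Real.pi / δ ^ 2) ^ (1 / 2 : ℝ) := by
    rw [← Real.sqrt_eq_rpow]
    refine Real.le_sqrt_of_sq_le ?_
    rw [inv_pow, div_eq_mul_inv]
    exact le_mul_of_one_le_left (by positivity) (by linarith [Real.pi_gt_three])
  have hmain : δ⁻¹ * Q ≤ 2 * (K * N ^ 4 * G * δ ^ (-(2 * ε))) :=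
    (mul_le_mul_of_nonneg_right hpi hQ0).trans hle
  rw [inv_mul_le_iff₀ hδ] at hmain
  refine hmain.trans (le_of_eq ?_)
  rw [sub_eq_add_neg, Real.rpow_add hδ, Real.rpow_one]
  ring

end DistanceEnergy

section Assouad

/-- The defining property of exponents admissible in the Assouad dimension. -/
def IsAssouadExponent {X : Type*} [PseudoMetricSpace X] (E : Set X) (α : ℝ) : Prop :=
  0 ≤ α ∧ ∃ C : ℝ, 0 < C ∧ ∀ x ∈ E, ∀ r R : ℝ, 0 < r → r < R →
    ∃ 𝒰 : Finset (Set X), (E ∩ closedBall x R ⊆ ⋃ U ∈ 𝒰, U) ∧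
      (∀ U ∈ 𝒰, ediam U ≤ ENNReal.ofReal r) ∧
      ((𝒰.card : ℝ) ≤ C * (R / r) ^ α)

theorem assouadDim_le_of_isAssouadExponent {X : Type*} [PseudoMetricSpace X] {E : Set X} {α : ℝ}
    (h : IsAssouadExponent E α) : assouadDim E ≤ α :=
  csInf_le ⟨0, fun _ hβ => hβ.1⟩ h

theorem exists_separated_of_not_isAssouadExponent {X : Type*} [PseudoMetricSpace X] {E : Set X}
    {s C : ℝ} (hs : 0 ≤ s) (hC : 0 < C) (h : ¬ IsAssouadExponent E s) :
    ∃ x : X, ∃ r R : ℝ, 0 < r ∧ r < R ∧ ∃ P : Finset X, (P : Set X) ⊆ E ∩ closedBall x R ∧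
      (∀ a ∈ P, ∀ b ∈ P, a ≠ b → r / 2 < dist a b) ∧ C * (R / r) ^ s < P.card := by
  classical
  by_contra! hcon
  refine h ⟨hs, C, hC, fun x _ r R hr hrR => ?_⟩
  set T : Set ℕ := {m | ∃ P : Finset X, (P : Set X) ⊆ E ∩ closedBall x R ∧
    (∀ a ∈ P, ∀ b ∈ P, a ≠ b → r / 2 < dist a b) ∧ P.card = m} with hT
  have hTne : T.Nonempty := ⟨0, ∅, by simp, by simp, by simp⟩
  have hTb : BddAbove T := by
    refine ⟨⌊C * (R / r) ^ s⌋₊, ?_⟩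
    rintro m ⟨P, hP1, hP2, rfl⟩
    exact Nat.le_floor (hcon x r R hr hrR P hP1 hP2)
  obtain ⟨P, hP1, hP2, hP3⟩ := Nat.sSup_mem hTne hTb
  refine ⟨P.image fun a => closedBall a (r / 2), ?_, ?_, ?_⟩
  · intro z hz
    simp only [Finset.mem_image, mem_iUnion, exists_prop, exists_exists_and_eq_and]
    by_contra! hz'
    have hsep : ∀ a ∈ P, r / 2 < dist z a := fun a ha => by
      simpa [mem_closedBall] using hz' a ha
    have hzP : z ∉ P := fun hzP => by
      have := hsep z hzP
      rw [dist_self] at this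
      linarith
    have hmem : (insert z P).card ∈ T := by
      refine ⟨insert z P, ?_, ?_, rfl⟩
      · rw [Finset.coe_insert]
        exact insert_subset hz hP1
      · intro a ha b hb hab
        rw [Finset.mem_insert] at ha hb
        rcases ha with rfl | ha <;> rcases hb with rfl | hb
        · exact absurd rfl hab
        · exact hsep b hb
        · rw [dist_comm]; exact hsep a ha
        · exact hP2 a ha b hb hab
    have := le_csSup hTb hmem
    rw [Finset.card_insert_of_notMem hzP, hP3] at this
    omega
  · intro U hU
    obtain ⟨a, -, rfl⟩ := Finset.mem_image.mp hU
    refine ediam_le fun z hz w hw => ?_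
    rw [edist_dist]
    refine ENNReal.ofReal_le_ofReal ?_
    have := dist_triangle_right z w a
    rw [mem_closedBall] at hz hw
    linarith
  · exact (Nat.cast_le.mpr Finset.card_image_le).trans (hcon x r R hr hrR P hP1 hP2)

theorem exists_card_bound_of_separated (V : Type*) [NormedAddCommGroup V] [NormedSpace ℝ V]
    [FiniteDimensional ℝ V] (L : ℝ) :
    ∃ K : ℕ, ∀ (y : V) (r : ℝ), 0 < r → ∀ P : Finset V, (P : Set V) ⊆ closedBall y (L * r) →
      (∀ a ∈ P, ∀ b ∈ P, a ≠ b → r / 2 < dist a b) → P.card ≤ K := by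
  classical
  have : ProperSpace V := FiniteDimensional.proper ℝ V
  obtain ⟨t, htf, ht⟩ := Metric.totallyBounded_iff.mp
    (isCompact_closedBall (0 : V) L).totallyBounded (1 / 4) (by norm_num)
  refine ⟨htf.toFinset.card, fun y r hr P hP hsep => ?_⟩
  have hex : ∀ a ∈ P, ∃ c ∈ t, dist (r⁻¹ • (a - y)) c < 1 / 4 := by
    intro a ha
    have h1 : r⁻¹ • (a - y) ∈ closedBall (0 : V) L := by
      have := hP ha
      rw [mem_closedBall, dist_eq_norm] at this
      rw [mem_closedBall_zero_iff, norm_smul, norm_inv, Real.norm_of_nonneg hr.le,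
        inv_mul_le_iff₀ hr, mul_comm]
      exact this
    simpa using ht h1
  choose! f hft hf using hex
  refine Finset.card_le_card_of_injOn f (fun a ha => by simpa using hft a ha) ?_
  intro a ha b hb hab
  by_contra hne
  have h1 := hsep a ha b hb hne
  have h2 := hf a ha
  have h3 := hf b hb
  rw [← hab] at h3
  have h4 := (dist_triangle_right (r⁻¹ • (a - y)) (r⁻¹ • (b - y)) (f a)).trans_lt (add_lt_add h2 h3)
  rw [dist_smul₀, dist_sub_right, norm_inv, Real.norm_of_nonneg hr.le, inv_mul_lt_iff₀ hr] at h4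
  linarith

/-- If `s` is not an Assouad exponent of `E`, then `E` contains finite sets satisfying a uniform
`s`-dimensional Frostman condition over arbitrarily long ranges of scales. -/
theorem exists_frostman_finset {V : Type*} [NormedAddCommGroup V] [NormedSpace ℝ V]
    [FiniteDimensional ℝ V] {E : Set V} {s : ℝ} (hs : 0 ≤ s) (h : ¬ IsAssouadExponent E s)
    (L : ℝ) :
    ∃ (y : V) (r R : ℝ) (A : Finset V), 0 < r ∧ r ≤ R ∧ L * r < R ∧ A.Nonempty ∧
      (A : Set V) ⊆ E ∩ closedBall y R ∧
      ∀ z, ∀ ρ, r ≤ ρ → ((A.filter fun a => dist z a ≤ ρ).card : ℝ) ≤ 2 * A.card * (ρ / R) ^ s := by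
  classical
  obtain ⟨K, hK⟩ := exists_card_bound_of_separated V L
  obtain ⟨x, r, R₀, hr, hrR, P, hPE, hPsep, hPcard⟩ :=
    exists_separated_of_not_isAssouadExponent (C := 2 * (K + 1)) hs (by positivity) h
  set f : V → ℝ → ℝ := fun z ρ => ((P.filter fun a => dist z a ≤ ρ).card : ℝ) / (ρ / r) ^ s with hf
  set H : Set ℝ := {q | ∃ z ρ, r ≤ ρ ∧ f z ρ = q} with hH
  have hone : ∀ ρ, r ≤ ρ → 1 ≤ (ρ / r) ^ s := fun ρ hρ =>
    Real.one_le_rpow ((one_le_div hr).mpr hρ) hs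
  have hHb : BddAbove H := by
    refine ⟨P.card, ?_⟩
    rintro q ⟨z, ρ, hρ, rfl⟩
    refine (div_le_self (Nat.cast_nonneg _) (hone ρ hρ)).trans ?_
    exact_mod_cast Finset.card_filter_le _ _
  have hbig : 2 * ((K : ℝ) + 1) < f x R₀ := by
    have hall : (P.filter fun a => dist x a ≤ R₀) = P :=
      Finset.filter_true_of_mem fun a ha => by
        rw [dist_comm]
        exact (hPE ha).2
    simp only [hf]
    rw [hall, lt_div_iff₀ (by linarith [hone R₀ hrR.le])]
    exact hPcard
  have hsup : 2 * ((K : ℝ) + 1) < sSup H := hbig.trans_le (le_csSup hHb ⟨x, R₀, hrR.le, rfl⟩)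
  have hsup0 : 0 < sSup H := lt_trans (by positivity) hsup
  obtain ⟨_, ⟨y, R, hR, rfl⟩, hyR⟩ :=
    exists_lt_of_lt_csSup (s := H) ⟨_, x, R₀, hrR.le, rfl⟩ (half_lt_self hsup0)
  have hRs : 0 < (R / r) ^ s := by linarith [hone R hR]
  have hR0 : 0 < R := hr.trans_le hR
  set A := P.filter fun a => dist y a ≤ R with hA
  have hAcard : sSup H / 2 * (R / r) ^ s < A.card := (lt_div_iff₀ hRs).mp hyR
  have hAE : (A : Set V) ⊆ E ∩ closedBall y R := fun a ha => by
    have ha' := Finset.mem_filter.mp (Finset.mem_coe.mp ha)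
    exact ⟨(hPE ha'.1).1, by rw [mem_closedBall, dist_comm]; exact ha'.2⟩
  refine ⟨y, r, R, A, hr, hR, ?_, ?_, hAE, ?_⟩
  · by_contra! hle
    have h1 : A.card ≤ K := hK y r hr A
      (hAE.trans (inter_subset_right.trans (closedBall_subset_closedBall hle)))
      fun a ha b hb => hPsep a (Finset.mem_filter.mp ha).1 b (Finset.mem_filter.mp hb).1
    have h2 : (A.card : ℝ) ≤ K := by exact_mod_cast h1
    nlinarith [hone R hR]
  · rw [← Finset.card_pos, ← Nat.cast_pos (α := ℝ)]
    exact lt_trans (by positivity) hAcard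
  · intro z ρ hρ
    have h1 : f z ρ ≤ sSup H := le_csSup hHb ⟨z, ρ, hρ, rfl⟩
    rw [hf, div_le_iff₀ (by linarith [hone ρ hρ])] at h1
    have h2 : ((A.filter fun a => dist z a ≤ ρ).card : ℝ) ≤
        (P.filter fun a => dist z a ≤ ρ).card := by
      exact_mod_cast Finset.card_le_card (Finset.filter_subset_filter _ (Finset.filter_subset _ _))
    have h3 : (ρ / r) ^ s = (R / r) ^ s * (ρ / R) ^ s := by
      rw [← Real.mul_rpow (by positivity) (div_nonneg (hr.le.trans hρ) hR0.le)]
      congr 1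
      field_simp
    have h4 : 0 ≤ (ρ / R) ^ s := Real.rpow_nonneg (div_nonneg (hr.le.trans hρ) hR0.le) _
    refine h2.trans (h1.trans ?_)
    rw [h3]
    nlinarith [mul_le_mul_of_nonneg_right hAcard.le h4]

/-- Cauchy–Schwarz: a map into a finite set has many coincidences. -/
theorem card_sq_le_card_mul_sum_of_mapsTo {α β : Type*} [Fintype α] [DecidableEq β] (t : Finset β)
    (f : α → β) (hf : ∀ x, f x ∈ t) (w : α → α → ℝ) (hw : ∀ x y, 0 ≤ w x y) {c : ℝ} (hc : 0 ≤ c)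
    (hfw : ∀ x y, f x = f y → c ≤ w x y) :
    c * (Fintype.card α : ℝ) ^ 2 ≤ t.card * ∑ x, ∑ y, w x y := by
  have h1 : ∑ u ∈ t, ∑ x, (if f x = u then (1 : ℝ) else 0) = Fintype.card α := by
    rw [Finset.sum_comm]
    simp [hf]
  have h2 := sq_sum_le_card_mul_sum_sq (s := t)
    (f := fun u => ∑ x, (if f x = u then (1 : ℝ) else 0))
  rw [h1] at h2
  have h3 : c * ∑ u ∈ t, (∑ x, (if f x = u then (1 : ℝ) else 0)) ^ 2 ≤ ∑ x, ∑ y, w x y := by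
    simp_rw [sq, Finset.sum_mul_sum]
    rw [Finset.sum_comm, Finset.mul_sum]
    refine Finset.sum_le_sum fun x _ => ?_
    rw [Finset.sum_comm, Finset.mul_sum]
    refine Finset.sum_le_sum fun y _ => ?_
    by_cases hxy : f x = f y
    · simp [hxy, hf, hfw x y hxy]
    · have : ∀ u ∈ t, (if f x = u then (1 : ℝ) else 0) * (if f y = u then 1 else 0) = 0 := by
        intro u _
        by_cases h : f x = u
        · rw [if_neg fun h' : f y = u => hxy (h.trans h'.symm), mul_zero]
        · rw [if_neg h, zero_mul]
      rw [Finset.sum_eq_zero this, mul_zero]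
      exact hw x y
  calc c * (Fintype.card α : ℝ) ^ 2 ≤ c * (t.card * _) := mul_le_mul_of_nonneg_left h2 hc
    _ = t.card * (c * _) := by ring
    _ ≤ _ := mul_le_mul_of_nonneg_left h3 (Nat.cast_nonneg _)

theorem isAssouadExponent_one_real (E : Set ℝ) : IsAssouadExponent E 1 := by
  classical
  refine ⟨zero_le_one, 3, by norm_num, fun x _ r R hr hrR => ?_⟩
  have hR : 0 < R := hr.trans hrR
  refine ⟨(Finset.range (⌊2 * R / r⌋₊ + 1)).image
    fun k : ℕ => Icc (x - R + k * r) (x - R + (k + 1) * r), ?_, ?_, ?_⟩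
  · rintro z ⟨-, hz⟩
    rw [mem_closedBall, Real.dist_eq, abs_le] at hz
    simp only [Finset.mem_image, mem_iUnion, exists_prop, exists_exists_and_eq_and]
    have h0 : 0 ≤ (z - (x - R)) / r := div_nonneg (by linarith) hr.le
    have h1 := Nat.floor_le h0
    have h2 := (Nat.lt_floor_add_one ((z - (x - R)) / r)).le
    rw [le_div_iff₀ hr] at h1
    rw [div_le_iff₀ hr] at h2
    refine ⟨⌊(z - (x - R)) / r⌋₊, ?_, by constructor <;> linarith⟩
    rw [Finset.mem_range, Nat.lt_succ_iff]
    refine Nat.floor_le_floor ?_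
    gcongr
    linarith
  · intro U hU
    obtain ⟨k, -, rfl⟩ := Finset.mem_image.mp hU
    refine ediam_le fun z hz w hw => ?_
    rw [edist_dist]
    refine ENNReal.ofReal_le_ofReal ?_
    rw [Real.dist_eq, abs_le]
    constructor <;> linarith [hz.1, hz.2, hw.1, hw.2]
  · have h1 : 1 ≤ R / r := (one_le_div hr).mpr hrR.le
    rw [Real.rpow_one]
    calc _ ≤ ((⌊2 * R / r⌋₊ + 1 : ℕ) : ℝ) := by
          exact_mod_cast Finset.card_image_le.trans (Finset.card_range _).le
      _ ≤ 2 * R / r + 1 := by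
          push_cast
          gcongr
          exact Nat.floor_le (by positivity)
      _ ≤ 3 * (R / r) := by rw [mul_div_assoc]; linarith

theorem one_le_of_isAssouadExponent_distSet {n : ℕ} {F : Set (Euc n)} (hne : F.Nonempty)
    (hdim : ((n : ℝ) + 1) / 2 ≤ assouadDim F) {α : ℝ} (hα : IsAssouadExponent (distSet F) α) :
    1 ≤ α := by
  classical
  by_contra! hα1
  obtain ⟨hα0, C, hC, hcov⟩ := hα
  set ε : ℝ := (1 - α) / 4 with hε
  have hε0 : 0 < ε := by linarith
  have hε1 : ε < 1 / 2 := by linarith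
  set s : ℝ := ((n : ℝ) + 1) / 2 - ε with hs
  have hs0 : 0 ≤ s := by linarith [n.cast_nonneg (α := ℝ)]
  have hnot : ¬ IsAssouadExponent F s := fun h => by
    linarith [assouadDim_le_of_isAssouadExponent h]
  obtain ⟨K, hK, hbound⟩ := sum_exp_normSq_sub_le (V := Euc n) 2 hε0 hε1
  have hη : 0 < 2 * ε := by linarith
  have hD : 0 < C * 2 ^ α * K := by positivity
  obtain ⟨L, hL⟩ := eventually_atTop.mp
    ((tendsto_rpow_neg_atTop hη).eventually_lt_const (div_pos (Real.exp_pos (-4)) hD))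
  obtain ⟨y, r, R, A, hr, hrR, hLR, hAne, hAF, hfrost⟩ := exists_frostman_finset hs0 hnot L
  have hR : 0 < R := hr.trans_le hrR
  set δ : ℝ := r / R with hδ
  have hδ0 : 0 < δ := div_pos hr hR
  set p : A → Euc n := fun a => R⁻¹ • ((a : Euc n) - y) with hp
  have hpsub : ∀ a b : A, ‖p a - p b‖ = dist (a : Euc n) b / R := by
    intro a b
    rw [hp, ← dist_eq_norm, dist_smul₀, dist_sub_right, norm_inv, Real.norm_of_nonneg hR.le,
      div_eq_inv_mul]
  have hp1 : ∀ a, ‖p a‖ ≤ 1 := by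
    intro a
    have := (hAF a.2).2
    rw [mem_closedBall, dist_eq_norm] at this
    rw [hp, norm_smul, norm_inv, Real.norm_of_nonneg hR.le, inv_mul_le_iff₀ hR, mul_one]
    exact this
  have hcard : Fintype.card A = A.card := Fintype.card_coe A
  have hN0 : (0 : ℝ) < Fintype.card A := by
    rw [hcard]
    exact_mod_cast hAne.card_pos
  have hE := hbound p δ hδ0 hp1 (by
    intro a ρ hρ
    have h1 := hfrost a (ρ * R) ((div_le_iff₀ hR).mp hρ)
    rw [mul_div_cancel_right₀ _ hR.ne'] at h1
    rw [finrank_euclideanSpace_fin, hcard]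
    refine le_trans (le_of_eq ?_) h1
    simp_rw [hpsub, div_le_iff₀ hR]
    rw [Nat.cast_inj, ← Finset.card_map (Function.Embedding.subtype _)]
    congr 1
    ext z
    simp
    tauto)
  have h0D : (0 : ℝ) ∈ distSet F := by
    obtain ⟨x, hx⟩ := hne
    exact ⟨x, hx, x, hx, by simp⟩
  obtain ⟨𝒰, h𝒰cov, h𝒰diam, h𝒰card⟩ := hcov 0 h0D r (2 * R) hr (by linarith)
  have hdist2 : ∀ x : A × A, dist (x.1 : Euc n) x.2 ≤ 2 * R := by
    intro x
    have h1 := (hAF x.1.2).2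
    have h2 := (hAF x.2.2).2
    rw [mem_closedBall] at h1 h2
    linarith [dist_triangle_right (x.1 : Euc n) x.2 y]
  have hex : ∀ x : A × A, ∃ U ∈ 𝒰, dist (x.1 : Euc n) x.2 ∈ U := by
    intro x
    have hmem : dist (x.1 : Euc n) x.2 ∈ distSet F ∩ closedBall 0 (2 * R) := by
      refine ⟨⟨_, (hAF x.1.2).1, _, (hAF x.2.2).1, rfl⟩, ?_⟩
      rw [mem_closedBall_zero_iff, Real.norm_of_nonneg dist_nonneg]
      exact hdist2 x
    simpa using h𝒰cov hmem
  choose f hf𝒰 hf using hex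
  have hCS := card_sq_le_card_mul_sum_of_mapsTo 𝒰 f hf𝒰
    (fun x y : A × A => Real.exp (-((‖p x.1 - p x.2‖ ^ 2 - ‖p y.1 - p y.2‖ ^ 2) ^ 2 /
        (4 * δ ^ 2)))) (fun x y => (Real.exp_pos _).le) (Real.exp_pos (-4)).le (by
    intro x z hxz
    refine Real.exp_le_exp.mpr (neg_le_neg ?_)
    have hdiff : |dist (x.1 : Euc n) x.2 - dist (z.1 : Euc n) z.2| ≤ r := by
      have h1 := (edist_le_ediam_of_mem (hf x) (hxz ▸ hf z)).trans (h𝒰diam _ (hf𝒰 x))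
      rwa [edist_dist, ENNReal.ofReal_le_ofReal_iff hr.le, Real.dist_eq] at h1
    have hle : ∀ x : A × A, ‖p x.1 - p x.2‖ ≤ 2 := fun x => by
      rw [hpsub, div_le_iff₀ hR]; exact hdist2 x
    have hd : |‖p x.1 - p x.2‖ - ‖p z.1 - p z.2‖| ≤ δ := by
      rw [hpsub, hpsub, ← sub_div, abs_div, abs_of_pos hR]
      exact div_le_div_of_nonneg_right hdiff hR.le
    have hsum : |‖p x.1 - p x.2‖ + ‖p z.1 - p z.2‖| ≤ 4 := by
      rw [abs_of_nonneg (by positivity)]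
      linarith [hle x, hle z]
    have hsq : |‖p x.1 - p x.2‖ ^ 2 - ‖p z.1 - p z.2‖ ^ 2| ≤ 4 * δ := by
      rw [sq_sub_sq, abs_mul]
      gcongr
    rw [div_le_iff₀ (by positivity), ← sq_abs]
    calc _ ≤ (4 * δ) ^ 2 := by gcongr
      _ = _ := by ring)
  have hmain : Real.exp (-4) ≤ (C * 2 ^ α * K) * δ ^ (2 * ε) := by
    have h1 : Real.exp (-4) * (Fintype.card A : ℝ) ^ 4 ≤
        (C * (2 * R / r) ^ α) * (K * (Fintype.card A : ℝ) ^ 4 * δ ^ (1 - 2 * ε)) := by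
      rw [Fintype.card_prod] at hCS
      calc _ = Real.exp (-4) * ((Fintype.card A * Fintype.card A : ℕ) : ℝ) ^ 2 := by
            push_cast; ring
        _ ≤ _ := hCS
        _ ≤ _ := mul_le_mul h𝒰card hE (Finset.sum_nonneg fun x _ => Finset.sum_nonneg
            fun y _ => (Real.exp_pos _).le) (by positivity)
    have h2 : (2 * R / r) ^ α = 2 ^ α * δ ^ (-α) := by
      rw [Real.rpow_neg hδ0.le, ← Real.inv_rpow hδ0.le, hδ, inv_div,
        ← Real.mul_rpow two_pos.le (by positivity), mul_div_assoc]
    have h3 : δ ^ (2 * ε) = δ ^ (-α) * δ ^ (1 - 2 * ε) := by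
      rw [← Real.rpow_add hδ0]
      congr 1
      rw [hε]
      ring
    have h4 : (0 : ℝ) < (Fintype.card A : ℝ) ^ 4 := by positivity
    refine le_of_mul_le_mul_right (h1.trans (le_of_eq ?_)) h4
    rw [h2, h3]
    ring
  have hlt := hL (R / r) ((lt_div_iff₀ hr).mpr hLR).le
  rw [Real.rpow_neg (by positivity), ← Real.inv_rpow (by positivity), inv_div, lt_div_iff₀ hD]
    at hlt
  linarith

end Assouad

/-- **Corollary 3.4**: if `F ⊆ ℝⁿ` is non-empty with `dim_A F ≥ (n+1)/2`, then
`dim_A D(F) = 1`. -/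
theorem assouad_distance_set_eq_one (n : ℕ) (hn : 2 ≤ n) (F : Set (Euc n))
    (hne : F.Nonempty) (hdim : ((n : ℝ) + 1) / 2 ≤ assouadDim F) :
    assouadDim (distSet F) = 1 := by
  refine le_antisymm (assouadDim_le_of_isAssouadExponent (isAssouadExponent_one_real _)) ?_
  exact le_csInf ⟨1, isAssouadExponent_one_real _⟩ fun α hα =>
    one_le_of_isAssouadExponent_distSet hne hdim hα

end
end
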